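/- arXiv:0810.1042 — 2 statements merged into one kernel-verified Lean document; each statement's English description precedes it below -/
import Mathlib

section
/- Let u : ℝⁿ → ℂ and V : ℝⁿ → ℂ satisfy Δu + Vu = 0 on all of ℝⁿ, with |V(x)| ≤ 1 for all x, |u(x)| ≤ C₀ for all x, and u(0) = 1. For R > 0 define M(R) = inf over x₀ with |x₀| = R of sup over x ∈ B(x₀,1) of |u(x)|. Then there exists a constant C > 0 (depending only on n and C₀) such that for all sufficiently large R, M(R) ≥ C · exp(−C · R^{4/3} · log R). -/
open MeasureTheory Metric Set Filter
open scoped ENNReal NNReal Topology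

/-- The Laplacian of a complex-valued function on `ℝⁿ`, as the sum of the
second partial derivatives in the coordinate directions. -/
noncomputable def lapl {n : ℕ} (f : EuclideanSpace ℝ (Fin n) → ℂ)
    (x : EuclideanSpace ℝ (Fin n)) : ℂ :=
  ∑ i, fderiv ℝ (fun y => fderiv ℝ f y (EuclideanSpace.single i 1)) x (EuclideanSpace.single i 1)

/-!
The proof is the Bourgain–Kenig argument. After translating so that `u` is large at a point at
distance `R` from the origin and must be shown not to be too small on `B(0, 1)`, cut `u` off to an
annulus `1/8 ≤ |x| ≤ 8R` and apply a Carleman estimate with weight `|x| ^ (-2t) * exp (2tb|x|²)`,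
`b ~ R⁻²`. It gains the factor `b * t ^ 3 / |x|²`, so that a potential bounded by `1` is absorbed as
soon as `t ~ R ^ (4/3)`. What is left are the two commutator terms. The outer one is beaten by the
decay of the weight between `R + 1` and `4R`, so the inner one, which Caccioppoli's inequality
controls by the size of `u` on `B(0, 1)`, dominates the mass of `u` near the point where `|u| = 1`;
that mass is bounded below by a mean value inequality. Since the weights differ by a factor
`R ^ (O(t))`, the bound is `exp (-C * R ^ (4/3) * log R)`.

The Carleman estimate is proved by integrating `⟪Δf, m₁(|x|²) (x · ∇f) + m₂(|x|²) f⟫` by parts in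
the manner of Rellich and Pohozaev and completing a square.
-/

open InnerProductSpace Laplacian

section Green

variable {F : Type*} [NormedAddCommGroup F] [InnerProductSpace ℝ F]

theorem hasCompactSupport_inner {α : Type*} [TopologicalSpace α] {f g : α → F}
    (h : HasCompactSupport f ∨ HasCompactSupport g) :
    HasCompactSupport fun x => inner ℝ (f x) (g x) :=
  h.elim (fun hf => hf.mono fun x => mt fun hx : f x = 0 => by simp [hx])
    fun hg => hg.mono fun x => mt fun hx : g x = 0 => by simp [hx]

variable {E : Type*} [NormedAddCommGroup E] [InnerProductSpace ℝ E] {f g X : E → F} {x : E}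

theorem contDiff_fderiv_apply_const (hf : ContDiff ℝ 2 f) (v : E) :
    ContDiff ℝ 1 fun y => fderiv ℝ f y v :=
  (hf.fderiv_right (m := 1) (by norm_num)).clm_apply contDiff_const

variable [FiniteDimensional ℝ E]

/-- The carré du champ `∑ i, ⟪∂ᵢ f, ∂ᵢ g⟫` of two vector-valued functions, that is, the
Hilbert–Schmidt inner product of their derivatives; `gradInner u u` is the density `|∇u|²` of the
Dirichlet energy. -/
noncomputable def gradInner (f g : E → F) (x : E) : ℝ :=
  ∑ i, inner ℝ (fderiv ℝ f x (stdOrthonormalBasis ℝ E i)) (fderiv ℝ g x (stdOrthonormalBasis ℝ E i))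

theorem laplacian_eq_sum_fderiv_fderiv {ι : Type*} [Fintype ι] (e : OrthonormalBasis ι ℝ E)
    (hf : ContDiffAt ℝ 2 f x) :
    Δ f x = ∑ i, fderiv ℝ (fun y => fderiv ℝ f y (e i)) x (e i) := by
  have hf' : DifferentiableAt ℝ (fderiv ℝ f) x :=
    (hf.fderiv_right (m := 1) (by norm_num)).differentiableAt one_ne_zero
  simp [laplacian_eq_iteratedFDeriv_orthonormalBasis f e, iteratedFDeriv_two_apply,
    fderiv_clm_apply hf']

theorem continuous_laplacian (hf : ContDiff ℝ 2 f) : Continuous (Δ f) := by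
  have h : Δ f = fun x => ∑ i, fderiv ℝ (fun y => fderiv ℝ f y (stdOrthonormalBasis ℝ E i)) x
      (stdOrthonormalBasis ℝ E i) :=
    funext fun x => laplacian_eq_sum_fderiv_fderiv _ hf.contDiffAt
  rw [h]
  exact continuous_finsetSum _ fun i _ =>
    ((contDiff_fderiv_apply_const hf _).continuous_fderiv one_ne_zero).clm_apply continuous_const

theorem continuous_gradInner (hf : ContDiff ℝ 1 f) (hg : ContDiff ℝ 1 g) :
    Continuous (gradInner f g) :=
  continuous_finsetSum _ fun _ _ =>
    ((hf.continuous_fderiv one_ne_zero).clm_apply continuous_const).inner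
      ((hg.continuous_fderiv one_ne_zero).clm_apply continuous_const)

theorem gradInner_self_nonneg (f : E → F) (x : E) : 0 ≤ gradInner f f x :=
  Finset.sum_nonneg fun _ _ => real_inner_self_nonneg

theorem norm_fderiv_sq_le_gradInner (f : E → F) (x : E) :
    ‖fderiv ℝ f x‖ ^ 2 ≤ gradInner f f x := by
  have h : ‖fderiv ℝ f x‖ ≤ √(gradInner f f x) := by
    refine ContinuousLinearMap.opNorm_le_bound _ (Real.sqrt_nonneg _) fun v => ?_
    set e := stdOrthonormalBasis ℝ E
    calc ‖fderiv ℝ f x v‖ = ‖∑ i, inner ℝ (e i) v • fderiv ℝ f x (e i)‖ := by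
          conv_lhs => rw [← e.sum_repr' v, map_sum]
          simp only [map_smul]
      _ ≤ ∑ i, ‖fderiv ℝ f x (e i)‖ * ‖inner ℝ (e i) v‖ :=
          norm_sum_le_of_le _ fun i _ => by rw [norm_smul, mul_comm]
      _ ≤ √(∑ i, ‖fderiv ℝ f x (e i)‖ ^ 2) * √(∑ i, ‖inner ℝ (e i) v‖ ^ 2) :=
          Real.sum_mul_le_sqrt_mul_sqrt _ _ _
      _ = √(gradInner f f x) * ‖v‖ := by
          rw [e.sum_sq_norm_inner_right, Real.sqrt_sq (norm_nonneg v)]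
          simp only [gradInner, real_inner_self_eq_norm_sq, e]
  exact (Real.le_sqrt (norm_nonneg _) (gradInner_self_nonneg f x)).mp h

/-- The `H¹` energy density `|∇u|² + |u|²`. -/
noncomputable def energyDensity (u : E → F) (x : E) : ℝ :=
  gradInner u u x + ‖u x‖ ^ 2

theorem energyDensity_nonneg (u : E → F) (x : E) : 0 ≤ energyDensity u x :=
  add_nonneg (gradInner_self_nonneg u x) (sq_nonneg _)

theorem continuous_energyDensity (hf : ContDiff ℝ 1 f) : Continuous (energyDensity f) :=
  (continuous_gradInner hf hf).add (hf.continuous.norm.pow 2)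

theorem hasCompactSupport_gradInner (h : HasCompactSupport f ∨ HasCompactSupport g) :
    HasCompactSupport (gradInner f g) :=
  h.elim (fun hf => (hf.fderiv ℝ).mono fun x => mt fun hx => by simp [gradInner, hx])
    fun hg => (hg.fderiv ℝ).mono fun x => mt fun hx => by simp [gradInner, hx]

theorem laplacian_of_notMem_tsupport (hx : x ∉ tsupport f) : Δ f x = 0 :=
  (laplacian_congr_nhds (notMem_tsupport_iff_eventuallyEq.mp hx)).eq_of_nhds.trans
    (congrFun laplacian_const x)

theorem hasCompactSupport_laplacian (hf : HasCompactSupport f) : HasCompactSupport (Δ f) :=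
  hf.mono' fun _ hx => by_contra fun h => hx (laplacian_of_notMem_tsupport h)

variable [MeasurableSpace E] [BorelSpace E]

theorem integrable_gradInner (hX : ContDiff ℝ 1 X) (hf : ContDiff ℝ 1 f)
    (h : HasCompactSupport X ∨ HasCompactSupport f) : Integrable (gradInner X f) :=
  (continuous_gradInner hX hf).integrable_of_hasCompactSupport (hasCompactSupport_gradInner h)

theorem integrable_inner_laplacian (hX : Continuous X) (hf : ContDiff ℝ 2 f)
    (h : HasCompactSupport X ∨ HasCompactSupport f) :
    Integrable fun x => inner ℝ (X x) (Δ f x) :=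
  (hX.inner (continuous_laplacian hf)).integrable_of_hasCompactSupport
    (hasCompactSupport_inner (h.imp_right hasCompactSupport_laplacian))

theorem integral_inner_laplacian (hX : ContDiff ℝ 1 X) (hf : ContDiff ℝ 2 f)
    (h : HasCompactSupport X ∨ HasCompactSupport f) :
    ∫ x, inner ℝ (X x) (Δ f x) = -∫ x, gradInner X f x := by
  set e := stdOrthonormalBasis ℝ E
  have hf₁ (i) : ContDiff ℝ 1 fun y => fderiv ℝ f y (e i) := contDiff_fderiv_apply_const hf _
  have hf₂ (i) : Continuous fun x => fderiv ℝ (fun y => fderiv ℝ f y (e i)) x (e i) :=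
    ((hf₁ i).continuous_fderiv one_ne_zero).clm_apply continuous_const
  have hX₁ (i) : Continuous fun x => fderiv ℝ X x (e i) :=
    (hX.continuous_fderiv one_ne_zero).clm_apply continuous_const
  have hc₁ (i) : HasCompactSupport X ∨ HasCompactSupport fun y => fderiv ℝ f y (e i) :=
    h.imp_right fun hf => hf.fderiv_apply ℝ _
  have hint₁ (i) :
      Integrable fun x => inner ℝ (X x) (fderiv ℝ (fun y => fderiv ℝ f y (e i)) x (e i)) :=
    (hX.continuous.inner (hf₂ i)).integrable_of_hasCompactSupport
      (hasCompactSupport_inner ((hc₁ i).imp_right fun hf => hf.fderiv_apply ℝ _))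
  have hint₂ (i) : Integrable fun x => inner ℝ (fderiv ℝ X x (e i)) (fderiv ℝ f x (e i)) :=
    ((hX₁ i).inner (hf₁ i).continuous).integrable_of_hasCompactSupport
      (hasCompactSupport_inner (h.imp (fun h => h.fderiv_apply ℝ _) fun h => h.fderiv_apply ℝ _))
  have hparts (i) : ∫ x, inner ℝ (X x) (fderiv ℝ (fun y => fderiv ℝ f y (e i)) x (e i)) =
      -∫ x, inner ℝ (fderiv ℝ X x (e i)) (fderiv ℝ f x (e i)) :=
    integral_bilinear_fderiv_right_eq_neg_left_of_integrable (B := innerSL ℝ) (hint₂ i) (hint₁ i)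
      ((hX.continuous.inner (hf₁ i).continuous).integrable_of_hasCompactSupport
        (hasCompactSupport_inner (hc₁ i)))
      (fun x _ => hX.differentiable one_ne_zero x)
      (fun x _ => (hf₁ i).differentiable one_ne_zero x)
  simp_rw [laplacian_eq_sum_fderiv_fderiv e hf.contDiffAt, inner_sum, gradInner]
  rw [integral_finsetSum _ fun i _ => hint₁ i, integral_finsetSum _ fun i _ => hint₂ i,
    ← Finset.sum_neg_distrib]
  exact Finset.sum_congr rfl fun i _ => hparts i

theorem integral_inner_laplacian_comm (hX : ContDiff ℝ 2 X) (hf : ContDiff ℝ 2 f)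
    (h : HasCompactSupport X ∨ HasCompactSupport f) :
    ∫ x, inner ℝ (X x) (Δ f x) = ∫ x, inner ℝ (f x) (Δ X x) := by
  rw [integral_inner_laplacian (hX.of_le one_le_two) hf h,
    integral_inner_laplacian (hf.of_le one_le_two) hX h.symm]
  simp only [gradInner, real_inner_comm]

end Green

section LaplacianCalculus

variable {E : Type*} [NormedAddCommGroup E] [InnerProductSpace ℝ E]
  {F : Type*} [NormedAddCommGroup F] [InnerProductSpace ℝ F]
  {u : E → F} {x : E}

theorem fderiv_norm_sq_comp_apply (hu : DifferentiableAt ℝ u x) (v : E) :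
    fderiv ℝ (fun y => ‖u y‖ ^ 2) x v = 2 * inner ℝ (u x) (fderiv ℝ u x v) := by
  rw [hu.hasFDerivAt.norm_sq.fderiv]
  simp

variable [FiniteDimensional ℝ E]

theorem laplacian_norm_sq_comp (hu : ContDiff ℝ 2 u) (x : E) :
    Δ (fun y => ‖u y‖ ^ 2) x = 2 * inner ℝ (u x) (Δ u x) + 2 * gradInner u u x := by
  set e := stdOrthonormalBasis ℝ E
  have hd : Differentiable ℝ u := hu.differentiable two_ne_zero
  have hd' (v : E) : Differentiable ℝ fun y => fderiv ℝ u y v :=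
    (contDiff_fderiv_apply_const hu v).differentiable one_ne_zero
  have h₂ (v : E) : fderiv ℝ (fun y => fderiv ℝ (fun y => ‖u y‖ ^ 2) y v) x v =
      2 * (inner ℝ (u x) (fderiv ℝ (fun y => fderiv ℝ u y v) x v) +
        inner ℝ (fderiv ℝ u x v) (fderiv ℝ u x v)) := by
    simp_rw [fun y => fderiv_norm_sq_comp_apply (hd y) v]
    rw [fderiv_const_mul ((hd x).inner ℝ (hd' v x)), ← fderiv_inner_apply ℝ (hd x) (hd' v x)]
    rfl
  rw [laplacian_eq_sum_fderiv_fderiv e (hu.norm_sq ℝ).contDiffAt,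
    laplacian_eq_sum_fderiv_fderiv e hu.contDiffAt, gradInner]
  simp only [h₂, inner_sum, ← Finset.mul_sum, Finset.sum_add_distrib, mul_add, e]

theorem laplacian_smul_comp {χ : E → ℝ} (hχ : ContDiff ℝ 2 χ) (hu : ContDiff ℝ 2 u) (x : E) :
    Δ (fun y => χ y • u y) x =
      χ x • Δ u x + (2 : ℝ) • fderiv ℝ u x (gradient χ x) + Δ χ x • u x := by
  set e := stdOrthonormalBasis ℝ E
  have hd : Differentiable ℝ u := hu.differentiable two_ne_zero
  have hd' (v : E) : Differentiable ℝ fun y => fderiv ℝ u y v :=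
    (contDiff_fderiv_apply_const hu v).differentiable one_ne_zero
  have hχd : Differentiable ℝ χ := hχ.differentiable two_ne_zero
  have hχd' (v : E) : Differentiable ℝ fun y => fderiv ℝ χ y v :=
    (contDiff_fderiv_apply_const hχ v).differentiable one_ne_zero
  have h₁ (v y : E) : fderiv ℝ (fun y => χ y • u y) y v =
      χ y • fderiv ℝ u y v + fderiv ℝ χ y v • u y := by
    simp [fderiv_fun_smul (hχd y) (hd y)]
  have h₂ (v : E) : fderiv ℝ (fun y => fderiv ℝ (fun y => χ y • u y) y v) x v =
      χ x • fderiv ℝ (fun y => fderiv ℝ u y v) x v + (2 : ℝ) • fderiv ℝ χ x v • fderiv ℝ u x v +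
        fderiv ℝ (fun y => fderiv ℝ χ y v) x v • u x := by
    simp_rw [h₁]
    rw [fderiv_fun_add ((hχd x).fun_smul (hd' v x)) ((hχd' v x).fun_smul (hd x)),
      fderiv_fun_smul (hχd x) (hd' v x), fderiv_fun_smul (hχd' v x) (hd x)]
    simp only [add_apply, smul_apply, ContinuousLinearMap.smulRight_apply, two_smul]
    abel
  have hgrad : ∑ i, fderiv ℝ χ x (e i) • fderiv ℝ u x (e i) = fderiv ℝ u x (gradient χ x) := by
    conv_rhs => rw [← e.sum_repr' (gradient χ x), map_sum]
    refine Finset.sum_congr rfl fun i _ => ?_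
    rw [map_smul, real_inner_comm, inner_gradient_left]
  have hχu : ContDiff ℝ 2 fun y => χ y • u y := hχ.smul hu
  rw [laplacian_eq_sum_fderiv_fderiv e hχu.contDiffAt,
    laplacian_eq_sum_fderiv_fderiv e hu.contDiffAt, laplacian_eq_sum_fderiv_fderiv e hχ.contDiffAt,
    ← hgrad]
  simp only [h₂, Finset.sum_add_distrib, Finset.smul_sum, Finset.sum_smul]

theorem laplacian_comp_add_smul (hu : ContDiff ℝ 2 u) (a : E) (r : ℝ) (x : E) :
    Δ (fun y => u (a + r • y)) x = r ^ 2 • Δ u (a + r • x) := by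
  set e := stdOrthonormalBasis ℝ E
  have haff (x : E) : HasFDerivAt (fun y => a + r • y) (r • ContinuousLinearMap.id ℝ E) x :=
    ((hasFDerivAt_id x).const_smul r).const_add a
  have hcomp {g : E → F} (hg : Differentiable ℝ g) (x v : E) :
      fderiv ℝ (fun y => g (a + r • y)) x v = r • fderiv ℝ g (a + r • x) v := by
    have h : HasFDerivAt (fun y => g (a + r • y)) _ x := (hg _).hasFDerivAt.comp x (haff x)
    simp [h.fderiv]
  have hd' (v : E) : Differentiable ℝ fun y => fderiv ℝ u y v :=
    (contDiff_fderiv_apply_const hu v).differentiable one_ne_zero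
  have h₂ (v : E) : fderiv ℝ (fun y => fderiv ℝ (fun y => u (a + r • y)) y v) x v =
      r ^ 2 • fderiv ℝ (fun y => fderiv ℝ u y v) (a + r • x) v := by
    simp_rw [hcomp (hu.differentiable two_ne_zero)]
    have hda : DifferentiableAt ℝ (fun y => fderiv ℝ u (a + r • y) v) x :=
      (hd' v _).comp x (haff x).differentiableAt
    rw [fderiv_fun_const_smul hda, smul_apply, hcomp (hd' v), smul_smul, sq]
  have hc : ContDiff ℝ 2 fun y => u (a + r • y) := hu.comp (by fun_prop)
  rw [laplacian_eq_sum_fderiv_fderiv e hc.contDiffAt,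
    laplacian_eq_sum_fderiv_fderiv e hu.contDiffAt, Finset.smul_sum]
  exact Finset.sum_congr rfl fun i _ => h₂ (e i)

theorem gradInner_norm_sq_right (φ : E → ℝ) (x : E) :
    gradInner φ (fun y => ‖y‖ ^ 2) x = 2 * fderiv ℝ φ x x := by
  set e := stdOrthonormalBasis ℝ E
  have h (i) : inner ℝ (fderiv ℝ φ x (e i)) (fderiv ℝ (fun y : E => ‖y‖ ^ 2) x (e i)) =
      2 * (inner ℝ (e i) x • fderiv ℝ φ x (e i)) := by
    rw [fderiv_norm_sq_comp_apply differentiableAt_fun_id, fderiv_fun_id, real_inner_comm x]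
    simp only [ContinuousLinearMap.coe_id', id_eq, RCLike.inner_apply, conj_trivial, smul_eq_mul]
    ring
  conv_rhs => rw [← e.sum_repr' x, map_sum, Finset.mul_sum, e.sum_repr' x]
  simp only [gradInner, h, map_smul, e]

theorem laplacian_norm_sq (x : E) :
    Δ (fun y : E => ‖y‖ ^ 2) x = 2 * Module.finrank ℝ E := by
  have hid : Δ (fun y : E => y) x = 0 := by
    rw [laplacian_eq_sum_fderiv_fderiv (stdOrthonormalBasis ℝ E) contDiff_fun_id.contDiffAt]
    simp
  rw [laplacian_norm_sq_comp contDiff_fun_id]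
  simp [hid, gradInner]

variable [MeasurableSpace E] [BorelSpace E]

theorem integral_fderiv_apply_self {φ : E → ℝ} (hφ : ContDiff ℝ 1 φ) (hc : HasCompactSupport φ) :
    ∫ x, fderiv ℝ φ x x = -(Module.finrank ℝ E * ∫ x, φ x) := by
  have h := integral_inner_laplacian hφ (contDiff_fun_id.norm_sq ℝ) (.inl hc)
  simp only [laplacian_norm_sq, gradInner_norm_sq_right, integral_const_mul, RCLike.inner_apply,
    conj_trivial] at h
  linarith

end LaplacianCalculus

section RadialMultiplier

theorem eventuallyEq_zero_of_support_subset {α β : Type*} [TopologicalSpace α] [Zero β] {G : α → β}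
    {K : Set α} {x : α} (hK : IsClosed K) (hG : Function.support G ⊆ K) (hx : x ∉ K) :
    G =ᶠ[𝓝 x] 0 := by
  filter_upwards [hK.isOpen_compl.mem_nhds hx] with y hy
  exact Function.notMem_support.mp fun h => hy (hG h)

variable {E : Type*} [NormedAddCommGroup E] [InnerProductSpace ℝ E]
  {F : Type*} [NormedAddCommGroup F] [InnerProductSpace ℝ F]
  {m : ℝ → ℝ} {G : E → F} {K : Set E}

theorem contDiff_radial_smul {n : WithTop ℕ∞} (hm : ContDiffOn ℝ n m (Ioi 0))
    (hG : ContDiff ℝ n G) (hK : IsClosed K) (h0 : (0 : E) ∉ K) (hGK : Function.support G ⊆ K) :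
    ContDiff ℝ n fun x => m (‖x‖ ^ 2) • G x := by
  refine contDiff_iff_contDiffAt.mpr fun x => ?_
  by_cases hx : x ∈ K
  · have hpos : 0 < ‖x‖ ^ 2 := by
      have := norm_pos_iff.mpr (ne_of_mem_of_not_mem hx h0)
      positivity
    have hmx : ContDiffAt ℝ n m (‖x‖ ^ 2) := hm.contDiffAt (Ioi_mem_nhds hpos)
    exact (hmx.comp x (contDiff_norm_sq ℝ).contDiffAt).smul hG.contDiffAt
  · refine contDiffAt_const (c := 0) |>.congr_of_eventuallyEq ?_
    filter_upwards [eventuallyEq_zero_of_support_subset hK hGK hx] with y hy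
    simp [hy]

theorem fderiv_radial_smul_apply (hm : DifferentiableOn ℝ m (Ioi 0)) (hG : Differentiable ℝ G)
    (hK : IsClosed K) (h0 : (0 : E) ∉ K) (hGK : Function.support G ⊆ K) (x v : E) :
    fderiv ℝ (fun x => m (‖x‖ ^ 2) • G x) x v =
      m (‖x‖ ^ 2) • fderiv ℝ G x v + (2 * deriv m (‖x‖ ^ 2) * inner ℝ x v) • G x := by
  by_cases hx : x ∈ K
  · have hpos : 0 < ‖x‖ ^ 2 := by
      have := norm_pos_iff.mpr (ne_of_mem_of_not_mem hx h0)
      positivity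
    have hmx : HasDerivAt m (deriv m (‖x‖ ^ 2)) (‖x‖ ^ 2) :=
      (hm.differentiableAt (Ioi_mem_nhds hpos)).hasDerivAt
    have hmn : HasFDerivAt (fun x : E => m (‖x‖ ^ 2)) _ x :=
      hmx.comp_hasFDerivAt x (hasFDerivAt_id x).norm_sq
    rw [fderiv_fun_smul hmn.differentiableAt (hG x), hmn.fderiv]
    simp [mul_comm, mul_left_comm]
  · have hGx := eventuallyEq_zero_of_support_subset hK hGK hx
    have hmG : (fun x => m (‖x‖ ^ 2) • G x) =ᶠ[𝓝 x] 0 := by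
      filter_upwards [hGx] with y hy
      simp [hy]
    simp [hmG.fderiv_eq, hGx.fderiv_eq, hGx.eq_of_nhds]

variable [FiniteDimensional ℝ E] [MeasurableSpace E] [BorelSpace E]

theorem integrable_radial_smul (hm : ContinuousOn m (Ioi 0)) (hG : Continuous G)
    (hK : IsCompact K) (h0 : (0 : E) ∉ K) (hGK : Function.support G ⊆ K) :
    Integrable fun x => m (‖x‖ ^ 2) • G x := by
  have hcont : Continuous fun x => m (‖x‖ ^ 2) • G x :=
    (contDiff_radial_smul (contDiffOn_zero.mpr hm) (contDiff_zero.mpr hG) hK.isClosed h0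
      hGK).continuous
  refine hcont.integrable_of_hasCompactSupport (HasCompactSupport.intro hK fun x hx => ?_)
  rw [Function.notMem_support.mp fun h => hx (hGK h), smul_zero]

end RadialMultiplier

section RadialDivergence

theorem support_fderiv_apply_self_subset {E F : Type*} [NormedAddCommGroup E] [NormedSpace ℝ E]
    [NormedAddCommGroup F] [NormedSpace ℝ F] (f : E → F) :
    (Function.support fun x => fderiv ℝ f x x) ⊆ tsupport f :=
  fun x hx => support_fderiv_subset ℝ fun h : fderiv ℝ f x = 0 => hx (by simp [h])

variable {E : Type*} [NormedAddCommGroup E] [InnerProductSpace ℝ E] [FiniteDimensional ℝ E]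
  {m : ℝ → ℝ} {G : E → ℝ} {K : Set E}

/-- The divergence of the vector field `m(|x|²) G(x) x`, expanded by the product rule. -/
noncomputable def radialDivergence (m : ℝ → ℝ) (G : E → ℝ) (x : E) : ℝ :=
  m (‖x‖ ^ 2) * fderiv ℝ G x x +
    (2 * ‖x‖ ^ 2 * deriv m (‖x‖ ^ 2) + Module.finrank ℝ E * m (‖x‖ ^ 2)) * G x

variable [MeasurableSpace E] [BorelSpace E]

theorem integrable_radialDivergence (hm : ContDiffOn ℝ 1 m (Ioi 0)) (hG : ContDiff ℝ 1 G)
    (hK : IsCompact K) (h0 : (0 : E) ∉ K) (hGK : Function.support G ⊆ K) :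
    Integrable (radialDivergence m G) := by
  have hcm' : ContinuousOn (deriv m) (Ioi 0) := hm.continuousOn_deriv_of_isOpen isOpen_Ioi le_rfl
  have hcm : ContinuousOn m (Ioi 0) := hm.continuousOn
  have hsupp : (Function.support fun x => fderiv ℝ G x x) ⊆ K :=
    (support_fderiv_apply_self_subset G).trans (closure_minimal hGK hK.isClosed)
  have h₁ := integrable_radial_smul hcm
    ((hG.continuous_fderiv one_ne_zero).clm_apply continuous_id) hK h0 hsupp
  have h₂ := integrable_radial_smul (m := fun s => 2 * s * deriv m s + Module.finrank ℝ E * m s)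
    (by fun_prop) hG.continuous hK h0 hGK
  exact h₁.add h₂

theorem integral_radialDivergence (hm : ContDiffOn ℝ 1 m (Ioi 0)) (hG : ContDiff ℝ 1 G)
    (hK : IsCompact K) (h0 : (0 : E) ∉ K) (hGK : Function.support G ⊆ K) :
    ∫ x, radialDivergence m G x = 0 := by
  have hmG : ContDiff ℝ 1 fun x => m (‖x‖ ^ 2) • G x :=
    contDiff_radial_smul hm hG hK.isClosed h0 hGK
  have hc : HasCompactSupport fun x => m (‖x‖ ^ 2) • G x :=
    HasCompactSupport.intro hK fun x hx => by
      rw [Function.notMem_support.mp fun h => hx (hGK h), smul_zero]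
  have hint : Integrable fun x => m (‖x‖ ^ 2) • G x :=
    hmG.continuous.integrable_of_hasCompactSupport hc
  have hdiv (x : E) : fderiv ℝ (fun x => m (‖x‖ ^ 2) • G x) x x =
      radialDivergence m G x - Module.finrank ℝ E * (m (‖x‖ ^ 2) • G x) := by
    rw [fderiv_radial_smul_apply (hm.differentiableOn one_ne_zero)
      (hG.differentiable one_ne_zero) hK.isClosed h0 hGK, real_inner_self_eq_norm_sq,
      radialDivergence]
    simp only [smul_eq_mul]
    ring
  have heuler := integral_fderiv_apply_self hmG hc
  simp_rw [hdiv] at heuler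
  rw [integral_sub (integrable_radialDivergence hm hG hK h0 hGK) (hint.const_mul _),
    integral_const_mul] at heuler
  linarith

end RadialDivergence

section RellichPohozaev

variable {E : Type*} [NormedAddCommGroup E] [InnerProductSpace ℝ E]
  {F : Type*} [NormedAddCommGroup F] [InnerProductSpace ℝ F]
  {f : E → F} {m₁ m₂ m₃ : ℝ → ℝ} {x : E}

theorem contDiff_fderiv_apply_self (hf : ContDiff ℝ 2 f) : ContDiff ℝ 1 fun x => fderiv ℝ f x x :=
  (hf.fderiv_right (m := 1) (by norm_num)).clm_apply contDiff_id

theorem fderiv_fderiv_apply_self_apply (hf : ContDiff ℝ 2 f) (x v : E) :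
    fderiv ℝ (fun y => fderiv ℝ f y y) x v = fderiv ℝ (fderiv ℝ f) x v x + fderiv ℝ f x v := by
  have hd : DifferentiableAt ℝ (fderiv ℝ f) x :=
    (hf.fderiv_right (m := 1) (by norm_num)).differentiable one_ne_zero x
  rw [fderiv_clm_apply hd differentiableAt_fun_id]
  simp [add_comm]

/-- The multiplier `m₁(|x|²) (x · ∇f) + m₂(|x|²) f` of Rellich–Pohozaev type. -/
noncomputable def radialMultiplier (m₁ m₂ : ℝ → ℝ) (f : E → F) (x : E) : F :=
  m₁ (‖x‖ ^ 2) • fderiv ℝ f x x + m₂ (‖x‖ ^ 2) • f x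

theorem contDiff_radialMultiplier (hf : ContDiff ℝ 2 f) (h0 : (0 : E) ∉ tsupport f)
    (hm₁ : ContDiffOn ℝ 1 m₁ (Ioi 0)) (hm₂ : ContDiffOn ℝ 1 m₂ (Ioi 0)) :
    ContDiff ℝ 1 (radialMultiplier m₁ m₂ f) :=
  (contDiff_radial_smul hm₁ (contDiff_fderiv_apply_self hf) (isClosed_tsupport f) h0
    (support_fderiv_apply_self_subset f)).add
    (contDiff_radial_smul hm₂ (hf.of_le one_le_two) (isClosed_tsupport f) h0 (subset_tsupport f))

variable [FiniteDimensional ℝ E]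

theorem support_gradInner_self_subset (f : E → F) :
    Function.support (gradInner f f) ⊆ tsupport f :=
  fun x hx => support_fderiv_subset ℝ fun h : fderiv ℝ f x = 0 => hx (by simp [gradInner, h])

theorem contDiff_gradInner_self (hf : ContDiff ℝ 2 f) : ContDiff ℝ 1 (gradInner f f) :=
  ContDiff.sum fun _ _ =>
    (contDiff_fderiv_apply_const hf _).inner ℝ (contDiff_fderiv_apply_const hf _)

/-- The radial second-derivative term `∑ i, ⟪∂ᵢ f, D²f (eᵢ, x)⟫`; the multipliers `x · ∇f` and
`|∇f|²` both produce it, and it cancels between them. -/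
noncomputable def radialHessianTerm (f : E → F) (x : E) : ℝ :=
  ∑ i, inner ℝ (fderiv ℝ (fderiv ℝ f) x (stdOrthonormalBasis ℝ E i) x)
    (fderiv ℝ f x (stdOrthonormalBasis ℝ E i))

theorem fderiv_gradInner_self_apply_self (hf : ContDiff ℝ 2 f) (x : E) :
    fderiv ℝ (gradInner f f) x x = 2 * radialHessianTerm f x := by
  have hd : DifferentiableAt ℝ (fderiv ℝ f) x :=
    (hf.fderiv_right (m := 1) (by norm_num)).differentiable one_ne_zero x
  have hda (v : E) : DifferentiableAt ℝ (fun y => fderiv ℝ f y v) x :=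
    (contDiff_fderiv_apply_const hf v).differentiable one_ne_zero x
  have hsymm (v : E) : fderiv ℝ (fderiv ℝ f) x x v = fderiv ℝ (fderiv ℝ f) x v x :=
    hf.contDiffAt.isSymmSndFDerivAt (by simp) x v
  have hterm (v : E) : fderiv ℝ (fun y => inner ℝ (fderiv ℝ f y v) (fderiv ℝ f y v)) x x =
      2 * inner ℝ (fderiv ℝ (fderiv ℝ f) x v x) (fderiv ℝ f x v) := by
    rw [fderiv_inner_apply ℝ (hda v) (hda v), real_inner_comm, ← two_mul,
      fderiv_clm_apply hd (differentiableAt_const v), ← hsymm v]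
    simp
  have hsum : fderiv ℝ (gradInner f f) x =
      ∑ i, fderiv ℝ (fun y => inner ℝ (fderiv ℝ f y (stdOrthonormalBasis ℝ E i))
        (fderiv ℝ f y (stdOrthonormalBasis ℝ E i))) x :=
    fderiv_fun_sum fun i _ => (hda _).inner ℝ (hda _)
  rw [hsum, sum_apply]
  simp only [hterm, radialHessianTerm, Finset.mul_sum]

theorem sum_inner_mul_inner_apply (L : E →L[ℝ] F) (x : E) (w : F) :
    ∑ i, inner ℝ x (stdOrthonormalBasis ℝ E i) * inner ℝ w (L (stdOrthonormalBasis ℝ E i)) =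
      inner ℝ w (L x) := by
  conv_rhs => rw [← (stdOrthonormalBasis ℝ E).sum_repr' x, map_sum, inner_sum]
  simp only [map_smul, inner_smul_right, real_inner_comm]

theorem gradInner_radialMultiplier (hf : ContDiff ℝ 2 f) (h0 : (0 : E) ∉ tsupport f)
    (hm₁ : ContDiffOn ℝ 1 m₁ (Ioi 0)) (hm₂ : ContDiffOn ℝ 1 m₂ (Ioi 0)) (x : E) :
    gradInner (radialMultiplier m₁ m₂ f) f x =
      m₁ (‖x‖ ^ 2) * (radialHessianTerm f x + gradInner f f x) +
        2 * deriv m₁ (‖x‖ ^ 2) * ‖fderiv ℝ f x x‖ ^ 2 + m₂ (‖x‖ ^ 2) * gradInner f f x +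
        2 * deriv m₂ (‖x‖ ^ 2) * inner ℝ (f x) (fderiv ℝ f x x) := by
  have hh := contDiff_fderiv_apply_self hf
  have hD (v : E) : fderiv ℝ (radialMultiplier m₁ m₂ f) x v =
      m₁ (‖x‖ ^ 2) • (fderiv ℝ (fderiv ℝ f) x v x + fderiv ℝ f x v) +
        (2 * deriv m₁ (‖x‖ ^ 2) * inner ℝ x v) • fderiv ℝ f x x +
        (m₂ (‖x‖ ^ 2) • fderiv ℝ f x v + (2 * deriv m₂ (‖x‖ ^ 2) * inner ℝ x v) • f x) := by
    have hX₁ := contDiff_radial_smul hm₁ hh (isClosed_tsupport f) h0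
      (support_fderiv_apply_self_subset f)
    have hX₂ := contDiff_radial_smul hm₂ (hf.of_le one_le_two) (isClosed_tsupport f) h0
      (subset_tsupport f)
    unfold radialMultiplier
    rw [fderiv_fun_add (hX₁.differentiable one_ne_zero x) (hX₂.differentiable one_ne_zero x),
      add_apply,
      fderiv_radial_smul_apply (hm₁.differentiableOn one_ne_zero) (hh.differentiable one_ne_zero)
        (isClosed_tsupport f) h0 (support_fderiv_apply_self_subset f),
      fderiv_radial_smul_apply (hm₂.differentiableOn one_ne_zero) (hf.differentiable two_ne_zero)
        (isClosed_tsupport f) h0 (subset_tsupport f), fderiv_fderiv_apply_self_apply hf]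
  rw [← real_inner_self_eq_norm_sq (fderiv ℝ f x x),
    ← sum_inner_mul_inner_apply (fderiv ℝ f x) x (fderiv ℝ f x x),
    ← sum_inner_mul_inner_apply (fderiv ℝ f x) x (f x)]
  simp only [gradInner, radialHessianTerm, hD, Finset.mul_sum, ← Finset.sum_add_distrib]
  refine Finset.sum_congr rfl fun i _ => ?_
  simp only [inner_add_left, real_inner_smul_left]
  ring

/-- The integrand of the Rellich–Pohozaev identity obtained by pairing `Δ f` with
`radialMultiplier m₁ m₂ f` and adding the divergence of `m₃(|x|²) |f|² x`. -/
noncomputable def rellichPohozaev (m₁ m₂ m₃ : ℝ → ℝ) (f : E → F) (x : E) : ℝ :=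
  inner ℝ (radialMultiplier m₁ m₂ f x) (Δ f x) +
  (m₁ (‖x‖ ^ 2) + m₂ (‖x‖ ^ 2) - ‖x‖ ^ 2 * deriv m₁ (‖x‖ ^ 2) -
    Module.finrank ℝ E / 2 * m₁ (‖x‖ ^ 2)) * gradInner f f x +
  2 * deriv m₁ (‖x‖ ^ 2) * ‖fderiv ℝ f x x‖ ^ 2 +
  (2 * deriv m₂ (‖x‖ ^ 2) + 2 * m₃ (‖x‖ ^ 2)) * inner ℝ (f x) (fderiv ℝ f x x) +
  (2 * ‖x‖ ^ 2 * deriv m₃ (‖x‖ ^ 2) + Module.finrank ℝ E * m₃ (‖x‖ ^ 2)) * ‖f x‖ ^ 2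

theorem rellichPohozaev_of_notMem_tsupport (hx : x ∉ tsupport f) :
    rellichPohozaev m₁ m₂ m₃ f x = 0 := by
  simp [rellichPohozaev, gradInner, laplacian_of_notMem_tsupport hx,
    image_eq_zero_of_notMem_tsupport hx, fderiv_of_notMem_tsupport ℝ hx]

theorem rellichPohozaev_eq (hf : ContDiff ℝ 2 f) (h0 : (0 : E) ∉ tsupport f)
    (hm₁ : ContDiffOn ℝ 1 m₁ (Ioi 0)) (hm₂ : ContDiffOn ℝ 1 m₂ (Ioi 0)) (x : E) :
    rellichPohozaev m₁ m₂ m₃ f x =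
      inner ℝ (radialMultiplier m₁ m₂ f x) (Δ f x) + gradInner (radialMultiplier m₁ m₂ f) f x +
        radialDivergence m₃ (fun y => ‖f y‖ ^ 2) x -
        2⁻¹ * radialDivergence m₁ (gradInner f f) x := by
  rw [gradInner_radialMultiplier hf h0 hm₁ hm₂, radialDivergence, radialDivergence,
    fderiv_norm_sq_comp_apply (hf.differentiable two_ne_zero x),
    fderiv_gradInner_self_apply_self hf, rellichPohozaev]
  ring

variable [MeasurableSpace E] [BorelSpace E]

theorem integrable_and_integral_rellichPohozaev (hf : ContDiff ℝ 2 f) (hc : HasCompactSupport f)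
    (h0 : (0 : E) ∉ tsupport f) (hm₁ : ContDiffOn ℝ 1 m₁ (Ioi 0))
    (hm₂ : ContDiffOn ℝ 1 m₂ (Ioi 0)) (hm₃ : ContDiffOn ℝ 1 m₃ (Ioi 0)) :
    Integrable (rellichPohozaev m₁ m₂ m₃ f) ∧ ∫ x, rellichPohozaev m₁ m₂ m₃ f x = 0 := by
  have hX := contDiff_radialMultiplier hf h0 hm₁ hm₂
  have hf₁ : ContDiff ℝ 1 f := hf.of_le one_le_two
  have hsupp : (Function.support fun x => ‖f x‖ ^ 2) ⊆ tsupport f := fun x hx =>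
    subset_tsupport f fun h : f x = 0 => hx (by simp [h])
  have hΔ := integrable_inner_laplacian hX.continuous hf (.inr hc)
  have hΓ := integrable_gradInner hX hf₁ (.inr hc)
  have hi₁ := integrable_radialDivergence hm₁ (contDiff_gradInner_self hf) hc h0
    (support_gradInner_self_subset f)
  have hi₃ := integrable_radialDivergence hm₃ (hf₁.norm_sq ℝ) hc h0 hsupp
  have heq : rellichPohozaev m₁ m₂ m₃ f =
      (fun x => inner ℝ (radialMultiplier m₁ m₂ f x) (Δ f x)) +
        gradInner (radialMultiplier m₁ m₂ f) f + radialDivergence m₃ (fun y => ‖f y‖ ^ 2) -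
        fun x => 2⁻¹ * radialDivergence m₁ (gradInner f f) x :=
    funext fun x => rellichPohozaev_eq hf h0 hm₁ hm₂ x
  rw [heq]
  refine ⟨((hΔ.add hΓ).add hi₃).sub (hi₁.const_mul _), ?_⟩
  rw [integral_sub' ((hΔ.add hΓ).add hi₃) (hi₁.const_mul _), integral_add' (hΔ.add hΓ) hi₃,
    integral_add' hΔ hΓ, integral_inner_laplacian hX hf (.inr hc), integral_const_mul,
    integral_radialDivergence hm₁ (contDiff_gradInner_self hf) hc h0
      (support_gradInner_self_subset f),
    integral_radialDivergence hm₃ (hf₁.norm_sq ℝ) hc h0 hsupp]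
  ring

end RellichPohozaev

section Carleman

/-- The Carleman weight `s ^ (-t) * exp (2 * t * b * s)`, as a function of `s = |x|²`. The singular
factor makes it decrease near the origin and the convex correction `2tbs` of the exponent makes the
commutator with `Δ` strictly positive. -/
noncomputable def carlemanWeight (b t s : ℝ) : ℝ :=
  Real.exp (-t * Real.log s + 2 * t * b * s)

/-- The coefficient of `x · ∇f` in the multiplier of the Carleman estimate. -/
noncomputable def carlemanCoeff₁ (b t s : ℝ) : ℝ :=
  -8 * t * (2 * b * s - 1) * carlemanWeight b t s

/-- The coefficient of `f` in the multiplier of the Carleman estimate; it is the one for which the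
`|∇f|²` terms cancel when `κ = d / 2 - 1`. -/
noncomputable def carlemanCoeff₂ (b t κ s : ℝ) : ℝ :=
  -4 * t * (2 * (2 * b * s - 1) * (t * (2 * b * s - 1) + κ) + 4 * b * s) * carlemanWeight b t s

/-- The coefficient of the divergence correction in the Carleman estimate, chosen to complete the
square in `x · ∇f` and `f`. -/
noncomputable def carlemanCoeff₃ (b t κ s : ℝ) : ℝ :=
  -4 * t * ((2 * t * (2 * b * s - 1) ^ 2 + 4 * b * s) * (t * (2 * b * s - 1) + κ) - 4 * b * s) *
    carlemanWeight b t s / s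

variable {b t κ s s₁ s₂ : ℝ}

theorem carlemanWeight_pos (b t s : ℝ) : 0 < carlemanWeight b t s := Real.exp_pos _

theorem carlemanWeight_le_carlemanWeight (ht : 0 ≤ t) (h₁ : 0 < s₁) (h : s₁ ≤ s₂)
    (h₂ : 2 * b * s₂ ≤ 1) : carlemanWeight b t s₂ ≤ carlemanWeight b t s₁ := by
  have hs₂ : 0 < s₂ := h₁.trans_le h
  have hlog : 1 - s₁ / s₂ ≤ Real.log s₂ - Real.log s₁ := by
    rw [← Real.log_div hs₂.ne' h₁.ne', ← inv_div s₂ s₁]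
    exact Real.one_sub_inv_le_log_of_pos (by positivity)
  have hlin : 2 * b * (s₂ - s₁) ≤ 1 - s₁ / s₂ := by
    rw [one_sub_div hs₂.ne', le_div_iff₀ hs₂]
    nlinarith [mul_nonneg (sub_nonneg.2 h₂) (sub_nonneg.2 h)]
  refine Real.exp_le_exp.2 ?_
  linarith [mul_le_mul_of_nonneg_left (hlin.trans hlog) ht]

theorem contDiffOn_carlemanWeight {n : WithTop ℕ∞} (b t : ℝ) :
    ContDiffOn ℝ n (carlemanWeight b t) (Ioi 0) := by
  have hlog : ContDiffOn ℝ n Real.log (Ioi 0) :=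
    Real.contDiffOn_log.mono fun s (hs : 0 < s) => hs.ne'
  unfold carlemanWeight
  fun_prop

theorem contDiffOn_carlemanCoeff₁ (b t : ℝ) : ContDiffOn ℝ 1 (carlemanCoeff₁ b t) (Ioi 0) := by
  have hW := contDiffOn_carlemanWeight (n := 1) b t
  unfold carlemanCoeff₁
  fun_prop

theorem contDiffOn_carlemanCoeff₂ (b t κ : ℝ) :
    ContDiffOn ℝ 1 (carlemanCoeff₂ b t κ) (Ioi 0) := by
  have hW := contDiffOn_carlemanWeight (n := 1) b t
  unfold carlemanCoeff₂
  fun_prop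

theorem contDiffOn_carlemanCoeff₃ (b t κ : ℝ) :
    ContDiffOn ℝ 1 (carlemanCoeff₃ b t κ) (Ioi 0) := by
  have hW := contDiffOn_carlemanWeight (n := 1) b t
  unfold carlemanCoeff₃
  exact ContDiffOn.div (by fun_prop) contDiffOn_id fun s (hs : 0 < s) => hs.ne'

theorem hasDerivAt_carlemanWeight (hs : s ≠ 0) :
    HasDerivAt (carlemanWeight b t) (t * (2 * b * s - 1) / s * carlemanWeight b t s) s := by
  have h : HasDerivAt (fun s => -t * Real.log s + 2 * t * b * s) (-t * s⁻¹ + 2 * t * b * 1) s :=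
    ((Real.hasDerivAt_log hs).const_mul _).add ((hasDerivAt_id s).const_mul _)
  refine h.exp.congr_deriv ?_
  rw [carlemanWeight]
  field_simp
  ring

theorem hasDerivAt_two_mul_mul_sub_one (b s : ℝ) :
    HasDerivAt (fun s => 2 * b * s - 1) (2 * b) s := by
  simpa using ((hasDerivAt_id s).const_mul (2 * b)).sub_const 1

theorem hasDerivAt_carlemanCoeff₁ (hs : s ≠ 0) :
    HasDerivAt (carlemanCoeff₁ b t)
      (-8 * t * (2 * b + t * (2 * b * s - 1) ^ 2 / s) * carlemanWeight b t s) s := by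
  have hp := hasDerivAt_two_mul_mul_sub_one b s
  refine ((hp.const_mul (-8 * t)).mul (hasDerivAt_carlemanWeight hs)).congr_deriv ?_
  ring

theorem hasDerivAt_carlemanCoeff₂ (hs : s ≠ 0) :
    HasDerivAt (carlemanCoeff₂ b t κ)
      (-4 * t * (8 * t * b * (2 * b * s - 1) + 4 * b * κ + 4 * b +
        (2 * (2 * b * s - 1) * (t * (2 * b * s - 1) + κ) + 4 * b * s) *
          (t * (2 * b * s - 1) / s)) * carlemanWeight b t s) s := by
  have hp := hasDerivAt_two_mul_mul_sub_one b s
  have hq : HasDerivAt (fun s => 4 * b * s) (4 * b) s := by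
    simpa using (hasDerivAt_id s).const_mul (4 * b)
  refine (((((hp.const_mul 2).mul ((hp.const_mul t).add_const κ)).add hq).const_mul
    (-4 * t)).mul (hasDerivAt_carlemanWeight hs)).congr_deriv ?_
  simp only [Pi.add_apply, Pi.mul_apply]
  field_simp
  ring

theorem hasDerivAt_carlemanCoeff₃ (hs : s ≠ 0) :
    HasDerivAt (carlemanCoeff₃ b t κ)
      (-4 * t * ((8 * t * b * (2 * b * s - 1) + 4 * b) * (t * (2 * b * s - 1) + κ) +
        (2 * t * (2 * b * s - 1) ^ 2 + 4 * b * s) * (2 * t * b) - 4 * b +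
        ((2 * t * (2 * b * s - 1) ^ 2 + 4 * b * s) * (t * (2 * b * s - 1) + κ) - 4 * b * s) *
          ((t * (2 * b * s - 1) - 1) / s)) * carlemanWeight b t s / s) s := by
  have hp := hasDerivAt_two_mul_mul_sub_one b s
  have hq : HasDerivAt (fun s => 4 * b * s) (4 * b) s := by
    simpa using (hasDerivAt_id s).const_mul (4 * b)
  refine ((((((((hp.pow 2).const_mul (2 * t)).add hq).mul ((hp.const_mul t).add_const κ)).sub
    hq).const_mul (-4 * t)).mul (hasDerivAt_carlemanWeight hs)).div (hasDerivAt_id s)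
    hs).congr_deriv ?_
  simp only [id_eq, Pi.add_apply, Pi.sub_apply, Pi.mul_apply, Pi.pow_apply]
  field_simp
  ring

variable {E : Type*} [NormedAddCommGroup E] [InnerProductSpace ℝ E] [FiniteDimensional ℝ E]
  {F : Type*} [NormedAddCommGroup F] [InnerProductSpace ℝ F]
  {f : E → F} {x : E}

/-- `rellichPohozaev` with the multipliers of the Carleman estimate. -/
noncomputable def carlemanDensity (b t : ℝ) (f : E → F) (x : E) : ℝ :=
  rellichPohozaev (carlemanCoeff₁ b t) (carlemanCoeff₂ b t (Module.finrank ℝ E / 2 - 1))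
    (carlemanCoeff₃ b t (Module.finrank ℝ E / 2 - 1)) f x

theorem carlemanWeight_mul_sub_carlemanDensity (b t : ℝ) (f : E → F) (hx : x ≠ 0)
    {s p q g c : ℝ} (hs : s = ‖x‖ ^ 2) (hp : p = 2 * b * s - 1) (hq : q = 4 * b * s)
    (hg : g = t * p + (Module.finrank ℝ E / 2 - 1)) (hc : c = 2 * p * g + q) :
    carlemanWeight b t s * s * ‖Δ f x‖ ^ 2 - carlemanDensity b t f x =
      carlemanWeight b t s / s *
        (‖s • Δ f x + (2 * t) • ((2 * p) • fderiv ℝ f x x + c • f x)‖ ^ 2 +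
          8 * t * q * ‖fderiv ℝ f x x + g • f x‖ ^ 2 +
          8 * t * q * (t ^ 2 * p ^ 2 - 1) * ‖f x‖ ^ 2) := by
  have hs0 : s ≠ 0 := by rw [hs]; exact pow_ne_zero 2 (norm_ne_zero_iff.mpr hx)
  simp only [← real_inner_self_eq_norm_sq (_ : F), inner_add_left, inner_add_right,
    real_inner_smul_left, real_inner_smul_right, carlemanDensity, rellichPohozaev,
    radialMultiplier, ← hs, (hasDerivAt_carlemanCoeff₁ hs0).deriv,
    (hasDerivAt_carlemanCoeff₂ hs0).deriv, (hasDerivAt_carlemanCoeff₃ hs0).deriv,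
    carlemanCoeff₁, carlemanCoeff₂, carlemanCoeff₃, real_inner_comm (f x) (fderiv ℝ f x x),
    real_inner_comm (Δ f x) (fderiv ℝ f x x), real_inner_comm (Δ f x) (f x)]
  generalize carlemanWeight b t s = W
  subst hc hg hq hp
  field_simp
  ring

theorem carlemanDensity_add_le (hb : 0 ≤ b) (ht : 3 ≤ t) (f : E → F) (hx : x ≠ 0)
    (hbx : b * ‖x‖ ^ 2 ≤ 1 / 4) :
    carlemanDensity b t f x + 4 * b * t ^ 3 * (carlemanWeight b t (‖x‖ ^ 2) * ‖f x‖ ^ 2) ≤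
      carlemanWeight b t (‖x‖ ^ 2) * (‖x‖ ^ 2 * ‖Δ f x‖ ^ 2) := by
  have hid := carlemanWeight_mul_sub_carlemanDensity b t f hx rfl rfl rfl rfl rfl
  set s := ‖x‖ ^ 2
  have hs : 0 < s := pow_pos (norm_pos_iff.mpr hx) 2
  have hp : 1 / 4 ≤ (2 * b * s - 1) ^ 2 := by nlinarith
  have hcoeff : t ^ 3 * (4 * b * s) ≤
      8 * t * (4 * b * s) * (t ^ 2 * (2 * b * s - 1) ^ 2 - 1) := by
    have hpt : 0 ≤ 8 * (t ^ 2 * (2 * b * s - 1) ^ 2 - 1) - t ^ 2 := by nlinarith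
    have hq : 0 ≤ t * (4 * b * s) := by positivity
    nlinarith [mul_nonneg hq hpt]
  have hW := carlemanWeight_pos b t s
  suffices h : 4 * b * t ^ 3 * (carlemanWeight b t s * ‖f x‖ ^ 2) ≤
      carlemanWeight b t s * s * ‖Δ f x‖ ^ 2 - carlemanDensity b t f x by linarith
  rw [hid]
  calc 4 * b * t ^ 3 * (carlemanWeight b t s * ‖f x‖ ^ 2)
      = carlemanWeight b t s / s * (t ^ 3 * (4 * b * s) * ‖f x‖ ^ 2) := by field_simp
    _ ≤ carlemanWeight b t s / s *
        (8 * t * (4 * b * s) * (t ^ 2 * (2 * b * s - 1) ^ 2 - 1) * ‖f x‖ ^ 2) := by gcongr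
    _ ≤ _ := by gcongr; exact le_add_of_nonneg_left (by positivity)

variable [MeasurableSpace E] [BorelSpace E]

theorem integrable_carlemanWeight_mul {G : E → ℝ} {K : Set E} (b t : ℝ) (hG : Continuous G)
    (hK : IsCompact K) (h0 : (0 : E) ∉ K) (hGK : ∀ x, x ∉ K → G x = 0) :
    Integrable fun x => carlemanWeight b t (‖x‖ ^ 2) * G x :=
  integrable_radial_smul (contDiffOn_carlemanWeight (n := 0) b t).continuousOn hG hK h0
    fun x hx => by_contra fun h => hx (hGK x h)

theorem carleman_inequality (hf : ContDiff ℝ 2 f) (hc : HasCompactSupport f)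
    (h0 : (0 : E) ∉ tsupport f) (hb : 0 ≤ b) (ht : 3 ≤ t)
    (hbf : ∀ x ∈ tsupport f, b * ‖x‖ ^ 2 ≤ 1 / 4) :
    4 * b * t ^ 3 * ∫ x, carlemanWeight b t (‖x‖ ^ 2) * ‖f x‖ ^ 2 ≤
      ∫ x, carlemanWeight b t (‖x‖ ^ 2) * (‖x‖ ^ 2 * ‖Δ f x‖ ^ 2) := by
  obtain ⟨hint, hzero⟩ := integrable_and_integral_rellichPohozaev hf hc h0
    (contDiffOn_carlemanCoeff₁ b t) (contDiffOn_carlemanCoeff₂ b t (Module.finrank ℝ E / 2 - 1))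
    (contDiffOn_carlemanCoeff₃ b t (Module.finrank ℝ E / 2 - 1))
  have hf₀ (x) (hx : x ∉ tsupport f) : ‖f x‖ ^ 2 = 0 := by
    simp [image_eq_zero_of_notMem_tsupport hx]
  have hΔ₀ (x) (hx : x ∉ tsupport f) : ‖x‖ ^ 2 * ‖Δ f x‖ ^ 2 = 0 := by
    simp [laplacian_of_notMem_tsupport hx]
  have hi₁ := integrable_carlemanWeight_mul b t (G := fun x => ‖f x‖ ^ 2)
    (hf.continuous.norm.pow 2) hc h0 hf₀
  have hi₂ := integrable_carlemanWeight_mul b t (G := fun x => ‖x‖ ^ 2 * ‖Δ f x‖ ^ 2)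
    ((continuous_norm.pow 2).mul ((continuous_laplacian hf).norm.pow 2)) hc h0 hΔ₀
  have hle := integral_mono (hint.add (hi₁.const_mul (4 * b * t ^ 3))) hi₂ fun x => ?_
  · simpa only [integral_add' hint (hi₁.const_mul _), hzero, zero_add, integral_const_mul] using hle
  by_cases hx : x ∈ tsupport f
  · exact carlemanDensity_add_le hb ht f (ne_of_mem_of_not_mem hx h0) (hbf x hx)
  · simp [rellichPohozaev_of_notMem_tsupport hx, hf₀ x hx, hΔ₀ x hx]

end Carleman

section Cutoff

variable {E : Type*} [NormedAddCommGroup E] [InnerProductSpace ℝ E] {ρ : ℝ} {x : E}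

/-- A smooth cutoff equal to `1` on the ball of radius `ρ` and supported in the ball of radius
`2 * ρ` around the origin. -/
noncomputable def radialCutoff (ρ : ℝ) (x : E) : ℝ :=
  (⟨1, 2, one_pos, one_lt_two⟩ : ContDiffBump (0 : E)) (ρ⁻¹ • x)

theorem contDiff_radialCutoff {n : ℕ∞} (ρ : ℝ) : ContDiff ℝ n (radialCutoff (E := E) ρ) :=
  ContDiffBump.contDiff _ |>.comp (contDiff_const_smul ρ⁻¹)

theorem radialCutoff_nonneg (ρ : ℝ) (x : E) : 0 ≤ radialCutoff ρ x := ContDiffBump.nonneg _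

theorem radialCutoff_le_one (ρ : ℝ) (x : E) : radialCutoff ρ x ≤ 1 := ContDiffBump.le_one _

theorem radialCutoff_eq_one (hρ : 0 < ρ) (hx : ‖x‖ ≤ ρ) : radialCutoff ρ x = 1 := by
  refine ContDiffBump.one_of_mem_closedBall _ (mem_closedBall_zero_iff.mpr ?_)
  rwa [norm_smul, norm_inv, Real.norm_of_nonneg hρ.le, inv_mul_le_iff₀ hρ, mul_one]

theorem radialCutoff_eq_zero (hρ : 0 < ρ) (hx : 2 * ρ ≤ ‖x‖) : radialCutoff ρ x = 0 := by
  refine ContDiffBump.zero_of_le_dist _ ?_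
  rwa [dist_zero_right, norm_smul, norm_inv, Real.norm_of_nonneg hρ.le, le_inv_mul_iff₀ hρ,
    mul_comm]

theorem tsupport_radialCutoff_subset (hρ : 0 < ρ) :
    tsupport (radialCutoff (E := E) ρ) ⊆ closedBall 0 (2 * ρ) := by
  refine closure_minimal (fun x hx => mem_closedBall_zero_iff.mpr ?_) isClosed_closedBall
  exact le_of_not_ge fun h => hx (radialCutoff_eq_zero hρ h)

variable [FiniteDimensional ℝ E]

theorem hasCompactSupport_radialCutoff (hρ : 0 < ρ) :
    HasCompactSupport (radialCutoff (E := E) ρ) :=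
  (isCompact_closedBall 0 (2 * ρ)).of_isClosed_subset (isClosed_tsupport _)
    (tsupport_radialCutoff_subset hρ)

theorem gradient_eq_zero_of_notMem_tsupport {χ : E → ℝ} (hx : x ∉ tsupport χ) :
    gradient χ x = 0 := by
  rw [gradient, fderiv_of_notMem_tsupport ℝ hx, map_zero]

theorem continuous_gradient {χ : E → ℝ} (hχ : ContDiff ℝ 1 χ) : Continuous (gradient χ) :=
  (toDual ℝ E).symm.continuous.comp (hχ.continuous_fderiv one_ne_zero)

theorem exists_norm_gradient_radialCutoff_le (E : Type*) [NormedAddCommGroup E]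
    [InnerProductSpace ℝ E] [FiniteDimensional ℝ E] :
    ∃ K, ∀ ρ > 0, ∀ x : E, ‖gradient (radialCutoff ρ) x‖ ≤ K / ρ := by
  obtain ⟨K, hK⟩ := (continuous_gradient
    (contDiff_radialCutoff (E := E) 1)).bounded_above_of_compact_support
    ((hasCompactSupport_radialCutoff one_pos).mono' fun x hx => by_contra fun h =>
      hx (gradient_eq_zero_of_notMem_tsupport h))
  refine ⟨K, fun ρ hρ x => ?_⟩
  have hscale : radialCutoff (E := E) ρ = fun x => radialCutoff 1 (ρ⁻¹ • x) := by
    ext x; simp [radialCutoff]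
  have hgrad : gradient (radialCutoff ρ) x = ρ⁻¹ • gradient (radialCutoff 1) (ρ⁻¹ • x) := by
    rw [gradient, hscale, fderiv_comp_smul, map_smul, gradient]
  rw [hgrad, norm_smul, norm_inv, Real.norm_of_nonneg hρ.le, div_eq_inv_mul]
  gcongr
  exact hK _

theorem exists_abs_laplacian_radialCutoff_le (E : Type*) [NormedAddCommGroup E]
    [InnerProductSpace ℝ E] [FiniteDimensional ℝ E] :
    ∃ K, ∀ ρ > 0, ∀ x : E, |Δ (radialCutoff (E := E) ρ) x| ≤ K / ρ ^ 2 := by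
  obtain ⟨K, hK⟩ := (continuous_laplacian
    (contDiff_radialCutoff (E := E) 1)).bounded_above_of_compact_support
    (hasCompactSupport_laplacian (hasCompactSupport_radialCutoff one_pos))
  refine ⟨K, fun ρ hρ x => ?_⟩
  have hscale : radialCutoff (E := E) ρ = fun x => radialCutoff 1 (0 + ρ⁻¹ • x) := by
    ext x; simp [radialCutoff]
  rw [hscale, laplacian_comp_add_smul (contDiff_radialCutoff 1), smul_eq_mul, abs_mul, inv_pow,
    abs_of_nonneg (by positivity), div_eq_inv_mul]
  gcongr
  exact hK _

end Cutoff

section AnnularCutoff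

variable {E : Type*} [NormedAddCommGroup E] [InnerProductSpace ℝ E] {R : ℝ} {x : E}

/-- A smooth cutoff to the annulus `1 / 8 ≤ ‖x‖ ≤ 8 * R`, equal to `1` for
`1 / 4 ≤ ‖x‖ ≤ 4 * R`. -/
noncomputable def annularCutoff (R : ℝ) (x : E) : ℝ :=
  radialCutoff (4 * R) x - radialCutoff (1 / 8) x

theorem contDiff_annularCutoff {n : ℕ∞} (R : ℝ) : ContDiff ℝ n (annularCutoff (E := E) R) :=
  (contDiff_radialCutoff _).sub (contDiff_radialCutoff _)

theorem annularCutoff_eq_one (hR : 0 < R) (h₁ : 1 / 4 ≤ ‖x‖) (h₂ : ‖x‖ ≤ 4 * R) :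
    annularCutoff R x = 1 := by
  rw [annularCutoff, radialCutoff_eq_one (by positivity) h₂,
    radialCutoff_eq_zero (by positivity) (by linarith), sub_zero]

theorem annularCutoff_eq_zero_of_norm_le (hR : 1 ≤ R) (hx : ‖x‖ ≤ 1 / 8) :
    annularCutoff R x = 0 := by
  rw [annularCutoff, radialCutoff_eq_one (by positivity) (by linarith),
    radialCutoff_eq_one (by positivity) hx, sub_self]

theorem annularCutoff_eq_zero_of_le_norm (hR : 1 ≤ R) (hx : 8 * R ≤ ‖x‖) :
    annularCutoff R x = 0 := by
  rw [annularCutoff, radialCutoff_eq_zero (by positivity) (by linarith),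
    radialCutoff_eq_zero (by positivity) (by linarith), sub_self]

theorem norm_mem_Icc_of_mem_tsupport_annularCutoff (hR : 1 ≤ R)
    (hx : x ∈ tsupport (annularCutoff (E := E) R)) : ‖x‖ ∈ Icc (1 / 8) (8 * R) := by
  refine closure_minimal (t := (‖·‖) ⁻¹' Icc (1 / 8) (8 * R)) (fun y hy => ?_)
    (isClosed_Icc.preimage continuous_norm) hx
  exact ⟨le_of_not_ge fun h => hy (annularCutoff_eq_zero_of_norm_le hR h),
    le_of_not_ge fun h => hy (annularCutoff_eq_zero_of_le_norm hR h)⟩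

theorem zero_notMem_tsupport_annularCutoff (hR : 1 ≤ R) :
    (0 : E) ∉ tsupport (annularCutoff (E := E) R) := fun h => by
  have := (norm_mem_Icc_of_mem_tsupport_annularCutoff hR h).1
  norm_num at this

theorem annularCutoff_eventuallyEq_one (hR : 0 < R) (h₁ : 1 / 4 < ‖x‖) (h₂ : ‖x‖ < 4 * R) :
    annularCutoff R =ᶠ[𝓝 x] fun _ => 1 := by
  filter_upwards [continuous_norm.continuousAt (Ioo_mem_nhds h₁ h₂)] with y hy
  exact annularCutoff_eq_one hR hy.1.le hy.2.le

variable [FiniteDimensional ℝ E]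

theorem hasCompactSupport_annularCutoff (hR : 1 ≤ R) :
    HasCompactSupport (annularCutoff (E := E) R) :=
  (isCompact_closedBall 0 (8 * R)).of_isClosed_subset (isClosed_tsupport _) fun _ hx =>
    mem_closedBall_zero_iff.mpr (norm_mem_Icc_of_mem_tsupport_annularCutoff hR hx).2

theorem exists_gradient_laplacian_annularCutoff_le (E : Type*) [NormedAddCommGroup E]
    [InnerProductSpace ℝ E] [FiniteDimensional ℝ E] :
    ∃ K, ∀ R ≥ 1, ∀ x : E, ‖gradient (annularCutoff R) x‖ ≤ K ∧
      |Δ (annularCutoff (E := E) R) x| ≤ K := by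
  obtain ⟨K₁, hK₁⟩ := exists_norm_gradient_radialCutoff_le E
  obtain ⟨K₂, hK₂⟩ := exists_abs_laplacian_radialCutoff_le E
  have hK₁₀ : 0 ≤ K₁ := by simpa using (norm_nonneg _).trans (hK₁ 1 one_pos 0)
  have hK₂₀ : 0 ≤ K₂ := by simpa using (abs_nonneg _).trans (hK₂ 1 one_pos 0)
  have hd (ρ : ℝ) : Differentiable ℝ (radialCutoff (E := E) ρ) :=
    (contDiff_radialCutoff (n := 1) ρ).differentiable one_ne_zero
  refine ⟨max (9 * K₁) (65 * K₂), fun R hR x => ⟨?_, ?_⟩⟩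
  · have hgrad : gradient (annularCutoff R) x =
        gradient (radialCutoff (4 * R)) x - gradient (radialCutoff (1 / 8)) x := by
      unfold annularCutoff gradient
      rw [fderiv_fun_sub (hd _ x) (hd _ x), map_sub]
    have h₁ : K₁ / (4 * R) ≤ K₁ := div_le_self hK₁₀ (by linarith)
    have h₂ := hK₁ (4 * R) (by positivity) x
    have h₃ := hK₁ (1 / 8) (by positivity) x
    rw [hgrad]
    refine (norm_sub_le _ _).trans (le_max_of_le_left ?_)
    linarith
  · have hΔ : Δ (annularCutoff (E := E) R) x =
        Δ (radialCutoff (E := E) (4 * R)) x - Δ (radialCutoff (E := E) (1 / 8)) x :=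
      (contDiff_radialCutoff _).contDiffAt.laplacian_sub (contDiff_radialCutoff _).contDiffAt
    have h₁ : K₂ / (4 * R) ^ 2 ≤ K₂ := div_le_self hK₂₀ (by nlinarith)
    have h₂ := hK₂ (4 * R) (by positivity) x
    have h₃ := hK₂ (1 / 8) (by positivity) x
    norm_num at h₃
    rw [hΔ]
    refine (abs_sub _ _).trans (le_max_of_le_right ?_)
    linarith

end AnnularCutoff

section Commutator

variable {E : Type*} [NormedAddCommGroup E] [InnerProductSpace ℝ E] [FiniteDimensional ℝ E]
  {F : Type*} [NormedAddCommGroup F] [InnerProductSpace ℝ F]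
  {χ : E → ℝ} {u : E → F} {x : E}

/-- The commutator `Δ(χu) - χΔu = 2∇χ·∇u + (Δχ)u` of the Laplacian with multiplication by `χ`. -/
noncomputable def laplacianCommutator (χ : E → ℝ) (u : E → F) (x : E) : F :=
  (2 : ℝ) • fderiv ℝ u x (gradient χ x) + Δ χ x • u x

theorem laplacianCommutator_eq_zero_of_eventuallyEq_const {c : ℝ} (h : χ =ᶠ[𝓝 x] fun _ => c) :
    laplacianCommutator χ u x = 0 := by
  have hgrad : gradient χ x = 0 := by rw [gradient, h.fderiv_eq, fderiv_const_apply, map_zero]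
  have hΔ : Δ χ x = 0 := by
    rw [(laplacian_congr_nhds h).eq_of_nhds, laplacian_const, Pi.zero_apply]
  simp [laplacianCommutator, hgrad, hΔ]

theorem norm_laplacianCommutator_sq_le {K : ℝ} (hgrad : ‖gradient χ x‖ ≤ K) (hΔ : |Δ χ x| ≤ K)
    (u : E → F) :
    ‖laplacianCommutator χ u x‖ ^ 2 ≤ 8 * K ^ 2 * energyDensity u x := by
  have h₁ : ‖fderiv ℝ u x (gradient χ x)‖ ≤ K * ‖fderiv ℝ u x‖ := by
    rw [mul_comm]
    exact ((fderiv ℝ u x).le_opNorm _).trans (by gcongr)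
  have h₂ : ‖laplacianCommutator χ u x‖ ≤ K * (2 * ‖fderiv ℝ u x‖ + ‖u x‖) := by
    refine (norm_add_le _ _).trans ?_
    rw [norm_smul, norm_smul, Real.norm_two, Real.norm_eq_abs]
    nlinarith [mul_le_mul_of_nonneg_right hΔ (norm_nonneg (u x))]
  calc ‖laplacianCommutator χ u x‖ ^ 2 ≤ K ^ 2 * (2 * ‖fderiv ℝ u x‖ + ‖u x‖) ^ 2 := by
        rw [← mul_pow]; gcongr
    _ ≤ K ^ 2 * (8 * (‖fderiv ℝ u x‖ ^ 2 + ‖u x‖ ^ 2)) := by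
        gcongr; nlinarith [sq_nonneg (2 * ‖fderiv ℝ u x‖ - ‖u x‖)]
    _ ≤ 8 * K ^ 2 * energyDensity u x := by
        unfold energyDensity
        nlinarith [norm_fderiv_sq_le_gradInner (f := u) (x := x), sq_nonneg K]

theorem laplacianCommutator_of_notMem_tsupport (hx : x ∉ tsupport χ) :
    laplacianCommutator χ u x = 0 :=
  laplacianCommutator_eq_zero_of_eventuallyEq_const (notMem_tsupport_iff_eventuallyEq.mp hx)

theorem continuous_laplacianCommutator (hχ : ContDiff ℝ 2 χ) (hu : ContDiff ℝ 2 u) :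
    Continuous (laplacianCommutator χ u) :=
  (((hu.continuous_fderiv two_ne_zero).clm_apply
    (continuous_gradient (hχ.of_le one_le_two))).const_smul 2).add
    ((continuous_laplacian hχ).smul hu.continuous)

variable {b t r : ℝ}

theorem norm_sq_mul_norm_laplacian_cutoff_sq_le (hu : ContDiff ℝ 2 u)
    (hΔu : ∀ x, ‖Δ u x‖ ≤ ‖u x‖) (hχ : ContDiff ℝ 2 χ) (hχr : ∀ x ∈ tsupport χ, ‖x‖ ≤ r) (x : E) :
    ‖x‖ ^ 2 * ‖Δ (fun y => χ y • u y) x‖ ^ 2 ≤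
      2 * r ^ 2 * (‖χ x • u x‖ ^ 2 + ‖laplacianCommutator χ u x‖ ^ 2) := by
  by_cases hx : x ∈ tsupport χ
  · have hmain : ‖χ x • Δ u x‖ ≤ ‖χ x • u x‖ := by
      rw [norm_smul, norm_smul]
      exact mul_le_mul_of_nonneg_left (hΔu x) (norm_nonneg _)
    have hΔ : ‖Δ (fun y => χ y • u y) x‖ ≤ ‖χ x • u x‖ + ‖laplacianCommutator χ u x‖ := by
      rw [laplacian_smul_comp hχ hu, add_assoc]
      exact (norm_add_le _ _).trans (by gcongr; rfl)
    calc ‖x‖ ^ 2 * ‖Δ (fun y => χ y • u y) x‖ ^ 2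
        ≤ r ^ 2 * (‖χ x • u x‖ + ‖laplacianCommutator χ u x‖) ^ 2 := by
          gcongr; exact hχr x hx
      _ ≤ r ^ 2 * (2 * (‖χ x • u x‖ ^ 2 + ‖laplacianCommutator χ u x‖ ^ 2)) := by
          gcongr; exact add_sq_le
      _ = _ := by ring
  · rw [laplacian_of_notMem_tsupport fun h => hx (tsupport_smul_subset_left χ u h)]
    simp only [norm_zero, ne_eq, OfNat.ofNat_ne_zero, not_false_eq_true, zero_pow, mul_zero]
    positivity

variable [MeasurableSpace E] [BorelSpace E]

/-- The potential term is absorbed by the left-hand side, leaving only the commutator. -/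
theorem integral_carlemanWeight_mul_cutoff_le (hu : ContDiff ℝ 2 u) (hΔu : ∀ x, ‖Δ u x‖ ≤ ‖u x‖)
    (hχ : ContDiff ℝ 2 χ) (hc : HasCompactSupport χ) (h0 : (0 : E) ∉ tsupport χ) (hb : 0 ≤ b)
    (ht : 3 ≤ t) (hr : 0 < r) (hχr : ∀ x ∈ tsupport χ, ‖x‖ ≤ r) (hbr : b * r ^ 2 ≤ 1 / 4)
    (hbt : r ^ 2 ≤ b * t ^ 3) :
    ∫ x, carlemanWeight b t (‖x‖ ^ 2) * ‖χ x • u x‖ ^ 2 ≤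
      ∫ x, carlemanWeight b t (‖x‖ ^ 2) * ‖laplacianCommutator χ u x‖ ^ 2 := by
  set f : E → F := fun x => χ x • u x
  have hf : ContDiff ℝ 2 f := hχ.smul hu
  have hfχ : tsupport f ⊆ tsupport χ := tsupport_smul_subset_left χ u
  have hcarleman := carleman_inequality hf (hc.smul_right (f' := u)) (fun h => h0 (hfχ h)) hb ht
    fun x hx => (mul_le_mul_of_nonneg_left
      (pow_le_pow_left₀ (norm_nonneg x) (hχr x (hfχ hx)) 2) hb).trans hbr
  have hif := integrable_carlemanWeight_mul b t (G := fun x => ‖f x‖ ^ 2)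
    (hf.continuous.norm.pow 2) hc h0 fun x hx => by
      simp [f, image_eq_zero_of_notMem_tsupport hx]
  have hic := integrable_carlemanWeight_mul b t (G := fun x => ‖laplacianCommutator χ u x‖ ^ 2)
    ((continuous_laplacianCommutator hχ hu).norm.pow 2) hc h0 fun x hx => by
      simp [laplacianCommutator_of_notMem_tsupport hx]
  have hupper : ∫ x, carlemanWeight b t (‖x‖ ^ 2) * (‖x‖ ^ 2 * ‖Δ f x‖ ^ 2) ≤
      2 * r ^ 2 * ((∫ x, carlemanWeight b t (‖x‖ ^ 2) * ‖f x‖ ^ 2) +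
        ∫ x, carlemanWeight b t (‖x‖ ^ 2) * ‖laplacianCommutator χ u x‖ ^ 2) := by
    rw [← integral_add hif hic, ← integral_const_mul]
    refine integral_mono_of_nonneg (ae_of_all _ fun x => ?_) ((hif.add hic).const_mul _)
      (ae_of_all _ fun x => ?_)
    · exact mul_nonneg (carlemanWeight_pos b t _).le (by positivity)
    · dsimp only
      rw [← mul_add, mul_left_comm (2 * r ^ 2)]
      exact mul_le_mul_of_nonneg_left
        (norm_sq_mul_norm_laplacian_cutoff_sq_le hu hΔu hχ hχr x) (carlemanWeight_pos b t _).le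
  have hnonneg : 0 ≤ ∫ x, carlemanWeight b t (‖x‖ ^ 2) * ‖f x‖ ^ 2 :=
    integral_nonneg fun x => mul_nonneg (carlemanWeight_pos b t _).le (by positivity)
  nlinarith [mul_le_mul_of_nonneg_right hbt hnonneg, pow_pos hr 2]

end Commutator

section MeanValue

theorem hasDerivAt_max_zero_sq (s : ℝ) : HasDerivAt (fun s : ℝ => max s 0 ^ 2) (2 * max s 0) s := by
  have h (s : ℝ) (hs : s ≠ 0) : HasDerivAt (fun s : ℝ => max s 0 ^ 2) (2 * max s 0) s := by
    rcases hs.lt_or_gt with hs | hs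
    · have h₀ : (fun s : ℝ => max s 0 ^ 2) =ᶠ[𝓝 s] fun _ => 0 := by
        filter_upwards [Iio_mem_nhds hs] with r (hr : r < 0)
        rw [max_eq_right hr.le, zero_pow two_ne_zero]
      rw [max_eq_right hs.le, mul_zero]
      exact (hasDerivAt_const s 0).congr_of_eventuallyEq h₀
    · have h₁ : (fun s : ℝ => max s 0 ^ 2) =ᶠ[𝓝 s] fun s => s ^ 2 := by
        filter_upwards [Ioi_mem_nhds hs] with r (hr : 0 < r)
        rw [max_eq_left hr.le]
      rw [max_eq_left hs.le]
      simpa using (hasDerivAt_pow 2 s).congr_of_eventuallyEq h₁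
  rcases eq_or_ne s 0 with rfl | hs
  · exact hasDerivAt_of_hasDerivAt_of_ne h (by fun_prop) (by fun_prop)
  · exact h s hs

variable {E : Type*} [NormedAddCommGroup E]

/-- The kernel of the averages in the sub-mean-value inequality: `∇meanPrimitive = -meanKernel • y`,
so that differentiating an average in the radius produces `Δ`. -/
noncomputable def meanKernel (y : E) : ℝ := 4 * max (1 - ‖y‖ ^ 2) 0

/-- The compactly supported radial primitive of `-meanKernel • y`. -/
noncomputable def meanPrimitive (y : E) : ℝ := max (1 - ‖y‖ ^ 2) 0 ^ 2

theorem meanKernel_nonneg (y : E) : 0 ≤ meanKernel y := by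
  unfold meanKernel; positivity

theorem meanKernel_le (y : E) : meanKernel y ≤ 4 := by
  have : max (1 - ‖y‖ ^ 2) 0 ≤ 1 := max_le (by nlinarith [norm_nonneg y]) zero_le_one
  unfold meanKernel
  linarith

theorem max_one_sub_norm_sq_eq_zero {y : E} (hy : 1 ≤ ‖y‖) : max (1 - ‖y‖ ^ 2) 0 = 0 :=
  max_eq_right (by nlinarith)

theorem meanKernel_eq_zero {y : E} (hy : 1 ≤ ‖y‖) : meanKernel y = 0 := by
  rw [meanKernel, max_one_sub_norm_sq_eq_zero hy, mul_zero]

theorem continuous_meanKernel : Continuous (meanKernel (E := E)) := by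
  unfold meanKernel; fun_prop

variable [InnerProductSpace ℝ E]

theorem hasFDerivAt_meanPrimitive (y : E) :
    HasFDerivAt meanPrimitive (-meanKernel y • innerSL ℝ y) y := by
  refine ((hasDerivAt_max_zero_sq (1 - ‖y‖ ^ 2)).comp_hasFDerivAt y
    ((hasFDerivAt_id y).norm_sq.const_sub 1)).congr_fderiv ?_
  ext v
  simp only [id_eq, ContinuousLinearMap.comp_id, smul_neg, neg_apply, smul_apply,
    coe_innerSL_apply, nsmul_eq_mul, Nat.cast_ofNat, smul_eq_mul, meanKernel, neg_smul, neg_inj]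
  ring

theorem contDiff_meanPrimitive : ContDiff ℝ 1 (meanPrimitive (E := E)) := by
  rw [contDiff_one_iff_fderiv]
  refine ⟨fun y => (hasFDerivAt_meanPrimitive y).differentiableAt, ?_⟩
  rw [funext fun y : E => (hasFDerivAt_meanPrimitive y).fderiv]
  exact continuous_meanKernel.neg.smul (innerSL ℝ).continuous

variable [FiniteDimensional ℝ E]

theorem hasCompactSupport_meanKernel : HasCompactSupport (meanKernel (E := E)) :=
  .intro (isCompact_closedBall 0 1) fun y hy =>
    meanKernel_eq_zero (by simpa using (not_le.mp (mt mem_closedBall_zero_iff.mpr hy)).le)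

theorem hasCompactSupport_meanPrimitive : HasCompactSupport (meanPrimitive (E := E)) :=
  .intro (isCompact_closedBall 0 1) fun y hy => by
    rw [meanPrimitive, max_one_sub_norm_sq_eq_zero
      (not_le.mp (mt mem_closedBall_zero_iff.mpr hy)).le, zero_pow two_ne_zero]

variable [MeasurableSpace E] [BorelSpace E] {η v : E → ℝ}

theorem integral_meanKernel_pos : 0 < ∫ y : E, meanKernel y :=
  continuous_meanKernel.integral_pos_of_hasCompactSupport_nonneg_nonzero
    hasCompactSupport_meanKernel meanKernel_nonneg (x := 0) (by simp [meanKernel])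

theorem hasDerivAt_integral_mul_comp_add_smul (hη : Continuous η) (hc : HasCompactSupport η)
    (hv : ContDiff ℝ 1 v) (a : E) (r : ℝ) :
    HasDerivAt (fun r : ℝ => ∫ y, η y * v (a + r • y)) (∫ y, η y * fderiv ℝ v (a + r • y) y) r := by
  have hv' : Continuous fun p : ℝ × E => η p.2 * fderiv ℝ v (a + p.1 • p.2) p.2 :=
    (hη.comp continuous_snd).mul
      (((hv.continuous_fderiv one_ne_zero).comp (by fun_prop)).clm_apply continuous_snd)
  have hvc := hv.continuous
  obtain ⟨K, hK⟩ := ((isCompact_closedBall r 1).prod hc).exists_bound_of_continuousOn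
    hv'.continuousOn
  refine (hasDerivAt_integral_of_dominated_loc_of_deriv_le (μ := volume)
    (F := fun r y => η y * v (a + r • y)) (F' := fun r y => η y * fderiv ℝ v (a + r • y) y)
    (bound := (tsupport η).indicator fun _ => K) (ball_mem_nhds r one_pos)
    (.of_forall fun s => Continuous.aestronglyMeasurable (by fun_prop))
    (Continuous.integrable_of_hasCompactSupport (by fun_prop) hc.mul_right)
    (hv'.comp (by fun_prop : Continuous fun y : E => (r, y))).aestronglyMeasurable
    (.of_forall fun y s hs => ?_) ?_ (.of_forall fun y s _ => ?_)).2
  · by_cases hy : y ∈ tsupport η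
    · rw [indicator_of_mem hy]
      exact hK (s, y) ⟨ball_subset_closedBall hs, hy⟩
    · rw [indicator_of_notMem hy, image_eq_zero_of_notMem_tsupport hy, zero_mul, norm_zero]
  · exact (integrable_indicator_iff (isClosed_tsupport η).measurableSet).mpr
      (integrableOn_const hc.measure_lt_top.ne)
  · have hline : HasDerivAt (fun s : ℝ => a + s • y) y s := by
      simpa using ((hasDerivAt_id s).smul_const y).const_add a
    exact ((hv.differentiable one_ne_zero _).hasFDerivAt.comp_hasDerivAt s hline).const_mul (η y)

theorem integral_meanKernel_mul_fderiv (hv : ContDiff ℝ 2 v) :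
    ∫ y, meanKernel y * fderiv ℝ v y y = ∫ y, meanPrimitive y * Δ v y := by
  have hgreen := integral_inner_laplacian contDiff_meanPrimitive hv
    (.inl hasCompactSupport_meanPrimitive)
  have hgrad (y : E) : gradInner meanPrimitive v y = -(meanKernel y * fderiv ℝ v y y) := by
    have h := sum_inner_mul_inner_apply (fderiv ℝ v y) y (1 : ℝ)
    simp only [RCLike.inner_apply, conj_trivial, mul_one] at h
    simp only [gradInner, (hasFDerivAt_meanPrimitive y).fderiv, ← h, Finset.mul_sum,
      ← Finset.sum_neg_distrib]
    refine Finset.sum_congr rfl fun i _ => ?_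
    simp only [neg_smul, neg_apply, smul_apply, coe_innerSL_apply, smul_eq_mul,
      RCLike.inner_apply, Real.ringHom_apply, mul_neg, neg_inj]
    ring
  simp_rw [hgrad, integral_neg, neg_neg] at hgreen
  rw [← hgreen]
  simp [mul_comm]

theorem integral_meanKernel_mul_fderiv_comp (hv : ContDiff ℝ 2 v) (a : E) {r : ℝ} (hr : r ≠ 0) :
    ∫ y, meanKernel y * fderiv ℝ v (a + r • y) y =
      r * ∫ y, meanPrimitive y * Δ v (a + r • y) := by
  have hfderiv (y : E) : fderiv ℝ (fun y => v (a + r • y)) y y = r * fderiv ℝ v (a + r • y) y := by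
    have hinner : HasFDerivAt (fun y : E => a + r • y) (r • ContinuousLinearMap.id ℝ E) y :=
      ((hasFDerivAt_id y).const_smul r).const_add a
    rw [HasFDerivAt.fderiv (f := fun y => v (a + r • y))
      ((hv.differentiable two_ne_zero _).hasFDerivAt.comp y hinner)]
    simp
  have h := integral_meanKernel_mul_fderiv (v := fun y => v (a + r • y)) (by fun_prop)
  simp only [hfderiv, laplacian_comp_add_smul hv, smul_eq_mul, mul_left_comm _ r,
    mul_left_comm _ (r ^ 2), integral_const_mul] at h
  refine mul_left_cancel₀ hr ?_
  rw [h]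
  ring

theorem neg_mul_le_integral_meanKernel_mul_fderiv (hv : ContDiff ℝ 2 v) {L r : ℝ}
    (hL : ∀ x, -L ≤ Δ v x) (hr : 0 < r) (a : E) :
    -(L * (∫ y : E, meanPrimitive y) * r) ≤ ∫ y, meanKernel y * fderiv ℝ v (a + r • y) y := by
  have hθ := (contDiff_meanPrimitive (E := E)).continuous
  have hΔ := continuous_laplacian hv
  have hle : ∫ y : E, meanPrimitive y * -L ≤ ∫ y, meanPrimitive y * Δ v (a + r • y) := by
    refine integral_mono ((hθ.integrable_of_hasCompactSupport
      hasCompactSupport_meanPrimitive).mul_const _) (Continuous.integrable_of_hasCompactSupport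
      (by fun_prop) hasCompactSupport_meanPrimitive.mul_right) fun y => ?_
    exact mul_le_mul_of_nonneg_left (hL _) (sq_nonneg _)
  rw [integral_mul_const] at hle
  rw [integral_meanKernel_mul_fderiv_comp hv a hr.ne']
  nlinarith

theorem le_integral_meanKernel_mul_comp (hv : ContDiff ℝ 2 v) {L δ : ℝ} (hL : ∀ x, -L ≤ Δ v x)
    (hδ : 0 ≤ δ) (a : E) :
    (∫ y : E, meanKernel y) * v a ≤
      (∫ y, meanKernel y * v (a + δ • y)) + L * (∫ y : E, meanPrimitive y) * (δ ^ 2 / 2) := by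
  set T := L * ∫ y : E, meanPrimitive y
  set g : ℝ → ℝ := fun r => (∫ y, meanKernel y * v (a + r • y)) + T * (r ^ 2 / 2)
  have hg (r : ℝ) : HasDerivAt g ((∫ y, meanKernel y * fderiv ℝ v (a + r • y) y) + T * r) r := by
    refine (hasDerivAt_integral_mul_comp_add_smul continuous_meanKernel
      hasCompactSupport_meanKernel (hv.of_le one_le_two) a r).add ?_
    simpa using ((hasDerivAt_pow 2 r).div_const 2).const_mul T
  have hmono : MonotoneOn g (Ici 0) := by
    refine monotoneOn_of_deriv_nonneg (convex_Ici 0)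
      (fun r _ => (hg r).continuousAt.continuousWithinAt)
      (fun r _ => (hg r).differentiableAt.differentiableWithinAt) fun r hr => ?_
    rw [interior_Ici] at hr
    rw [(hg r).deriv]
    linarith [neg_mul_le_integral_meanKernel_mul_fderiv hv hL hr a]
  simpa [g, integral_mul_const] using hmono self_mem_Ici hδ hδ

theorem integral_meanKernel_mul_comp_le (hv : Continuous v) (hv0 : ∀ x, 0 ≤ v x) {δ : ℝ}
    (hδ : 0 < δ) (hδ1 : δ ≤ 1) (a : E) :
    ∫ y, meanKernel y * v (a + δ • y) ≤
      4 * ((δ ^ Module.finrank ℝ E)⁻¹ * ∫ x in ball a 1, v x) := by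
  set w : E → ℝ := (ball a 1).indicator v
  have hw : Integrable w := (integrable_indicator_iff measurableSet_ball).mpr
    ((hv.locallyIntegrable.integrableOn_isCompact (isCompact_closedBall a 1)).mono_set
      ball_subset_closedBall)
  have hscale : ∫ y, w (a + δ • y) = (δ ^ Module.finrank ℝ E)⁻¹ * ∫ x in ball a 1, v x := by
    rw [Measure.integral_comp_smul volume (fun y => w (a + y)), integral_add_left_eq_self,
      abs_of_pos (by positivity), smul_eq_mul, integral_indicator measurableSet_ball]
  rw [← hscale, ← integral_const_mul]
  refine integral_mono_of_nonneg
    (.of_forall fun y => mul_nonneg (meanKernel_nonneg y) (hv0 _))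
    (((hw.comp_add_left a).comp_smul hδ.ne').const_mul 4) (.of_forall fun y => ?_)
  by_cases hy : ‖y‖ < 1
  · have hmem : a + δ • y ∈ ball a 1 := by
      rw [mem_ball, dist_self_add_left, norm_smul, Real.norm_of_nonneg hδ.le]
      nlinarith [norm_nonneg y]
    simp only [w, indicator_of_mem hmem]
    exact mul_le_mul_of_nonneg_right (meanKernel_le y) (hv0 _)
  · simp only [meanKernel_eq_zero (not_lt.mp hy), zero_mul]
    exact mul_nonneg (by norm_num) (indicator_nonneg (fun x _ => hv0 x) _)

theorem exists_pos_le_setIntegral_ball (E : Type*) [NormedAddCommGroup E] [InnerProductSpace ℝ E]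
    [FiniteDimensional ℝ E] [MeasurableSpace E] [BorelSpace E] {L : ℝ} (hL : 0 ≤ L) :
    ∃ c > 0, ∀ v : E → ℝ, ContDiff ℝ 2 v → (∀ x, 0 ≤ v x) → (∀ x, -L ≤ Δ v x) →
      ∀ a, v a = 1 → c ≤ ∫ x in ball a 1, v x := by
  set I := ∫ y : E, meanKernel y
  set T := ∫ y : E, meanPrimitive y
  have hI : 0 < I := integral_meanKernel_pos
  have hT : 0 ≤ T := integral_nonneg fun _ => sq_nonneg _
  set δ := min 1 (I / (L * T + 1))
  have hδ : 0 < δ := lt_min one_pos (by positivity)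
  have hδ1 : δ ≤ 1 := min_le_left _ _
  have hδI : L * T * (δ ^ 2 / 2) ≤ I / 2 := by
    have h : δ * (L * T + 1) ≤ I := (le_div_iff₀ (by positivity)).mp (min_le_right _ _)
    have hδ2 : δ ^ 2 ≤ δ := by nlinarith
    nlinarith [mul_nonneg hL hT, mul_le_mul_of_nonneg_left hδ2 (mul_nonneg hL hT)]
  refine ⟨δ ^ Module.finrank ℝ E * (I / 8), by positivity, fun v hv hv0 hLv a hva => ?_⟩
  have hlower := le_integral_meanKernel_mul_comp hv hLv hδ.le a
  have hupper := integral_meanKernel_mul_comp_le hv.continuous hv0 hδ hδ1 a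
  rw [hva, mul_one] at hlower
  rw [← le_inv_mul_iff₀ (by positivity)]
  linarith

end MeanValue

section Caccioppoli

variable {E : Type*} [NormedAddCommGroup E] [InnerProductSpace ℝ E] [FiniteDimensional ℝ E]
  {F : Type*} [NormedAddCommGroup F] [InnerProductSpace ℝ F] {u : E → F} {η : E → ℝ} {x : E}

theorem abs_laplacian_mul_norm_sq_sub_le {A M : ℝ} (hΔη : |Δ η x| ≤ A) (hη₀ : 0 ≤ η x)
    (hη₁ : η x ≤ 1) (hΔu : ‖Δ u x‖ ≤ ‖u x‖) (hM : ‖u x‖ ≤ M) :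
    |Δ η x * ‖u x‖ ^ 2 / 2 - η x * (inner ℝ (u x) (Δ u x) - ‖u x‖ ^ 2)| ≤ (A / 2 + 2) * M ^ 2 := by
  have hA : 0 ≤ A := (abs_nonneg _).trans hΔη
  have hinner : |inner ℝ (u x) (Δ u x)| ≤ ‖u x‖ ^ 2 :=
    (abs_real_inner_le_norm _ _).trans
      ((mul_le_mul_of_nonneg_left hΔu (norm_nonneg _)).trans_eq (sq _).symm)
  calc _ ≤ |Δ η x * ‖u x‖ ^ 2 / 2| + |η x * (inner ℝ (u x) (Δ u x) - ‖u x‖ ^ 2)| := abs_sub _ _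
    _ ≤ A * ‖u x‖ ^ 2 / 2 + 1 * (‖u x‖ ^ 2 + ‖u x‖ ^ 2) := by
      rw [abs_div, abs_mul, abs_mul, abs_two, abs_of_nonneg (sq_nonneg ‖u x‖), abs_of_nonneg hη₀]
      gcongr
      exact (abs_sub _ _).trans (add_le_add hinner (abs_of_nonneg (sq_nonneg _)).le)
    _ = (A / 2 + 2) * ‖u x‖ ^ 2 := by ring
    _ ≤ (A / 2 + 2) * M ^ 2 := by gcongr

variable [MeasurableSpace E] [BorelSpace E]

theorem integral_mul_gradInner_self (hη : ContDiff ℝ 2 η) (hc : HasCompactSupport η)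
    (hu : ContDiff ℝ 2 u) :
    ∫ x, η x * gradInner u u x = ∫ x, (Δ η x * ‖u x‖ ^ 2 / 2 - η x * inner ℝ (u x) (Δ u x)) := by
  have hΔη := continuous_laplacian hη
  have hΔu := continuous_laplacian hu
  have hηc := hη.continuous
  have huc := hu.continuous
  have hΓ := continuous_gradInner (hu.of_le one_le_two) (hu.of_le one_le_two)
  have hgreen := integral_inner_laplacian_comm hη (hu.norm_sq ℝ) (.inl hc)
  simp only [laplacian_norm_sq_comp hu, RCLike.inner_apply, conj_trivial] at hgreen
  have hiη (g : E → ℝ) (hg : Continuous g) : Integrable fun x => η x * g x :=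
    (hηc.mul hg).integrable_of_hasCompactSupport hc.mul_right
  have hiΔ : Integrable fun x => Δ η x * ‖u x‖ ^ 2 / 2 :=
    ((hΔη.mul (huc.norm.pow 2)).integrable_of_hasCompactSupport
      (hasCompactSupport_laplacian hc).mul_right).div_const 2
  have hsplit : ∫ x, (2 * inner ℝ (u x) (Δ u x) + 2 * gradInner u u x) * η x =
      2 * (∫ x, η x * inner ℝ (u x) (Δ u x)) + 2 * ∫ x, η x * gradInner u u x := by
    rw [← integral_const_mul, ← integral_const_mul,
      ← integral_add ((hiη _ (huc.inner hΔu)).const_mul 2) ((hiη _ hΓ).const_mul 2)]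
    exact integral_congr_ae (.of_forall fun x => by ring)
  rw [integral_sub hiΔ (hiη _ (huc.inner hΔu)), integral_div]
  linarith

theorem setIntegral_closedBall_le_integral_radialCutoff_mul {ρ : ℝ} (hρ : 0 < ρ) {f : E → ℝ}
    (hf : Continuous f) (hf0 : ∀ x, 0 ≤ f x) :
    ∫ x in closedBall 0 ρ, f x ≤ ∫ x, radialCutoff ρ x * f x := by
  have hint : Integrable fun x => radialCutoff ρ x * f x :=
    ((contDiff_radialCutoff (n := 0) ρ).continuous.mul hf).integrable_of_hasCompactSupport
      (hasCompactSupport_radialCutoff hρ).mul_right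
  calc ∫ x in closedBall 0 ρ, f x = ∫ x in closedBall 0 ρ, radialCutoff ρ x * f x :=
        setIntegral_congr_fun measurableSet_closedBall fun x hx => by
          simp only [radialCutoff_eq_one hρ (mem_closedBall_zero_iff.1 hx), one_mul]
    _ ≤ ∫ x, radialCutoff ρ x * f x := setIntegral_le_integral hint
        (.of_forall fun x => mul_nonneg (radialCutoff_nonneg ρ x) (hf0 x))

theorem integral_le_of_forall_notMem_closedBall_eq_zero {f : E → ℝ} {r A : ℝ} (hr : 0 ≤ r)
    (hfA : ∀ x ∈ closedBall 0 r, |f x| ≤ A) (hf0 : ∀ x ∉ closedBall 0 r, f x = 0) :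
    ∫ x, f x ≤ A * (r ^ Module.finrank ℝ E * volume.real (closedBall (0 : E) 1)) := by
  rw [← setIntegral_eq_integral_of_forall_compl_eq_zero hf0,
    ← Measure.addHaar_real_closedBall' _ (0 : E) hr]
  exact (Real.le_norm_self _).trans
    (norm_setIntegral_le_of_norm_le_const measure_closedBall_lt_top hfA)

theorem integral_radialCutoff_mul_energyDensity {ρ : ℝ} (hρ : 0 < ρ) (hu : ContDiff ℝ 2 u) :
    ∫ x, radialCutoff ρ x * energyDensity u x =
      ∫ x, (Δ (radialCutoff (E := E) ρ) x * ‖u x‖ ^ 2 / 2 -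
        radialCutoff ρ x * (inner ℝ (u x) (Δ u x) - ‖u x‖ ^ 2)) := by
  have hη : ContDiff ℝ 2 (radialCutoff (E := E) ρ) := contDiff_radialCutoff ρ
  have hc := hasCompactSupport_radialCutoff (E := E) hρ
  have hiη (g : E → ℝ) (hg : Continuous g) : Integrable fun x => radialCutoff ρ x * g x :=
    (hη.continuous.mul hg).integrable_of_hasCompactSupport hc.mul_right
  have hΓ := hiη _ (continuous_gradInner (hu.of_le one_le_two) (hu.of_le one_le_two))
  have hsq := hiη (fun x => ‖u x‖ ^ 2) (hu.continuous.norm.pow 2)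
  have hΔ : Integrable fun x => Δ (radialCutoff (E := E) ρ) x * ‖u x‖ ^ 2 / 2 -
      radialCutoff ρ x * inner ℝ (u x) (Δ u x) :=
    ((((continuous_laplacian hη).mul (hu.continuous.norm.pow 2)).integrable_of_hasCompactSupport
      (hasCompactSupport_laplacian hc).mul_right).div_const 2).sub
      (hiη _ (hu.continuous.inner (continuous_laplacian hu)))
  simp only [energyDensity, mul_add, mul_sub, sub_sub_eq_add_sub, add_sub_right_comm]
  rw [integral_add hΓ hsq, integral_add hΔ hsq, integral_mul_gradInner_self hη hc hu]

theorem exists_setIntegral_energyDensity_le (E : Type*) [NormedAddCommGroup E]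
    [InnerProductSpace ℝ E] [FiniteDimensional ℝ E] [MeasurableSpace E] [BorelSpace E] (F : Type*)
    [NormedAddCommGroup F] [InnerProductSpace ℝ F] :
    ∃ K ≥ 0, ∀ ρ > 0, ∀ (u : E → F) (M : ℝ), ContDiff ℝ 2 u → (∀ x, ‖Δ u x‖ ≤ ‖u x‖) →
      (∀ x, ‖x‖ ≤ 2 * ρ → ‖u x‖ ≤ M) →
      ∫ x in closedBall 0 ρ, energyDensity u x ≤
        K * (1 + (ρ ^ 2)⁻¹) * ρ ^ Module.finrank ℝ E * M ^ 2 := by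
  obtain ⟨K, hK⟩ := exists_abs_laplacian_radialCutoff_le E
  have hK0 : 0 ≤ K := by simpa using (abs_nonneg _).trans (hK 1 one_pos 0)
  set B := volume.real (closedBall (0 : E) 1)
  refine ⟨(K + 2) * 2 ^ Module.finrank ℝ E * B, by positivity, fun ρ hρ u M hu hΔu hM => ?_⟩
  refine (setIntegral_closedBall_le_integral_radialCutoff_mul hρ
    (continuous_energyDensity (hu.of_le one_le_two)) (energyDensity_nonneg u)).trans ?_
  rw [integral_radialCutoff_mul_energyDensity hρ hu]
  refine (integral_le_of_forall_notMem_closedBall_eq_zero (A := (K / ρ ^ 2 / 2 + 2) * M ^ 2)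
    (show 0 ≤ 2 * ρ by positivity) (fun x hx => ?_) fun x hx => ?_).trans ?_
  · exact abs_laplacian_mul_norm_sq_sub_le (hK ρ hρ x) (radialCutoff_nonneg ρ x)
      (radialCutoff_le_one ρ x) (hΔu x) (hM x (mem_closedBall_zero_iff.1 hx))
  · have hx' := mt (tsupport_radialCutoff_subset hρ ·) hx
    rw [laplacian_of_notMem_tsupport hx', image_eq_zero_of_notMem_tsupport hx']
    ring
  · have hcoef : K / ρ ^ 2 / 2 + 2 ≤ (K + 2) * (1 + (ρ ^ 2)⁻¹) := by
      have : 0 ≤ K * (ρ ^ 2)⁻¹ := by positivity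
      have : 0 ≤ (ρ ^ 2)⁻¹ := by positivity
      rw [div_eq_mul_inv K]
      linarith
    calc _ ≤ (K + 2) * (1 + (ρ ^ 2)⁻¹) * M ^ 2 *
          ((2 * ρ) ^ Module.finrank ℝ E * volume.real (closedBall (0 : E) 1)) := by gcongr
      _ = _ := by rw [mul_pow]; ring

end Caccioppoli

section BourgainKenig

/-- The Carleman weight of the Bourgain–Kenig argument at scale `R`: the size `R ^ (4 / 3)` of the
exponent is the smallest for which the Carleman estimate on the ball of radius `8 * R` absorbs a
potential bounded by `1`. -/
noncomputable def bkWeight (R s : ℝ) : ℝ :=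
  carlemanWeight (1 / (256 * R ^ 2)) (32 * R ^ ((4 : ℝ) / 3)) s

variable {R s₁ s₂ : ℝ}

theorem bkWeight_le_bkWeight (hR : 0 < R) (h₁ : 0 < s₁) (h : s₁ ≤ s₂) (h₂ : s₂ ≤ (8 * R) ^ 2) :
    bkWeight R s₂ ≤ bkWeight R s₁ := by
  refine carlemanWeight_le_carlemanWeight (by positivity) h₁ h ?_
  rw [mul_one_div, div_mul_eq_mul_div, div_le_one (by positivity)]
  linarith

theorem bkWeight_four_mul_le (hR : 1 ≤ R) :
    bkWeight R ((4 * R) ^ 2) ≤ bkWeight R ((R + 1) ^ 2) * Real.exp (-R) := by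
  have hP : R ≤ R ^ ((4 : ℝ) / 3) := Real.self_le_rpow_of_one_le hR (by norm_num)
  have hlog : Real.log 2 + Real.log ((R + 1) ^ 2) ≤ Real.log ((4 * R) ^ 2) := by
    rw [← Real.log_mul two_ne_zero (by positivity)]
    exact Real.log_le_log (by positivity) (by nlinarith)
  rw [bkWeight, bkWeight, carlemanWeight, carlemanWeight, ← Real.exp_add, Real.exp_le_exp]
  set P := R ^ ((4 : ℝ) / 3)
  have hquad₁ : 2 * (32 * P) * (1 / (256 * R ^ 2)) * (4 * R) ^ 2 = 4 * P := by
    field_simp; ring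
  have hquad₂ : 0 ≤ 2 * (32 * P) * (1 / (256 * R ^ 2)) * (R + 1) ^ 2 := by positivity
  nlinarith [Real.log_two_gt_d9]

theorem exp_le_bkWeight (hR : 2 ≤ R) :
    Real.exp (-(128 * R ^ ((4 : ℝ) / 3) * Real.log R)) ≤ bkWeight R ((R + 1) ^ 2) := by
  have hlog : Real.log ((R + 1) ^ 2) ≤ 4 * Real.log R := by
    have h := Real.log_le_log (by positivity)
      (pow_le_pow_left₀ (by positivity) (show R + 1 ≤ R ^ 2 by nlinarith) 2)
    rwa [← pow_mul, Real.log_pow R] at h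
  refine Real.exp_le_exp.2 ?_
  have hP : 0 ≤ R ^ ((4 : ℝ) / 3) := by positivity
  have hquad : 0 ≤ 2 * (32 * R ^ ((4 : ℝ) / 3)) * (1 / (256 * R ^ 2)) * (R + 1) ^ 2 := by positivity
  nlinarith [mul_le_mul_of_nonneg_left hlog hP]

theorem bkWeight_one_div_eight_le (hR : 4 ≤ R) :
    bkWeight R ((1 / 8) ^ 2) ≤ Real.exp (97 * R ^ ((4 : ℝ) / 3) * Real.log R) := by
  have hlog : 2 * Real.log 2 ≤ Real.log R := by
    rw [← Real.log_rpow two_pos]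
    exact Real.log_le_log (by positivity) (by norm_num; exact hR)
  have hlog8 : Real.log ((1 / 8) ^ 2) = -(6 * Real.log 2) := by
    rw [show ((1 : ℝ) / 8) ^ 2 = (2 ^ 6)⁻¹ by norm_num, Real.log_inv, Real.log_pow]
    norm_num
  have hP : 0 ≤ R ^ ((4 : ℝ) / 3) := by positivity
  have hb : 1 / (256 * R ^ 2) ≤ 1 := div_le_one_of_le₀ (by nlinarith) (by positivity)
  refine Real.exp_le_exp.2 ?_
  rw [hlog8]
  nlinarith [mul_le_mul_of_nonneg_left hlog hP, mul_le_mul_of_nonneg_left hb hP,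
    mul_le_mul_of_nonneg_left Real.log_two_gt_d9.le hP]

variable {E : Type*} [NormedAddCommGroup E] [InnerProductSpace ℝ E] [FiniteDimensional ℝ E]
  {F : Type*} [NormedAddCommGroup F] [InnerProductSpace ℝ F] {u : E → F} {K : ℝ}

theorem bkWeight_mul_norm_laplacianCommutator_sq_le (hR : 1 ≤ R) {x : E}
    (hK : ‖gradient (annularCutoff R) x‖ ≤ K ∧ |Δ (annularCutoff (E := E) R) x| ≤ K) :
    bkWeight R (‖x‖ ^ 2) * ‖laplacianCommutator (annularCutoff R) u x‖ ^ 2 ≤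
      8 * K ^ 2 * (bkWeight R ((1 / 8) ^ 2) * (closedBall 0 (1 / 4)).indicator (energyDensity u) x +
        bkWeight R ((4 * R) ^ 2) * (closedBall 0 (8 * R)).indicator (energyDensity u) x) := by
  have hW (s : ℝ) : 0 ≤ bkWeight R s := (carlemanWeight_pos _ _ _).le
  have hD (r : ℝ) : 0 ≤ (closedBall 0 r).indicator (energyDensity u) x :=
    indicator_nonneg (fun y _ => energyDensity_nonneg u y) x
  have hin := mul_nonneg (hW ((1 / 8) ^ 2)) (hD (1 / 4))
  have hout := mul_nonneg (hW ((4 * R) ^ 2)) (hD (8 * R))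
  have hzero (h : laplacianCommutator (annularCutoff R) u x = 0) :
      bkWeight R (‖x‖ ^ 2) * ‖laplacianCommutator (annularCutoff R) u x‖ ^ 2 = 0 := by
    rw [h, norm_zero, zero_pow two_ne_zero, mul_zero]
  have hnonneg := mul_nonneg (show 0 ≤ 8 * K ^ 2 by positivity) (add_nonneg hin hout)
  by_cases hx : x ∈ tsupport (annularCutoff R)
  swap
  · exact (hzero (laplacianCommutator_of_notMem_tsupport hx)).trans_le hnonneg
  obtain ⟨hx₁, hx₂⟩ := norm_mem_Icc_of_mem_tsupport_annularCutoff hR hx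
  have hshell {r ρ : ℝ} (hr : 0 < r) (hrx : r ≤ ‖x‖) (hxρ : ‖x‖ ≤ ρ) :
      bkWeight R (‖x‖ ^ 2) * ‖laplacianCommutator (annularCutoff R) u x‖ ^ 2 ≤
        8 * K ^ 2 * (bkWeight R (r ^ 2) * (closedBall 0 ρ).indicator (energyDensity u) x) := by
    rw [indicator_of_mem (mem_closedBall_zero_iff.2 hxρ), mul_left_comm]
    exact mul_le_mul
      (bkWeight_le_bkWeight (by positivity) (by positivity) (by gcongr) (by gcongr))
      (norm_laplacianCommutator_sq_le hK.1 hK.2 u) (sq_nonneg _) (hW _)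
  rcases le_or_gt ‖x‖ (1 / 4) with hx₃ | hx₃
  · exact (hshell (by norm_num) hx₁ hx₃).trans (by gcongr; exact le_add_of_nonneg_right hout)
  rcases lt_or_ge ‖x‖ (4 * R) with hx₄ | hx₄
  · exact (hzero (laplacianCommutator_eq_zero_of_eventuallyEq_const
      (annularCutoff_eventuallyEq_one (by positivity) hx₃ hx₄))).trans_le hnonneg
  · exact (hshell (by positivity) hx₄ hx₂).trans (by gcongr; exact le_add_of_nonneg_left hin)

theorem neg_two_mul_sq_le_laplacian_norm_sq (hu : ContDiff ℝ 2 u) {M : ℝ} {x : E}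
    (hΔu : ‖Δ u x‖ ≤ ‖u x‖) (huM : ‖u x‖ ≤ M) : -(2 * M ^ 2) ≤ Δ (fun y => ‖u y‖ ^ 2) x := by
  have hinner := (abs_real_inner_le_norm (u x) (Δ u x)).trans
    (mul_le_mul_of_nonneg_left hΔu (norm_nonneg _))
  have hsq := mul_self_le_mul_self (norm_nonneg _) huM
  rw [laplacian_norm_sq_comp hu]
  nlinarith [neg_abs_le (inner ℝ (u x) (Δ u x)), gradInner_self_nonneg u x]

variable [MeasurableSpace E] [BorelSpace E]

theorem integral_bkWeight_mul_norm_laplacianCommutator_sq_le (hR : 1 ≤ R)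
    (hK : ∀ x : E, ‖gradient (annularCutoff R) x‖ ≤ K ∧ |Δ (annularCutoff (E := E) R) x| ≤ K)
    (hu : ContDiff ℝ 2 u) :
    ∫ x, bkWeight R (‖x‖ ^ 2) * ‖laplacianCommutator (annularCutoff R) u x‖ ^ 2 ≤
      8 * K ^ 2 * (bkWeight R ((1 / 8) ^ 2) * (∫ x in closedBall 0 (1 / 4), energyDensity u x) +
        bkWeight R ((4 * R) ^ 2) * ∫ x in closedBall 0 (8 * R), energyDensity u x) := by
  have hint (r : ℝ) : Integrable ((closedBall 0 r).indicator (energyDensity u)) :=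
    ((continuous_energyDensity (hu.of_le one_le_two)).continuousOn.integrableOn_compact
      (isCompact_closedBall _ _)).integrable_indicator measurableSet_closedBall
  have hintW : Integrable fun x : E =>
      bkWeight R (‖x‖ ^ 2) * ‖laplacianCommutator (annularCutoff R) u x‖ ^ 2 :=
    integrable_carlemanWeight_mul _ _
      ((continuous_laplacianCommutator (contDiff_annularCutoff R) hu).norm.pow 2)
      (hasCompactSupport_annularCutoff hR)
      (zero_notMem_tsupport_annularCutoff hR)
      fun x hx => by rw [laplacianCommutator_of_notMem_tsupport hx, norm_zero, zero_pow two_ne_zero]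
  rw [← integral_indicator measurableSet_closedBall, ← integral_indicator measurableSet_closedBall,
    ← integral_const_mul, ← integral_const_mul,
    ← integral_add ((hint _).const_mul _) ((hint _).const_mul _), ← integral_const_mul]
  exact integral_mono hintW ((((hint _).const_mul _).add ((hint _).const_mul _)).const_mul _)
    fun x => bkWeight_mul_norm_laplacianCommutator_sq_le hR (hK x)

theorem integral_bkWeight_mul_norm_cutoff_sq_le (hR : 1 ≤ R)
    (hK : ∀ x : E, ‖gradient (annularCutoff R) x‖ ≤ K ∧ |Δ (annularCutoff (E := E) R) x| ≤ K)
    (hu : ContDiff ℝ 2 u) (hΔu : ∀ x, ‖Δ u x‖ ≤ ‖u x‖) :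
    ∫ x, bkWeight R (‖x‖ ^ 2) * ‖annularCutoff R x • u x‖ ^ 2 ≤
      8 * K ^ 2 * (bkWeight R ((1 / 8) ^ 2) * (∫ x in closedBall 0 (1 / 4), energyDensity u x) +
        bkWeight R ((4 * R) ^ 2) * ∫ x in closedBall 0 (8 * R), energyDensity u x) := by
  have hP : R ≤ R ^ ((4 : ℝ) / 3) := Real.self_le_rpow_of_one_le hR (by norm_num)
  have hP3 : (R ^ ((4 : ℝ) / 3)) ^ 3 = R ^ 4 := by
    rw [← Real.rpow_mul_natCast (by positivity), ← Real.rpow_natCast R 4]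
    norm_num
  refine (integral_carlemanWeight_mul_cutoff_le hu hΔu (contDiff_annularCutoff R)
    (hasCompactSupport_annularCutoff hR) (zero_notMem_tsupport_annularCutoff hR)
    (by positivity) (by linarith) (show 0 < 8 * R by positivity)
    (fun x hx => (norm_mem_Icc_of_mem_tsupport_annularCutoff hR hx).2) ?_ ?_).trans
    (integral_bkWeight_mul_norm_laplacianCommutator_sq_le hR hK hu)
  · field_simp; norm_num
  · rw [mul_pow 32, hP3]
    field_simp; norm_num

theorem exists_mul_bkWeight_le_integral (E : Type*) [NormedAddCommGroup E] [InnerProductSpace ℝ E]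
    [FiniteDimensional ℝ E] [MeasurableSpace E] [BorelSpace E] (F : Type*) [NormedAddCommGroup F]
    [InnerProductSpace ℝ F] (C₀ : ℝ) :
    ∃ c > 0, ∀ R ≥ 2, ∀ u : E → F, ContDiff ℝ 2 u → (∀ x, ‖Δ u x‖ ≤ ‖u x‖) → (∀ x, ‖u x‖ ≤ C₀) →
      ∀ a, ‖a‖ = R → ‖u a‖ = 1 →
        c * bkWeight R ((R + 1) ^ 2) ≤
          ∫ x, bkWeight R (‖x‖ ^ 2) * ‖annularCutoff R x • u x‖ ^ 2 := by
  obtain ⟨c, hc, hmean⟩ := exists_pos_le_setIntegral_ball E (show 0 ≤ 2 * C₀ ^ 2 by positivity)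
  refine ⟨c, hc, fun R hR u hu hΔu huC a ha hua => ?_⟩
  have hR₁ : 1 ≤ R := by linarith
  have hint : Integrable fun x : E => bkWeight R (‖x‖ ^ 2) * ‖annularCutoff R x • u x‖ ^ 2 :=
    integrable_carlemanWeight_mul _ _
      (((contDiff_annularCutoff (n := 0) R).continuous.smul hu.continuous).norm.pow 2)
      (hasCompactSupport_annularCutoff hR₁) (zero_notMem_tsupport_annularCutoff hR₁) fun x hx => by
        rw [image_eq_zero_of_notMem_tsupport hx, zero_smul, norm_zero, zero_pow two_ne_zero]
  have hball (x : E) (hx : x ∈ ball a 1) :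
      ‖u x‖ ^ 2 * bkWeight R ((R + 1) ^ 2) ≤
        bkWeight R (‖x‖ ^ 2) * ‖annularCutoff R x • u x‖ ^ 2 := by
    have hdist := abs_lt.1 ((abs_norm_sub_norm_le x a).trans_lt (mem_ball_iff_norm.1 hx))
    have hx₁ : ‖x‖ ≤ R + 1 := by linarith
    have hx₂ : 1 ≤ ‖x‖ := by linarith
    rw [annularCutoff_eq_one (by positivity) (by linarith) (by linarith), one_smul, mul_comm]
    gcongr
    exact bkWeight_le_bkWeight (by positivity) (by positivity) (by gcongr) (by gcongr; linarith)
  calc c * bkWeight R ((R + 1) ^ 2) ≤ (∫ x in ball a 1, ‖u x‖ ^ 2) * bkWeight R ((R + 1) ^ 2) := by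
        gcongr
        · exact (carlemanWeight_pos _ _ _).le
        · exact hmean _ (hu.norm_sq ℝ) (fun x => sq_nonneg _)
            (fun x => neg_two_mul_sq_le_laplacian_norm_sq hu (hΔu x) (huC x)) a
            (by rw [hua, one_pow])
    _ = ∫ x in ball a 1, ‖u x‖ ^ 2 * bkWeight R ((R + 1) ^ 2) := (integral_mul_const _ _).symm
    _ ≤ ∫ x in ball a 1, bkWeight R (‖x‖ ^ 2) * ‖annularCutoff R x • u x‖ ^ 2 :=
        setIntegral_mono_on ((((hu.continuous.norm.pow 2).mul continuous_const).continuousOn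
          |>.integrableOn_compact (isCompact_closedBall a 1)).mono_set ball_subset_closedBall)
          hint.integrableOn measurableSet_ball hball
    _ ≤ _ := setIntegral_le_integral hint
        (.of_forall fun x => mul_nonneg (carlemanWeight_pos _ _ _).le (sq_nonneg _))

theorem exists_integral_bkWeight_mul_norm_cutoff_sq_le (E : Type*) [NormedAddCommGroup E]
    [InnerProductSpace ℝ E] [FiniteDimensional ℝ E] [MeasurableSpace E] [BorelSpace E] (F : Type*)
    [NormedAddCommGroup F] [InnerProductSpace ℝ F] (C₀ : ℝ) :
    ∃ A ≥ 0, ∃ B, ∀ R ≥ 1, ∀ u : E → F, ContDiff ℝ 2 u → (∀ x, ‖Δ u x‖ ≤ ‖u x‖) →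
      (∀ x, ‖u x‖ ≤ C₀) → ∀ m, (∀ x ∈ ball 0 1, ‖u x‖ ≤ m) →
        ∫ x, bkWeight R (‖x‖ ^ 2) * ‖annularCutoff R x • u x‖ ^ 2 ≤
          A * (m ^ 2 * bkWeight R ((1 / 8) ^ 2)) +
            B * (R ^ Module.finrank ℝ E * Real.exp (-R)) * bkWeight R ((R + 1) ^ 2) := by
  obtain ⟨K, hK⟩ := exists_gradient_laplacian_annularCutoff_le E
  obtain ⟨L, hL, henergy⟩ := exists_setIntegral_energyDensity_le E F
  set N := Module.finrank ℝ E
  refine ⟨8 * K ^ 2 * (L * (1 + ((1 / 4) ^ 2)⁻¹) * (1 / 4) ^ N), by positivity,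
    8 * K ^ 2 * (L * 2 * 8 ^ N * C₀ ^ 2), fun R hR u hu hΔu huC m hm => ?_⟩
  have hW (s : ℝ) : 0 ≤ bkWeight R s := (carlemanWeight_pos _ _ _).le
  have hinner := henergy (1 / 4) (by norm_num) u m hu hΔu
    fun x hx => hm x (mem_ball_zero_iff.2 (by linarith))
  have houter : ∫ x in closedBall 0 (8 * R), energyDensity u x ≤ L * 2 * (8 * R) ^ N * C₀ ^ 2 := by
    refine (henergy (8 * R) (by positivity) u C₀ hu hΔu fun x _ => huC x).trans ?_
    have h : ((8 * R) ^ 2)⁻¹ ≤ 1 := inv_le_one_of_one_le₀ (by nlinarith)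
    gcongr
    linarith
  calc ∫ x, bkWeight R (‖x‖ ^ 2) * ‖annularCutoff R x • u x‖ ^ 2
    _ ≤ 8 * K ^ 2 * (bkWeight R ((1 / 8) ^ 2) * (∫ x in closedBall 0 (1 / 4), energyDensity u x) +
        bkWeight R ((4 * R) ^ 2) * ∫ x in closedBall 0 (8 * R), energyDensity u x) :=
      integral_bkWeight_mul_norm_cutoff_sq_le hR (hK R hR) hu hΔu
    _ ≤ 8 * K ^ 2 * (bkWeight R ((1 / 8) ^ 2) * (L * (1 + ((1 / 4) ^ 2)⁻¹) * (1 / 4) ^ N * m ^ 2) +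
        bkWeight R ((R + 1) ^ 2) * Real.exp (-R) * (L * 2 * (8 * R) ^ N * C₀ ^ 2)) := by
      gcongr
      · exact hW _
      · exact integral_nonneg fun x => energyDensity_nonneg u x
      · exact mul_nonneg (hW _) (Real.exp_pos _).le
      · exact bkWeight_four_mul_le hR
    _ = _ := by rw [mul_pow 8]; ring

theorem exists_mul_bkWeight_le (E : Type*) [NormedAddCommGroup E] [InnerProductSpace ℝ E]
    [FiniteDimensional ℝ E] (F : Type*) [NormedAddCommGroup F] [InnerProductSpace ℝ F] (C₀ : ℝ) :
    ∃ c > 0, ∀ᶠ R in atTop, ∀ u : E → F, ContDiff ℝ 2 u → (∀ x, ‖Δ u x‖ ≤ ‖u x‖) →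
      (∀ x, ‖u x‖ ≤ C₀) → ∀ a, ‖a‖ = R → ‖u a‖ = 1 → ∀ m, (∀ x ∈ ball 0 1, ‖u x‖ ≤ m) →
        c * bkWeight R ((R + 1) ^ 2) ≤ m ^ 2 * bkWeight R ((1 / 8) ^ 2) := by
  borelize E
  obtain ⟨c, hc, hlower⟩ := exists_mul_bkWeight_le_integral E F C₀
  obtain ⟨A, hA, B, hupper⟩ := exists_integral_bkWeight_mul_norm_cutoff_sq_le E F C₀
  have htail : ∀ᶠ R : ℝ in atTop, B * (R ^ Module.finrank ℝ E * Real.exp (-R)) < c / 2 := by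
    refine ((Real.tendsto_pow_mul_exp_neg_atTop_nhds_zero _).const_mul B).eventually_lt_const ?_
    rw [mul_zero]
    exact half_pos hc
  refine ⟨c / (2 * (A + 1)), by positivity, ?_⟩
  filter_upwards [htail, eventually_ge_atTop 2] with R htail hR u hu hΔu huC a ha hua m hm
  have hW (s : ℝ) : 0 ≤ bkWeight R s := (carlemanWeight_pos _ _ _).le
  have hbounds := (hlower R hR u hu hΔu huC a ha hua).trans
    (hupper R (by linarith) u hu hΔu huC m hm)
  have habsorb := mul_le_mul_of_nonneg_right htail.le (hW ((R + 1) ^ 2))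
  rw [div_mul_eq_mul_div, div_le_iff₀ (by positivity)]
  linarith [mul_nonneg (sq_nonneg m) (hW ((1 / 8) ^ 2))]

theorem eventually_mul_exp_le_of_mul_bkWeight_le {c : ℝ} (hc : 0 < c) :
    ∀ᶠ R in atTop, ∀ m ≥ 0,
      c * bkWeight R ((R + 1) ^ 2) ≤ m ^ 2 * bkWeight R ((1 / 8) ^ 2) →
        113 * Real.exp (-113 * R ^ ((4 : ℝ) / 3) * Real.log R) ≤ m := by
  have htail : ∀ᶠ R : ℝ in atTop, 113 ^ 2 * Real.exp (-R) < c := by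
    refine (Real.tendsto_exp_neg_atTop_nhds_zero.const_mul _).eventually_lt_const ?_
    rwa [mul_zero]
  filter_upwards [htail, eventually_ge_atTop 4] with R htail hR m hm h
  have hRP : R ≤ R ^ ((4 : ℝ) / 3) * Real.log R := by
    have hP : R ≤ R ^ ((4 : ℝ) / 3) := Real.self_le_rpow_of_one_le (by linarith) (by norm_num)
    have hlog : 1 ≤ Real.log R := by
      rw [Real.le_log_iff_exp_le (by linarith)]
      linarith [Real.exp_one_lt_d9]
    nlinarith
  have hout := exp_le_bkWeight (show 2 ≤ R by linarith)
  have hin := bkWeight_one_div_eight_le hR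
  simp only [mul_assoc] at hout hin ⊢
  set Q := R ^ ((4 : ℝ) / 3) * Real.log R
  have hsq : c * Real.exp (-(225 * Q)) ≤ m ^ 2 := by
    calc c * Real.exp (-(225 * Q)) = c * Real.exp (-(128 * Q)) * Real.exp (-(97 * Q)) := by
          rw [mul_assoc, ← Real.exp_add]; ring_nf
      _ ≤ m ^ 2 * Real.exp (97 * Q) * Real.exp (-(97 * Q)) := by
          refine mul_le_mul_of_nonneg_right ?_ (Real.exp_pos _).le
          exact (mul_le_mul_of_nonneg_left hout hc.le).trans
            (h.trans (mul_le_mul_of_nonneg_left hin (sq_nonneg m)))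
      _ = m ^ 2 := by rw [mul_assoc, ← Real.exp_add, add_neg_cancel, Real.exp_zero, mul_one]
  refine le_of_sq_le_sq ?_ hm
  calc (113 * Real.exp (-113 * Q)) ^ 2 = 113 ^ 2 * Real.exp (-Q) * Real.exp (-(225 * Q)) := by
        rw [mul_pow, mul_assoc, ← Real.exp_add, ← Real.exp_nat_mul]; push_cast; ring_nf
    _ ≤ 113 ^ 2 * Real.exp (-R) * Real.exp (-(225 * Q)) := by gcongr
    _ ≤ c * Real.exp (-(225 * Q)) := by gcongr
    _ ≤ m ^ 2 := hsq

theorem le_csSup_norm_image_ball {E F : Type*} [SeminormedAddCommGroup E] [SeminormedAddCommGroup F]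
    {u : E → F} {C₀ : ℝ} (huC : ∀ x, ‖u x‖ ≤ C₀) {x₀ x : E} (hx : x ∈ ball x₀ 1) :
    ‖u x‖ ≤ sSup ((fun x => ‖u x‖) '' ball x₀ 1) :=
  le_csSup ⟨C₀, forall_mem_image.2 fun x _ => huC x⟩ (mem_image_of_mem _ hx)

end BourgainKenig

theorem lapl_eq_laplacian {n : ℕ} {u : EuclideanSpace ℝ (Fin n) → ℂ} (hu : ContDiff ℝ 2 u)
    (x : EuclideanSpace ℝ (Fin n)) : lapl u x = Δ u x := by
  rw [laplacian_eq_sum_fderiv_fderiv (EuclideanSpace.basisFun (Fin n) ℝ) hu.contDiffAt]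
  simp only [lapl, EuclideanSpace.basisFun_apply]

theorem quantitative_unique_continuation_elliptic_general (E : Type*) [NormedAddCommGroup E]
    [InnerProductSpace ℝ E] [FiniteDimensional ℝ E] [Nontrivial E] (F : Type*)
    [NormedAddCommGroup F] [InnerProductSpace ℝ F] (C₀ : ℝ) :
    ∃ C > (0 : ℝ), ∃ R₀ > (0 : ℝ), ∀ u : E → F, ContDiff ℝ 2 u → (∀ x, ‖Δ u x‖ ≤ ‖u x‖) →
      (∀ x, ‖u x‖ ≤ C₀) → ‖u 0‖ = 1 → ∀ R : ℝ, R₀ ≤ R →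
        C * Real.exp (-C * R ^ ((4 : ℝ) / 3) * Real.log R) ≤
          sInf ((fun x₀ : E => sSup ((fun x => ‖u x‖) '' ball x₀ 1)) '' {x₀ | ‖x₀‖ = R}) := by
  obtain ⟨c, hc, hthree⟩ := exists_mul_bkWeight_le E F C₀
  obtain ⟨R₀, hR₀⟩ := eventually_atTop.1
    (hthree.and (eventually_mul_exp_le_of_mul_bkWeight_le hc))
  refine ⟨113, by norm_num, max R₀ 1, by positivity, fun u hu hΔu huC hu₀ R hR => ?_⟩
  obtain ⟨hthree, hnum⟩ := hR₀ R ((le_max_left _ _).trans hR)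
  have hR0 : 0 ≤ R := zero_le_one.trans ((le_max_right _ _).trans hR)
  refine le_csInf (Nonempty.image _ (exists_norm_eq E hR0))
    (forall_mem_image.2 fun x₀ hx₀ => ?_)
  have hsup {x : E} (hx : x ∈ ball x₀ 1) := le_csSup_norm_image_ball huC hx
  refine hnum _ ((norm_nonneg _).trans (hsup (mem_ball_self one_pos)))
    (hthree (fun x => u (x₀ + x)) (hu.comp (contDiff_const.add contDiff_id)) (fun x => ?_)
      (fun x => huC _) (-x₀) (by rwa [norm_neg]) (by rwa [add_neg_cancel]) _ fun x hx => hsup ?_)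
  · have h := laplacian_comp_add_smul hu x₀ 1 x
    simp only [one_smul, one_pow] at h
    rw [h]
    exact hΔu _
  · simpa using hx

/-- **Bourgain–Kenig quantitative unique continuation.**
If `Δu + Vu = 0` on `ℝⁿ` with `|V| ≤ 1`, `|u| ≤ C₀`, `u(0) = 1`, and
`M(R) = inf_{|x₀| = R} sup_{B(x₀,1)} |u|`, then there is `C > 0` depending only on the
dimension and `C₀` such that for all sufficiently large `R`,
`M(R) ≥ C exp(−C R^{4/3} log R)`. -/
theorem quantitative_unique_continuation_elliptic (n : ℕ) (C₀ : ℝ) (hC₀ : 0 < C₀) :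
    ∃ C > (0:ℝ), ∃ R₀ > (0:ℝ),
      ∀ u V : EuclideanSpace ℝ (Fin (n + 1)) → ℂ,
        ContDiff ℝ 2 u →
        (∀ x, lapl u x + V x * u x = 0) →
        (∀ x, ‖V x‖ ≤ 1) →
        (∀ x, ‖u x‖ ≤ C₀) →
        u 0 = 1 →
        ∀ R : ℝ, R₀ ≤ R →
          C * Real.exp (-C * R ^ ((4:ℝ)/3) * Real.log R) ≤
            sInf ((fun x₀ : EuclideanSpace ℝ (Fin (n + 1)) =>
              sSup ((fun x => ‖u x‖) '' ball x₀ 1)) '' {x₀ | ‖x₀‖ = R}) := by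
  obtain ⟨C, hC, R₀, hR₀, h⟩ := quantitative_unique_continuation_elliptic_general
    (EuclideanSpace ℝ (Fin (n + 1))) ℂ C₀
  refine ⟨C, hC, R₀, hR₀, fun u V hu hV hV₁ huC hu₀ => h u hu (fun x => ?_) huC (by simp [hu₀])⟩
  rw [← lapl_eq_laplacian hu, eq_neg_of_add_eq_zero_left (hV x), norm_neg, norm_mul]
  exact mul_le_of_le_one_left (norm_nonneg _) (hV₁ x)
end

section
/- For each k ≥ 1 there exists a solution u ≢ 0 of the k-generalized KdV equation ∂ₜu + ∂ₓ³u + u^k ∂ₓu = 0 on ℝ × [0,1] and a constant C > 0 such that |u(x,0)| + |u(x,1)| ≤ C exp(−C x₊^{3/2}) for all x ∈ ℝ. Hence the two-time uniqueness theorem with weights e^{a x₊^{3/2}} is sharp even for the nonlinear equation. -/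
open MeasureTheory Metric Set Filter
open scoped ENNReal NNReal Topology

/-!
The solution is sought as a Fourier integral `u(t, x) = ∫ e^{ixξ} w(t, ξ) dξ`, where each profile
`w(t, ·)` is continuous on the closed upper half plane and holomorphic in its interior. The equation
becomes the Duhamel equation
`w(t) = ε E_t e^{-2z²} - (iz / (k + 1)) ∫₀ᵗ E_{t-s} w(s)^{*(k+1)} ds` with `E_t(z) = e^{itz³}`,
and `|E_t| ≤ e^{tη³}` at height `η = Im z ≥ 0` for `t ≥ 0`. For small `ε` it is solved by
contraction in the space with weight `exp(2η² - 2|ξ| + t(η³ + η + |ξ|)) / (1 + ξ²)`, `z = ξ + iη`.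
This weight is submultiplicative under convolution up to a constant, and its growth `e^{t(η + |ξ|)}`
in time absorbs the factor `|z| ≤ η + |ξ|` coming from the derivative, because
`∫₀ᵗ a e^{-(t-s)a} ds ≤ 1`.

The decay comes from moving the contour to height `η`: at times `t ≤ 1` the integral is
`O(exp(2η² + η + η³ - xη))`, and the choice `η = √x₊ / 2` makes this `O(exp(-x₊^{3/2} / 8))`.
-/

namespace GKdV

open Complex (I)
open scoped Real ComplexConjugate FourierTransform

section ParametricIntegrals

variable {α E : Type*} [MeasurableSpace α] {μ : Measure α} [NormedAddCommGroup E]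

lemma aestronglyMeasurable_deriv_of_forall {𝕜 : Type*} [NontriviallyNormedField 𝕜]
    [NormedSpace 𝕜 E] {F : 𝕜 → α → E} {z₀ : 𝕜} (hF : ∀ z, AEStronglyMeasurable (F z) μ)
    (hd : ∀ᵐ a ∂μ, DifferentiableAt 𝕜 (F · a) z₀) :
    AEStronglyMeasurable (fun a => deriv (F · a) z₀) μ :=
  aestronglyMeasurable_of_tendsto_ae (𝓝[≠] (0 : 𝕜))
    (f := fun h a => h⁻¹ • (F (z₀ + h) a - F z₀ a)) (fun _ => ((hF _).sub (hF _)).const_smul _)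
    (hd.mono fun _ ha => hasDerivAt_iff_tendsto_slope_zero.1 ha.hasDerivAt)

theorem differentiableOn_integral_of_locally_dominated [NormedSpace ℂ E] {F : ℂ → α → E}
    {U : Set ℂ} (hU : IsOpen U) (hF : ∀ z, AEStronglyMeasurable (F z) μ)
    (hd : ∀ᵐ a ∂μ, DifferentiableOn ℂ (F · a) U)
    (hb : ∀ z₀ ∈ U, ∃ s ∈ 𝓝 z₀, ∃ b : α → ℝ, Integrable b μ ∧ ∀ᵐ a ∂μ, ∀ z ∈ s, ‖F z a‖ ≤ b a) :
    DifferentiableOn ℂ (fun z => ∫ a, F z a ∂μ) U := by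
  intro z₀ hz₀
  obtain ⟨s, hs, b, hb_int, hb⟩ := hb z₀ hz₀
  obtain ⟨r₀, hr₀, hr₀_sub⟩ := Metric.mem_nhds_iff.1 (inter_mem hs (hU.mem_nhds hz₀))
  obtain ⟨r, hr, hrr₀⟩ : ∃ r > 0, 2 * r ≤ r₀ := ⟨r₀ / 2, by positivity, by linarith⟩
  have hball : ball z₀ (2 * r) ⊆ s ∩ U := (ball_subset_ball hrr₀).trans hr₀_sub
  have hclosedBall : ∀ z ∈ ball z₀ r, closedBall z r ⊆ ball z₀ (2 * r) := fun z hz =>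
    closedBall_subset_ball' (by linarith [mem_ball.1 hz])
  have hd_at : ∀ᵐ a ∂μ, ∀ z ∈ ball z₀ (2 * r), DifferentiableAt ℂ (F · a) z :=
    hd.mono fun a ha z hz => ha.differentiableAt (hU.mem_nhds (hball hz).2)
  -- Cauchy's estimate turns a local bound on `F` into one on its derivative.
  have hderiv_le : ∀ᵐ a ∂μ, ∀ z ∈ ball z₀ r, ‖deriv (F · a) z‖ ≤ b a / r := by
    filter_upwards [hb, hd_at] with a ha hda z hz
    refine Complex.norm_deriv_le_of_forall_mem_sphere_norm_le hr
      (DifferentiableOn.diffContOnCl fun y hy => (hda y (hclosedBall z hz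
        (closure_ball_subset_closedBall hy))).differentiableWithinAt) fun y hy => ?_
    exact ha y (hball (hclosedBall z hz (sphere_subset_closedBall hy))).1
  refine (hasDerivAt_integral_of_dominated_loc_of_deriv_le (ball_mem_nhds z₀ hr)
    (Eventually.of_forall hF) ?_ ?_ hderiv_le (hb_int.div_const r)
    ?_).2.differentiableAt.differentiableWithinAt
  · exact hb_int.mono' (hF z₀) (hb.mono fun a ha => ha z₀ (mem_of_mem_nhds hs))
  · exact aestronglyMeasurable_deriv_of_forall hF
      (hd_at.mono fun a ha => ha z₀ (mem_ball_self (by positivity)))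
  · exact hd_at.mono fun a ha z hz => (ha z (ball_subset_ball (by linarith) hz)).hasDerivAt

end ParametricIntegrals

lemma intervalIntegral_add_mul_I_sub_intervalIntegral {E : Type*} [NormedAddCommGroup E]
    [NormedSpace ℂ E] {f : ℂ → E} {H : ℝ} (hH : 0 ≤ H) (hc : Continuous f)
    (hd : DifferentiableOn ℂ f {z | 0 < z.im}) (R : ℝ) :
    (∫ x : ℝ in -R..R, f (x + H * I)) - ∫ x : ℝ in -R..R, f x =
      I • (∫ y : ℝ in 0..H, f (R + y * I)) - I • ∫ y : ℝ in 0..H, f ((-R : ℝ) + y * I) := by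
  have hrect := Complex.integral_boundary_rect_eq_zero_of_continuousOn_of_differentiableOn f
    ((-R : ℝ) : ℂ) (R + H * I) hc.continuousOn (hd.mono fun z hz => by
      simpa [hH] using (show z.im ∈ Ioo _ _ from hz.2).1)
  simp only [Complex.ofReal_re, Complex.ofReal_im, Complex.add_re, Complex.add_im,
    Complex.mul_re, Complex.mul_im, Complex.I_re, Complex.I_im, mul_zero, mul_one, sub_zero,
    add_zero, zero_add, Complex.ofReal_zero, zero_mul] at hrect
  rw [← sub_eq_zero, ← neg_eq_zero, ← hrect]
  abel

theorem integral_add_mul_I_eq {E : Type*} [NormedAddCommGroup E] [NormedSpace ℂ E] {f : ℂ → E}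
    {H : ℝ} (hH : 0 ≤ H) (hc : Continuous f) (hd : DifferentiableOn ℂ f {z | 0 < z.im})
    {b : ℝ → ℝ} (hb_int : Integrable b) (hb_zero : Tendsto b (cocompact ℝ) (𝓝 0))
    (hb : ∀ x : ℝ, ∀ y ∈ Icc 0 H, ‖f (x + y * I)‖ ≤ b x) :
    ∫ x : ℝ, f (x + H * I) = ∫ x : ℝ, f x := by
  have hint : ∀ y ∈ Icc 0 H, Integrable fun x : ℝ => f (x + y * I) := fun y hy =>
    hb_int.mono' (Continuous.aestronglyMeasurable (by fun_prop)) (ae_of_all _ fun x => hb x y hy)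
  have hint₀ : Integrable fun x : ℝ => f x := by simpa using hint 0 (left_mem_Icc.2 hH)
  have hside : ∀ x : ℝ, ‖∫ y : ℝ in 0..H, f (x + y * I)‖ ≤ b x * H := fun x => by
    simpa [abs_of_nonneg hH] using intervalIntegral.norm_integral_le_of_norm_le_const
      (a := 0) (b := H) (f := fun y : ℝ => f (x + y * I)) (C := b x)
      fun y hy => hb x y (Ioc_subset_Icc_self (by rwa [uIoc_of_le hH] at hy))
  have hlim : Tendsto (fun R : ℝ => b R * H + b (-R) * H) atTop (𝓝 0) := by
    have hpos := (hb_zero.mono_left atTop_le_cocompact).mul_const H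
    have hneg := ((hb_zero.mono_left atBot_le_cocompact).comp tendsto_neg_atTop_atBot).mul_const H
    simpa using hpos.add hneg
  have hdiff : Tendsto (fun R : ℝ => (∫ x : ℝ in -R..R, f (x + H * I)) - ∫ x : ℝ in -R..R, f x)
      atTop (𝓝 0) := by
    refine squeeze_zero_norm (fun R => ?_) hlim
    rw [intervalIntegral_add_mul_I_sub_intervalIntegral hH hc hd]
    exact (norm_sub_le _ _).trans (add_le_add (by simpa [norm_smul] using hside R)
      (by simpa [norm_smul] using hside (-R)))
  exact sub_eq_zero.1 (tendsto_nhds_unique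
    ((intervalIntegral_tendsto_integral (hint H (right_mem_Icc.2 hH)) tendsto_neg_atTop_atBot
      tendsto_id).sub (intervalIntegral_tendsto_integral hint₀ tendsto_neg_atTop_atBot tendsto_id))
    hdiff)

section WeightedConvergence

variable {X E : Type*} [NormedAddCommGroup E] {ω : X → ℝ}

lemma tendstoLocallyUniformly_of_norm_sub_le_mul [TopologicalSpace X] {F : ℕ → X → E} {f : X → E}
    {a : ℕ → ℝ} (hω : Continuous ω) (ha : Tendsto a atTop (𝓝 0))
    (h : ∀ n x, ‖F n x - f x‖ ≤ a n * ω x) : TendstoLocallyUniformly F f atTop := by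
  rw [Metric.tendstoLocallyUniformly_iff]
  intro ε hε x
  have hω_lt : ∀ᶠ y in 𝓝 x, |ω y| < |ω x| + 1 :=
    hω.abs.continuousAt.eventually_lt continuousAt_const (lt_add_one _)
  have ha_lt : ∀ᶠ n in atTop, |a n| * (|ω x| + 1) < ε :=
    (by simpa using ha.abs.mul_const (|ω x| + 1) :
      Tendsto (fun n => |a n| * (|ω x| + 1)) atTop (𝓝 0)).eventually_lt_const hε
  refine ⟨_, hω_lt, ha_lt.mono fun n hn y (hy : |ω y| < |ω x| + 1) => ?_⟩
  rw [dist_comm, dist_eq_norm]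
  calc ‖F n y - f y‖ ≤ |a n * ω y| := (h n y).trans (le_abs_self _)
    _ ≤ |a n| * (|ω x| + 1) := by rw [abs_mul]; gcongr
    _ < ε := hn

lemma exists_norm_sub_le_of_geometric [CompleteSpace E] {F : ℕ → X → E} {q D : ℝ} (hq : q < 1)
    (hF : ∀ n x, ‖F n x - F (n + 1) x‖ ≤ D * q ^ n * ω x) :
    ∃ f : X → E, ∀ n x, ‖F n x - f x‖ ≤ D * q ^ n / (1 - q) * ω x := by
  have hdist : ∀ x n, dist (F n x) (F (n + 1) x) ≤ D * ω x * q ^ n := fun x n => by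
    rw [dist_eq_norm, mul_right_comm]
    exact hF n x
  choose f hf using fun x =>
    cauchySeq_tendsto_of_complete (cauchySeq_of_le_geometric q (D * ω x) hq (hdist x))
  refine ⟨f, fun n x => ?_⟩
  rw [← dist_eq_norm]
  refine (dist_le_of_le_geometric_of_tendsto q (D * ω x) hq (hdist x) (hf x) n).trans_eq ?_
  ring

lemma tendsto_of_norm_sub_le_mul {F : ℕ → X → E} {f : X → E} {a : ℕ → ℝ}
    (ha : Tendsto a atTop (𝓝 0)) (h : ∀ n x, ‖F n x - f x‖ ≤ a n * ω x) (x : X) :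
    Tendsto (F · x) atTop (𝓝 (f x)) :=
  tendsto_iff_norm_sub_tendsto_zero.2 (squeeze_zero (fun _ => norm_nonneg _) (h · x)
    (by simpa using ha.mul_const (ω x)))

theorem exists_fixedPoint_of_weighted_contraction [CompleteSpace E] {S : Set (X → E)}
    {Φ : (X → E) → X → E} {q D : ℝ} (hq₀ : 0 ≤ q) (hq₁ : q < 1) (hΦ : MapsTo Φ S S)
    (hcontr : ∀ f ∈ S, ∀ g ∈ S, ∀ D, (∀ x, ‖f x - g x‖ ≤ D * ω x) →
      ∀ x, ‖Φ f x - Φ g x‖ ≤ q * D * ω x)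
    (hclosed : ∀ F : ℕ → X → E, (∀ n, F n ∈ S) → ∀ (f : X → E) (a : ℕ → ℝ),
      Tendsto a atTop (𝓝 0) → (∀ n x, ‖F n x - f x‖ ≤ a n * ω x) → f ∈ S)
    {f₀ : X → E} (hf₀ : f₀ ∈ S) (hD : ∀ x, ‖f₀ x - Φ f₀ x‖ ≤ D * ω x) :
    ∃ f ∈ S, Φ f = f := by
  set F : ℕ → X → E := fun n => Φ^[n] f₀ with hF
  have hF_succ : ∀ n, F (n + 1) = Φ (F n) := fun n => Function.iterate_succ_apply' Φ n f₀
  have hF_mem : ∀ n, F n ∈ S := fun n => hΦ.iterate n hf₀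
  have hF_step : ∀ n x, ‖F n x - F (n + 1) x‖ ≤ D * q ^ n * ω x := by
    intro n
    induction n with
    | zero => simpa [hF] using hD
    | succ n ih =>
      intro x
      rw [hF_succ, hF_succ (n + 1), pow_succ', mul_left_comm, ← mul_assoc]
      simpa only [mul_assoc] using hcontr _ (hF_mem n) _ (hF_mem (n + 1)) _ ih x
  obtain ⟨f, hF_dist⟩ := exists_norm_sub_le_of_geometric hq₁ hF_step
  have ha : Tendsto (fun n => D * q ^ n / (1 - q)) atTop (𝓝 0) := by
    simpa using ((tendsto_pow_atTop_nhds_zero_of_lt_one hq₀ hq₁).const_mul D).div_const (1 - q)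
  have hf : f ∈ S := hclosed F hF_mem f _ ha hF_dist
  have hΦF_dist : ∀ n x, ‖F (n + 1) x - Φ f x‖ ≤ q * (D * q ^ n / (1 - q)) * ω x := fun n => by
    rw [hF_succ]
    exact hcontr _ (hF_mem n) _ hf _ (hF_dist n)
  refine ⟨f, hf, funext fun x => tendsto_nhds_unique
    (tendsto_of_norm_sub_le_mul (by simpa using ha.const_mul q) hΦF_dist x)
    ((tendsto_of_norm_sub_le_mul ha hF_dist x).comp (tendsto_add_atTop_nat 1))⟩

end WeightedConvergence

section Weight

/-- The retraction of `ℂ` onto the closed upper half plane along vertical lines. Precomposing with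
it lets functions that matter only on the closed upper half plane be total functions on `ℂ`. -/
noncomputable def upperClamp (z : ℂ) : ℂ := z.re + z.im⁺ * I

@[simp] lemma upperClamp_re (z : ℂ) : (upperClamp z).re = z.re := by simp [upperClamp]

@[simp] lemma upperClamp_im (z : ℂ) : (upperClamp z).im = z.im⁺ := by simp [upperClamp]

lemma upperClamp_of_im_nonneg {z : ℂ} (hz : 0 ≤ z.im) : upperClamp z = z :=
  Complex.ext (by simp) (by simp [hz])

@[simp] lemma upperClamp_ofReal (x : ℝ) : upperClamp x = x := upperClamp_of_im_nonneg (by simp)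

@[fun_prop] lemma continuous_upperClamp : Continuous upperClamp := by unfold upperClamp; fun_prop

lemma norm_upperClamp_le (z : ℂ) : ‖upperClamp z‖ ≤ |z.re| + z.im⁺ := by
  simpa [abs_of_nonneg (posPart_nonneg z.im)] using
    Complex.norm_le_abs_re_add_abs_im (upperClamp z)

/-- The Cauchy–Kovalevskaya type weight: the space of functions bounded by `weight t` shrinks as
time decreases, which pays for the derivative in the nonlinearity. -/
noncomputable def weight (t : ℝ) (z : ℂ) : ℝ :=
  Real.exp (2 * z.im⁺ ^ 2 - 2 * |z.re| + t * (z.im⁺ ^ 3 + z.im⁺ + |z.re|)) * (1 + z.re ^ 2)⁻¹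

/-- The growth in the height `y` that `weight t` allows for times `t ≤ 1`. -/
noncomputable def heightGrowth (y : ℝ) : ℝ := Real.exp (2 * y ^ 2 + y ^ 3 + y)

lemma weight_pos (t : ℝ) (z : ℂ) : 0 < weight t z := by unfold weight; positivity

lemma continuous_weight : Continuous (Function.uncurry weight) := by
  unfold weight Function.uncurry
  fun_prop (disch := intro p; positivity)

@[simp] lemma weight_upperClamp (t : ℝ) (z : ℂ) : weight t (upperClamp z) = weight t z := by
  simp [weight]

lemma heightGrowth_pos (y : ℝ) : 0 < heightGrowth y := Real.exp_pos _

@[simp] lemma heightGrowth_zero : heightGrowth 0 = 1 := by simp [heightGrowth]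

lemma heightGrowth_le_heightGrowth {x y : ℝ} (hx : 0 ≤ x) (hxy : x ≤ y) :
    heightGrowth x ≤ heightGrowth y := by
  unfold heightGrowth
  gcongr

variable {t : ℝ}

lemma weight_le (ht : t ≤ 1) (z : ℂ) :
    weight t z ≤ heightGrowth z.im⁺ * (Real.exp (-|z.re|) * (1 + z.re ^ 2)⁻¹) := by
  unfold weight heightGrowth
  rw [← mul_assoc, ← Real.exp_add]
  refine mul_le_mul_of_nonneg_right (Real.exp_le_exp.2 ?_) (by positivity)
  linarith [mul_le_of_le_one_left (by positivity : 0 ≤ z.im⁺ ^ 3 + z.im⁺ + |z.re|) ht]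

lemma weight_le_inv_one_add_sq (ht : t ≤ 1) (z : ℂ) :
    weight t z ≤ heightGrowth z.im⁺ * (1 + z.re ^ 2)⁻¹ := by
  refine (weight_le ht z).trans ?_
  have := (heightGrowth_pos z.im⁺).le
  gcongr
  exact mul_le_of_le_one_left (by positivity) (by simp)

lemma weight_le_heightGrowth (ht : t ≤ 1) (z : ℂ) : weight t z ≤ heightGrowth z.im⁺ :=
  (weight_le_inv_one_add_sq ht z).trans
    (mul_le_of_le_one_right (heightGrowth_pos _).le (inv_le_one_of_one_le₀ (by nlinarith)))

lemma abs_mul_weight_ofReal_le (ht : t ≤ 1) (x : ℝ) : |x| * weight t x ≤ Real.exp (-|x|) := by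
  have hx : |x| * (1 + x ^ 2)⁻¹ ≤ 1 := by
    rw [← div_eq_mul_inv, div_le_one (by positivity), ← sq_abs]
    nlinarith [sq_nonneg (|x| - 1)]
  calc |x| * weight t x ≤ |x| * (Real.exp (-|x|) * (1 + x ^ 2)⁻¹) := by
        gcongr
        simpa using weight_le ht x
    _ = Real.exp (-|x|) * (|x| * (1 + x ^ 2)⁻¹) := by ring
    _ ≤ Real.exp (-|x|) := mul_le_of_le_one_right (by positivity) hx

/-- The kernel comparing a product of Cauchy weights at `r` and `x - r` with the one at `x`. -/
noncomputable def splitKernel (x r : ℝ) : ℝ := 2 * (1 + r ^ 2)⁻¹ + 2 * (1 + (x - r) ^ 2)⁻¹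

lemma integrable_splitKernel (x : ℝ) : Integrable (splitKernel x) :=
  (integrable_inv_one_add_sq.const_mul 2).add
    ((integrable_inv_one_add_sq.comp_sub_left x).const_mul 2)

lemma integral_splitKernel (x : ℝ) : ∫ r, splitKernel x r = 4 * π := by
  unfold splitKernel
  rw [integral_add (integrable_inv_one_add_sq.const_mul 2)
    ((integrable_inv_one_add_sq.comp_sub_left x).const_mul 2), integral_const_mul,
    integral_const_mul, integral_sub_left_eq_self (fun r : ℝ => (1 + r ^ 2)⁻¹) volume x,
    integral_univ_inv_one_add_sq]
  ring

lemma inv_one_add_sq_mul_inv_one_add_sq_le (x r : ℝ) :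
    (1 + r ^ 2)⁻¹ * (1 + (x - r) ^ 2)⁻¹ ≤ (1 + x ^ 2)⁻¹ * splitKernel x r := by
  have hsplit : splitKernel x r =
      (2 * (1 + (x - r) ^ 2) + 2 * (1 + r ^ 2)) / ((1 + r ^ 2) * (1 + (x - r) ^ 2)) := by
    unfold splitKernel
    field_simp
  rw [hsplit, ← mul_inv, inv_mul_eq_div, div_div, inv_eq_one_div,
    div_le_div_iff₀ (by positivity) (by positivity), one_mul, mul_comm (_ * _) (1 + x ^ 2)]
  exact mul_le_mul_of_nonneg_right (by nlinarith [sq_nonneg (x - 2 * r)]) (by positivity)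

lemma weight_mul_weight_sub_le (ht : t ≤ 2) (z : ℂ) (r : ℝ) :
    weight t r * weight t (z - r) ≤ weight t z * splitKernel z.re r := by
  have habs : |z.re| ≤ |r| + |z.re - r| := by simpa using abs_add_le r (z.re - r)
  have hexp : Real.exp (-2 * |r| + t * |r|) * Real.exp (2 * z.im⁺ ^ 2 - 2 * |z.re - r| +
      t * (z.im⁺ ^ 3 + z.im⁺ + |z.re - r|)) ≤
      Real.exp (2 * z.im⁺ ^ 2 - 2 * |z.re| + t * (z.im⁺ ^ 3 + z.im⁺ + |z.re|)) := by
    rw [← Real.exp_add, Real.exp_le_exp]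
    nlinarith [mul_le_mul_of_nonneg_right habs (by linarith : 0 ≤ 2 - t)]
  calc weight t r * weight t (z - r) = Real.exp (-2 * |r| + t * |r|) *
        Real.exp (2 * z.im⁺ ^ 2 - 2 * |z.re - r| + t * (z.im⁺ ^ 3 + z.im⁺ + |z.re - r|)) *
        ((1 + r ^ 2)⁻¹ * (1 + (z.re - r) ^ 2)⁻¹) := by simp [weight]; ring
    _ ≤ Real.exp (2 * z.im⁺ ^ 2 - 2 * |z.re| + t * (z.im⁺ ^ 3 + z.im⁺ + |z.re|)) *
        ((1 + z.re ^ 2)⁻¹ * splitKernel z.re r) :=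
      mul_le_mul hexp (inv_one_add_sq_mul_inv_one_add_sq_le z.re r) (by positivity)
        (by positivity)
    _ = weight t z * splitKernel z.re r := by rw [weight, mul_assoc]

end Weight

section Convolution

/-- `‖f z‖ ≤ A * weight t z` for all `z`: membership of `f` in the ball of radius `A` of the
weighted space at time `t`. -/
def WeightBounded (A t : ℝ) (f : ℂ → ℂ) : Prop := ∀ z, ‖f z‖ ≤ A * weight t z

/-- Convolution along the real line, `∫ f r g (z - r) dr`. On the Fourier side it implements
multiplication of functions of `x`. -/
noncomputable def lineConv (f g : ℂ → ℂ) (z : ℂ) : ℂ := ∫ r : ℝ, f r * g (z - r)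

/-- The `(n + 1)`-fold convolution power `f ∗ ⋯ ∗ f`, so that `convPow f 0 = f`. -/
noncomputable def convPow (f : ℂ → ℂ) : ℕ → ℂ → ℂ
  | 0 => f
  | n + 1 => lineConv f (convPow f n)

namespace WeightBounded

variable {A B t : ℝ} {f g : ℂ → ℂ}

lemma nonneg (hf : WeightBounded A t f) : 0 ≤ A :=
  nonneg_of_mul_nonneg_left ((norm_nonneg _).trans (hf 0)) (weight_pos t 0)

lemma mono (hf : WeightBounded A t f) (hAB : A ≤ B) : WeightBounded B t f := fun z =>
  (hf z).trans (mul_le_mul_of_nonneg_right hAB (weight_pos t z).le)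

lemma add (hf : WeightBounded A t f) (hg : WeightBounded B t g) :
    WeightBounded (A + B) t fun z => f z + g z := fun z =>
  (norm_add_le_of_le (hf z) (hg z)).trans (add_mul _ _ _).ge

lemma sub (hf : WeightBounded A t f) (hg : WeightBounded B t g) :
    WeightBounded (A + B) t fun z => f z - g z := fun z =>
  (norm_sub_le_of_le (hf z) (hg z)).trans (add_mul _ _ _).ge

lemma const_mul (hf : WeightBounded A t f) (c : ℂ) :
    WeightBounded (‖c‖ * A) t fun z => c * f z := fun z => by
  rw [norm_mul, mul_assoc]
  exact mul_le_mul_of_nonneg_left (hf z) (norm_nonneg c)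

lemma norm_ofReal_le (ht : t ≤ 1) (hf : WeightBounded A t f) (x : ℝ) :
    ‖f x‖ ≤ A * Real.exp (-|x|) := by
  refine (hf x).trans (mul_le_mul_of_nonneg_left ((weight_le ht x).trans ?_) hf.nonneg)
  simpa using mul_le_of_le_one_right (Real.exp_pos (-|x|)).le
    (inv_le_one_of_one_le₀ (by nlinarith : 1 ≤ 1 + x ^ 2))

lemma abs_mul_norm_ofReal_le (ht : t ≤ 1) (hf : WeightBounded A t f) (x : ℝ) :
    |x| * ‖f x‖ ≤ A * Real.exp (-|x|) :=
  calc |x| * ‖f x‖ ≤ |x| * (A * weight t x) := by gcongr; exact hf x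
    _ = A * (|x| * weight t x) := by ring
    _ ≤ A * Real.exp (-|x|) :=
      mul_le_mul_of_nonneg_left (abs_mul_weight_ofReal_le ht x) hf.nonneg

lemma norm_mul_sub_le (ht : t ≤ 1) (hf : WeightBounded A t f) (hg : WeightBounded B t g) {H : ℝ}
    {z : ℂ} (hz : z.im⁺ ≤ H) (r : ℝ) :
    ‖f r * g (z - r)‖ ≤ A * B * heightGrowth H * (1 + r ^ 2)⁻¹ := by
  have hA := hf.nonneg
  have hB := hg.nonneg
  have hr : weight t r ≤ (1 + r ^ 2)⁻¹ := by simpa using weight_le_inv_one_add_sq ht r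
  have hzr : weight t (z - r) ≤ heightGrowth H :=
    (weight_le_heightGrowth ht _).trans
      (heightGrowth_le_heightGrowth (posPart_nonneg _) (by simpa using hz))
  have hw := (weight_pos t (z - r)).le
  calc ‖f r * g (z - r)‖ ≤ (A * weight t r) * (B * weight t (z - r)) :=
        norm_mul_le_of_le (hf _) (hg _)
    _ ≤ (A * (1 + r ^ 2)⁻¹) * (B * heightGrowth H) := by gcongr
    _ = _ := by ring

protected lemma lineConv (ht : t ≤ 2) (hf : WeightBounded A t f) (hg : WeightBounded B t g) :
    WeightBounded (4 * π * A * B) t (lineConv f g) := fun z => by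
  have hAB : 0 ≤ A * B := mul_nonneg hf.nonneg hg.nonneg
  have hle : ∀ r : ℝ, ‖f r * g (z - r)‖ ≤ A * B * weight t z * splitKernel z.re r := fun r =>
    calc ‖f r * g (z - r)‖ ≤ (A * weight t r) * (B * weight t (z - r)) :=
          norm_mul_le_of_le (hf _) (hg _)
      _ = A * B * (weight t r * weight t (z - r)) := by ring
      _ ≤ A * B * (weight t z * splitKernel z.re r) :=
          mul_le_mul_of_nonneg_left (weight_mul_weight_sub_le ht z r) hAB
      _ = _ := by ring
  refine (norm_integral_le_of_norm_le ((integrable_splitKernel z.re).const_mul _)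
    (ae_of_all _ hle)).trans_eq ?_
  rw [integral_const_mul, integral_splitKernel]
  ring

lemma integrable_mul_sub (ht : t ≤ 1) (hf : WeightBounded A t f) (hg : WeightBounded B t g)
    (hfc : Continuous f) (hgc : Continuous g) (z : ℂ) :
    Integrable fun r : ℝ => f r * g (z - r) :=
  (integrable_inv_one_add_sq.const_mul _).mono'
    (Continuous.aestronglyMeasurable (by fun_prop)) (ae_of_all _ (hf.norm_mul_sub_le ht hg le_rfl))

end WeightBounded

end Convolution

section Admissible

lemma isOpen_im_pos : IsOpen {z : ℂ | 0 < z.im} := isOpen_lt continuous_const Complex.continuous_im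

lemma eventually_posPart_im_lt_add_one (z₀ : ℂ) : ∀ᶠ z in 𝓝 z₀, z.im⁺ < z₀.im⁺ + 1 :=
  ContinuousAt.eventually_lt (by fun_prop) continuousAt_const (lt_add_one _)

/-- The ball of radius `A` in the space in which the Fourier profile of the solution is sought. The
condition `f t (-x) = conj (f t x)` on the real line makes the synthesized function real-valued. -/
structure Admissible (A : ℝ) (f : unitInterval → ℂ → ℂ) : Prop where
  continuous_uncurry : Continuous (Function.uncurry f)
  weightBounded : ∀ t : unitInterval, WeightBounded A t (f t)
  differentiableOn : ∀ t, DifferentiableOn ℂ (f t) {z | 0 < z.im}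
  apply_neg_ofReal : ∀ t (x : ℝ), f t (-x) = conj (f t x)

namespace Admissible

variable {A B : ℝ} {f g : unitInterval → ℂ → ℂ}

lemma continuous_comp {X : Type*} [TopologicalSpace X] {t : X → unitInterval} {z : X → ℂ}
    (hf : Admissible A f) (ht : Continuous t) (hz : Continuous z) :
    Continuous fun x => f (t x) (z x) :=
  hf.continuous_uncurry.comp₂ ht hz

protected lemma continuous (hf : Admissible A f) (t : unitInterval) : Continuous (f t) :=
  hf.continuous_comp continuous_const continuous_id

lemma nonneg (hf : Admissible A f) : 0 ≤ A := (hf.weightBounded 0).nonneg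

lemma mono (hf : Admissible A f) (hAB : A ≤ B) : Admissible B f :=
  { hf with weightBounded := fun t => (hf.weightBounded t).mono hAB }

lemma sub (hf : Admissible A f) (hg : Admissible B g) :
    Admissible (A + B) fun t z => f t z - g t z where
  continuous_uncurry := hf.continuous_uncurry.sub hg.continuous_uncurry
  weightBounded t := (hf.weightBounded t).sub (hg.weightBounded t)
  differentiableOn t := (hf.differentiableOn t).sub (hg.differentiableOn t)
  apply_neg_ofReal t x := by rw [hf.apply_neg_ofReal, hg.apply_neg_ofReal, map_sub]

lemma const_mul (hf : Admissible A f) (c : ℝ) : Admissible (|c| * A) fun t z => c * f t z where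
  continuous_uncurry := continuous_const.mul hf.continuous_uncurry
  weightBounded t := by simpa using (hf.weightBounded t).const_mul c
  differentiableOn t := (hf.differentiableOn t).const_mul _
  apply_neg_ofReal t x := by rw [hf.apply_neg_ofReal, map_mul, Complex.conj_ofReal]

lemma zero (hA : 0 ≤ A) : Admissible A fun _ _ => 0 where
  continuous_uncurry := continuous_const
  weightBounded t z := by simpa using mul_nonneg hA (weight_pos t z).le
  differentiableOn _ := differentiableOn_const _
  apply_neg_ofReal _ _ := (map_zero _).symm

lemma of_tendsto {F : ℕ → unitInterval → ℂ → ℂ} (hF : ∀ n, Admissible A (F n)) {a : ℕ → ℝ}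
    (ha : Tendsto a atTop (𝓝 0))
    (h : ∀ n (t : unitInterval) z, ‖F n t z - f t z‖ ≤ a n * weight t z) : Admissible A f := by
  have hlim : ∀ t z, Tendsto (fun n => F n t z) atTop (𝓝 (f t z)) := fun t =>
    tendsto_of_norm_sub_le_mul ha (h · t)
  have hweight : Continuous fun p : unitInterval × ℂ => weight p.1 p.2 :=
    continuous_weight.comp₂ (continuous_subtype_val.comp continuous_fst) continuous_snd
  refine ⟨?_, fun t z => ?_, fun t => ?_, fun t x => ?_⟩
  · exact (tendstoLocallyUniformly_of_norm_sub_le_mul hweight ha fun n p => h n p.1 p.2).continuous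
      (Frequently.of_forall fun n => (hF n).continuous_uncurry)
  · exact le_of_tendsto (hlim t z).norm (Eventually.of_forall fun n => (hF n).weightBounded t z)
  · exact (tendstoLocallyUniformly_of_norm_sub_le_mul (hweight.comp₂
      continuous_const continuous_id) ha
      (h · t)).tendstoLocallyUniformlyOn.differentiableOn
      (Eventually.of_forall fun n => (hF n).differentiableOn t) isOpen_im_pos
  · have hconj : Tendsto (fun n => F n t (-x)) atTop (𝓝 (conj (f t x))) := by
      simp_rw [(hF _).apply_neg_ofReal]
      exact (Complex.continuous_conj.tendsto _).comp (hlim t x)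
    exact tendsto_nhds_unique (hlim t (-x)) hconj

lemma integrable_mul_sub (hf : Admissible A f) (hg : Admissible B g) (t : unitInterval) (z : ℂ) :
    Integrable fun r : ℝ => f t r * g t (z - r) :=
  (hf.weightBounded t).integrable_mul_sub t.2.2 (hg.weightBounded t) (hf.continuous t)
    (hg.continuous t) z

lemma continuous_lineConv (hf : Admissible A f) (hg : Admissible B g) :
    Continuous fun p : unitInterval × ℂ => lineConv (f p.1) (g p.1) p.2 := by
  unfold lineConv
  refine continuous_iff_continuousAt.2 fun p₀ => continuousAt_of_dominated
    (bound := fun r => A * B * heightGrowth (p₀.2.im⁺ + 1) * (1 + r ^ 2)⁻¹) ?_ ?_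
    (integrable_inv_one_add_sq.const_mul _) (ae_of_all _ fun r => ?_)
  · exact Eventually.of_forall fun p => (hf.integrable_mul_sub hg p.1 p.2).aestronglyMeasurable
  · filter_upwards [continuousAt_snd.eventually (eventually_posPart_im_lt_add_one p₀.2)] with p hp
    exact ae_of_all _ fun r =>
      (hf.weightBounded p.1).norm_mul_sub_le p.1.2.2 (hg.weightBounded p.1) hp.le r
  · exact ((hf.continuous_comp continuous_fst continuous_const).mul
      (hg.continuous_comp continuous_fst (by fun_prop))).continuousAt

lemma differentiableOn_lineConv (hf : Admissible A f) (hg : Admissible B g) (t : unitInterval) :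
    DifferentiableOn ℂ (lineConv (f t) (g t)) {z | 0 < z.im} := by
  refine differentiableOn_integral_of_locally_dominated (F := fun z (r : ℝ) => f t r * g t (z - r))
    isOpen_im_pos (fun z => ?_)
    (ae_of_all _ fun r => ?_) fun z₀ _ => ⟨_, eventually_posPart_im_lt_add_one z₀,
      fun r => A * B * heightGrowth (z₀.im⁺ + 1) * (1 + r ^ 2)⁻¹,
      integrable_inv_one_add_sq.const_mul _, ae_of_all _ fun r z hz => ?_⟩
  · exact (hf.integrable_mul_sub hg t z).aestronglyMeasurable
  · exact ((hg.differentiableOn t).comp (f := fun z : ℂ => z - r) (by fun_prop)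
      fun z hz => by simpa using hz).const_mul _
  · exact (hf.weightBounded t).norm_mul_sub_le t.2.2 (hg.weightBounded t) (le_of_lt hz) r

protected lemma lineConv (hf : Admissible A f) (hg : Admissible B g) :
    Admissible (4 * π * A * B) fun t => lineConv (f t) (g t) where
  continuous_uncurry := hf.continuous_lineConv hg
  weightBounded t := (hf.weightBounded t).lineConv (t.2.2.trans one_le_two) (hg.weightBounded t)
  differentiableOn := hf.differentiableOn_lineConv hg
  apply_neg_ofReal t x := by
    have hneg : ∀ r : ℝ, f t ((-r : ℝ) : ℂ) * g t (-x - (-r : ℝ)) = conj (f t r * g t (x - r)) :=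
      fun r => by
        have hg_neg := hg.apply_neg_ofReal t (x - r)
        push_cast at hg_neg ⊢
        rw [hf.apply_neg_ofReal, map_mul, ← hg_neg, neg_sub, neg_sub_neg]
    unfold lineConv
    rw [← integral_conj, ← integral_neg_eq_self]
    simp_rw [hneg]

protected lemma convPow (hf : Admissible A f) (n : ℕ) :
    Admissible ((4 * π) ^ n * A ^ (n + 1)) fun t => convPow (f t) n := by
  induction n with
  | zero => simpa using! hf
  | succ n ih =>
    refine (hf.lineConv ih).mono (le_of_eq ?_)
    ring

lemma lineConv_sub_lineConv {A' B' : ℝ} {f' g' : unitInterval → ℂ → ℂ} (hf : Admissible A f)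
    (hf' : Admissible A' f') (hg : Admissible B g) (hg' : Admissible B' g') (t : unitInterval)
    (z : ℂ) :
    lineConv (f t) (f' t) z - lineConv (g t) (g' t) z =
      lineConv (fun z => f t z - g t z) (f' t) z + lineConv (g t) (fun z => f' t z - g' t z) z := by
  unfold lineConv
  rw [← integral_sub (hf.integrable_mul_sub hf' t z) (hg.integrable_mul_sub hg' t z),
    ← integral_add ((hf.sub hg).integrable_mul_sub hf' t z)
      (hg.integrable_mul_sub (hf'.sub hg') t z)]
  congr with r
  ring

lemma convPow_sub (hf : Admissible A f) (hg : Admissible A g) {t : unitInterval} {D : ℝ}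
    (hfg : WeightBounded D t fun z => f t z - g t z) (n : ℕ) :
    WeightBounded ((n + 1) * (4 * π) ^ n * A ^ n * D) t
      fun z => convPow (f t) n z - convPow (g t) n z := by
  induction n with
  | zero => simpa using! hfg
  | succ n ih =>
    have hfn := hf.convPow n
    have hgn := hg.convPow n
    have ht : (t : ℝ) ≤ 2 := t.2.2.trans one_le_two
    simp_rw [convPow, hf.lineConv_sub_lineConv hfn hg hgn]
    refine ((hfg.lineConv ht (hfn.weightBounded t)).add
      ((hg.weightBounded t).lineConv ht ih)).mono (le_of_eq ?_)
    push_cast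
    ring

end Admissible

end Admissible

section Duhamel

/-- The Fourier multiplier `exp (i t z³)` of the linear group `exp (-t ∂ₓ³)`, extended to complex
frequencies. -/
noncomputable def airy (t : ℝ) (z : ℂ) : ℂ := Complex.exp (I * t * z ^ 3)

@[fun_prop] lemma continuous_airy : Continuous (Function.uncurry airy) := by
  unfold airy Function.uncurry
  fun_prop

lemma differentiable_airy (t : ℝ) : Differentiable ℂ (airy t) := by unfold airy; fun_prop

lemma airy_add (s t : ℝ) (z : ℂ) : airy (s + t) z = airy s z * airy t z := by
  unfold airy
  rw [← Complex.exp_add]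
  push_cast
  ring_nf

@[simp] lemma airy_zero (z : ℂ) : airy 0 z = 1 := by simp [airy]

lemma norm_airy_le {t : ℝ} (ht : 0 ≤ t) {z : ℂ} (hz : 0 ≤ z.im) :
    ‖airy t z‖ ≤ Real.exp (t * z.im ^ 3) := by
  have hre : (I * t * z ^ 3).re = t * (z.im ^ 3 - 3 * z.re ^ 2 * z.im) := by
    simp [pow_succ, Complex.mul_re, Complex.mul_im]
    ring
  rw [airy, Complex.norm_exp, hre]
  gcongr
  exact sub_le_self _ (by positivity)

@[simp] lemma norm_airy_ofReal (t x : ℝ) : ‖airy t x‖ = 1 := by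
  rw [airy, mul_assoc]
  exact_mod_cast Complex.norm_exp_I_mul_ofReal (t * x ^ (3 : ℕ))

lemma airy_neg_ofReal (t x : ℝ) : airy t (-x) = conj (airy t x) := by
  unfold airy
  rw [← Complex.exp_conj]
  simp only [map_mul, map_pow, Complex.conj_I, Complex.conj_ofReal]
  ring_nf

lemma hasDerivAt_airy (t : ℝ) (z : ℂ) :
    HasDerivAt (fun t => airy t z) (I * z ^ 3 * airy t z) t := by
  have hlin : HasDerivAt (fun s : ℝ => I * (s : ℂ) * z ^ 3) (I * 1 * z ^ 3) t :=
    ((hasDerivAt_id t).ofReal_comp.const_mul I).mul_const (z ^ 3)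
  exact hlin.cexp.congr_deriv (by rw [airy]; ring)

/-- The time-`s` forcing `∂ₓ(g s)`, propagated to time `t`, on the Fourier side. The profile `g` is
frozen outside `[0, 1]`, so that the formula makes sense for all real times. -/
noncomputable def propagatedForcing (g : unitInterval → ℂ → ℂ) (t : ℝ) (z : ℂ) (s : ℝ) : ℂ :=
  airy (t - s) (upperClamp z) *
    (I * upperClamp z * g (projIcc 0 1 zero_le_one s) (upperClamp z))

/-- The Duhamel integral of the forcing `∂ₓg` on the Fourier side. -/
noncomputable def duhamel (g : unitInterval → ℂ → ℂ) (t : ℝ) (z : ℂ) : ℂ :=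
  ∫ s in 0..t, propagatedForcing g t z s

lemma propagatedForcing_eq_airy_mul (g : unitInterval → ℂ → ℂ) (t : ℝ) (z : ℂ) (s : ℝ) :
    propagatedForcing g t z s = airy t (upperClamp z) * propagatedForcing g 0 z s := by
  unfold propagatedForcing
  rw [sub_eq_add_neg, airy_add, mul_assoc, zero_sub]

lemma duhamel_eq_airy_mul (g : unitInterval → ℂ → ℂ) (z : ℂ) (t : ℝ) :
    duhamel g t z = airy t (upperClamp z) * ∫ s in 0..t, propagatedForcing g 0 z s := by
  unfold duhamel
  simp_rw [propagatedForcing_eq_airy_mul g t z]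
  exact intervalIntegral.integral_const_mul _ _

section Continuous

variable {f g : unitInterval → ℂ → ℂ} (hf : Continuous (Function.uncurry f))
  (hg : Continuous (Function.uncurry g))

include hg

lemma continuous_propagatedForcing {X : Type*} [TopologicalSpace X] {t s : X → ℝ} {z : X → ℂ}
    (ht : Continuous t) (hz : Continuous z) (hs : Continuous s) :
    Continuous fun x => propagatedForcing g (t x) (z x) (s x) := by
  have hζ : Continuous fun x => upperClamp (z x) := continuous_upperClamp.comp hz
  have hτ : Continuous fun x => projIcc (0 : ℝ) 1 zero_le_one (s x) := continuous_projIcc.comp hs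
  exact (continuous_airy.comp₂ (ht.sub hs) hζ).mul
    ((continuous_const.mul hζ).mul (hg.comp₂ hτ hζ))

lemma continuous_duhamel : Continuous (Function.uncurry (duhamel g)) :=
  intervalIntegral.continuous_parametric_intervalIntegral_of_continuous
    (continuous_propagatedForcing hg (continuous_fst.comp continuous_fst)
      (continuous_snd.comp continuous_fst) continuous_snd) continuous_fst

lemma continuous_propagatedForcing_time (t : ℝ) (z : ℂ) : Continuous (propagatedForcing g t z) :=
  continuous_propagatedForcing hg continuous_const continuous_const continuous_id

include hf in
lemma duhamel_sub (t : ℝ) (z : ℂ) :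
    duhamel (fun s z => f s z - g s z) t z = duhamel f t z - duhamel g t z := by
  unfold duhamel
  rw [← intervalIntegral.integral_sub
    ((continuous_propagatedForcing_time hf t z).intervalIntegrable _ _)
    ((continuous_propagatedForcing_time hg t z).intervalIntegrable _ _)]
  simp only [propagatedForcing, mul_sub]

lemma hasDerivAt_duhamel (t : ℝ) (z : ℂ) :
    HasDerivAt (fun t => duhamel g t z) (I * upperClamp z ^ 3 * duhamel g t z +
      I * upperClamp z * g (projIcc 0 1 zero_le_one t) (upperClamp z)) t := by
  set ζ := upperClamp z
  have hfactor : ∀ t, duhamel g t z = airy t ζ * ∫ s in 0..t, propagatedForcing g 0 z s :=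
    duhamel_eq_airy_mul g z
  have hprod := (hasDerivAt_airy t ζ).mul
    ((continuous_propagatedForcing_time hg 0 z).integral_hasStrictDerivAt 0 t).hasDerivAt
  refine (hprod.congr_of_eventuallyEq (Eventually.of_forall hfactor)).congr_deriv ?_
  rw [hfactor, ← propagatedForcing_eq_airy_mul]
  simp only [propagatedForcing, sub_self, airy_zero, one_mul]
  ring

end Continuous

lemma integral_mul_exp_neg_sub_mul (a t : ℝ) :
    ∫ s in 0..t, a * Real.exp (-((t - s) * a)) = 1 - Real.exp (-(t * a)) := by
  have hderiv : ∀ s ∈ uIcc 0 t,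
      HasDerivAt (fun s => Real.exp (-((t - s) * a))) (a * Real.exp (-((t - s) * a))) s :=
    fun s _ => (((hasDerivAt_id s).const_sub t).mul_const a).neg.exp.congr_deriv (by simp; ring)
  rw [intervalIntegral.integral_eq_sub_of_hasDerivAt hderiv
    (Continuous.intervalIntegrable (by fun_prop) _ _)]
  simp

lemma exp_mul_weight (s t : ℝ) (z : ℂ) :
    Real.exp ((t - s) * z.im⁺ ^ 3) * weight s z =
      weight t z * Real.exp (-((t - s) * (|z.re| + z.im⁺))) := by
  unfold weight
  rw [← mul_assoc, mul_right_comm (Real.exp _) _ (Real.exp _), ← Real.exp_add, ← Real.exp_add]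
  ring_nf

variable {B : ℝ} {g : unitInterval → ℂ → ℂ}

lemma norm_propagatedForcing_le (hg : ∀ s : unitInterval, WeightBounded B s (g s)) {s t : ℝ}
    (hs : s ∈ Icc 0 1) (hst : s ≤ t) (z : ℂ) :
    ‖propagatedForcing g t z s‖ ≤ B * weight t z *
      ((|z.re| + z.im⁺) * Real.exp (-((t - s) * (|z.re| + z.im⁺)))) := by
  have hairy : ‖airy (t - s) (upperClamp z)‖ ≤ Real.exp ((t - s) * z.im⁺ ^ 3) := by
    simpa using norm_airy_le (sub_nonneg.2 hst) (z := upperClamp z) (by simp [posPart_nonneg])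
  have hgs : ‖g ⟨s, hs⟩ (upperClamp z)‖ ≤ B * weight s z := by
    simpa using hg ⟨s, hs⟩ (upperClamp z)
  rw [propagatedForcing, projIcc_of_mem zero_le_one hs, norm_mul, norm_mul, norm_mul,
    Complex.norm_I, one_mul]
  calc ‖airy (t - s) (upperClamp z)‖ * (‖upperClamp z‖ * ‖g ⟨s, hs⟩ (upperClamp z)‖)
      ≤ Real.exp ((t - s) * z.im⁺ ^ 3) * ((|z.re| + z.im⁺) * (B * weight s z)) := by
        gcongr
        exact norm_upperClamp_le z
    _ = B * (|z.re| + z.im⁺) * (Real.exp ((t - s) * z.im⁺ ^ 3) * weight s z) := by ring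
    _ = _ := by rw [exp_mul_weight]; ring

protected lemma WeightBounded.duhamel (hg : ∀ s : unitInterval, WeightBounded B s (g s))
    (t : unitInterval) : WeightBounded B t (GKdV.duhamel g t) := fun z => by
  have hBw : 0 ≤ B * weight t z := mul_nonneg (hg 0).nonneg (weight_pos _ _).le
  refine (intervalIntegral.norm_integral_le_of_norm_le t.2.1 (ae_of_all _ fun s hs =>
    norm_propagatedForcing_le hg ⟨hs.1.le, hs.2.trans t.2.2⟩ hs.2 z)
    (Continuous.intervalIntegrable (by fun_prop) _ _)).trans ?_
  rw [intervalIntegral.integral_const_mul, integral_mul_exp_neg_sub_mul]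
  exact mul_le_of_le_one_right hBw (sub_le_self _ (Real.exp_pos _).le)

lemma norm_duhamel_ofReal_le (hg : ∀ s : unitInterval, WeightBounded B s (g s)) (t ξ : ℝ) :
    ‖duhamel g t ξ‖ ≤ B * Real.exp (-|ξ|) * |t| := by
  have hforcing : ∀ s ∈ uIoc 0 t, ‖propagatedForcing g t ξ s‖ ≤ B * Real.exp (-|ξ|) := by
    intro s _
    set τ := projIcc (0 : ℝ) 1 zero_le_one s
    rw [propagatedForcing, upperClamp_ofReal, norm_mul, norm_mul, norm_mul, norm_airy_ofReal,
      Complex.norm_I, one_mul, one_mul, Complex.norm_real, Real.norm_eq_abs]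
    exact (hg τ).abs_mul_norm_ofReal_le τ.2.2 ξ
  simpa [duhamel] using intervalIntegral.norm_integral_le_of_norm_le_const hforcing

lemma Admissible.differentiableOn_duhamel (hg : Admissible B g) (t : unitInterval) :
    DifferentiableOn ℂ (GKdV.duhamel g t) {z | 0 < z.im} := by
  have hc : Continuous fun p : ℂ × ℝ => propagatedForcing g t p.1 p.2 :=
    continuous_propagatedForcing hg.continuous_uncurry continuous_const continuous_fst
      continuous_snd
  unfold GKdV.duhamel
  simp_rw [intervalIntegral.integral_of_le t.2.1]
  refine differentiableOn_integral_of_locally_dominated isOpen_im_pos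
    (fun z =>
      (continuous_propagatedForcing_time hg.continuous_uncurry _ _).aestronglyMeasurable)
    (ae_of_all _ fun s => ?_) fun z₀ _ => ?_
  · have hd : DifferentiableOn ℂ (fun z =>
        airy (t - s) z * (I * z * g (projIcc 0 1 zero_le_one s) z)) {z | 0 < z.im} :=
      (differentiable_airy _).differentiableOn.mul
        (DifferentiableOn.mul (by fun_prop) (hg.differentiableOn _))
    exact hd.congr fun z hz => by rw [propagatedForcing, upperClamp_of_im_nonneg (le_of_lt hz)]
  · obtain ⟨C, hC⟩ := ((isCompact_closedBall z₀ 1).prod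
      (isCompact_Icc (a := (0 : ℝ)) (b := 1))).exists_bound_of_continuousOn hc.continuousOn
    refine ⟨closedBall z₀ 1, closedBall_mem_nhds _ one_pos, fun _ => C, integrable_const _, ?_⟩
    filter_upwards [ae_restrict_mem measurableSet_Ioc] with s hs z hz
    exact hC (z, s) ⟨hz, hs.1.le, hs.2.trans t.2.2⟩

protected lemma Admissible.duhamel (hg : Admissible B g) :
    Admissible B fun t => GKdV.duhamel g t where
  continuous_uncurry := (continuous_duhamel hg.continuous_uncurry).comp₂
    (continuous_subtype_val.comp continuous_fst) continuous_snd
  weightBounded := WeightBounded.duhamel hg.weightBounded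
  differentiableOn := hg.differentiableOn_duhamel
  apply_neg_ofReal t x := by
    have hneg : ∀ s, propagatedForcing g t (-x) s = conj (propagatedForcing g t x s) := fun s => by
      rw [propagatedForcing, propagatedForcing, ← Complex.ofReal_neg, upperClamp_ofReal,
        upperClamp_ofReal, Complex.ofReal_neg, airy_neg_ofReal, hg.apply_neg_ofReal]
      simp
    rw [GKdV.duhamel, GKdV.duhamel, intervalIntegral.integral_of_le t.2.1,
      intervalIntegral.integral_of_le t.2.1, ← integral_conj]
    simp_rw [hneg]

end Duhamel

section Picard

/-- The free evolution of the profile `exp (-2 ξ²)` of a Gaussian initial datum. -/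
noncomputable def gaussianEvolution (t : ℝ) (z : ℂ) : ℂ :=
  airy t (upperClamp z) * Complex.exp (-2 * upperClamp z ^ 2)

lemma hasDerivAt_gaussianEvolution (t : ℝ) (z : ℂ) :
    HasDerivAt (fun t => gaussianEvolution t z)
      (I * upperClamp z ^ 3 * gaussianEvolution t z) t :=
  ((hasDerivAt_airy t _).mul_const _).congr_deriv (mul_assoc _ _ _)

lemma continuous_gaussianEvolution : Continuous (Function.uncurry gaussianEvolution) := by
  have hclamp : Continuous fun p : ℝ × ℂ => upperClamp p.2 := by fun_prop
  exact (continuous_airy.comp₂ continuous_fst hclamp).mul ((hclamp.pow 2).const_mul (-2)).cexp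

lemma norm_cexp_neg_two_mul_sq (z : ℂ) :
    ‖Complex.exp (-2 * z ^ 2)‖ = Real.exp (2 * z.im ^ 2 - 2 * z.re ^ 2) := by
  rw [Complex.norm_exp]
  congr 1
  simp [pow_two]
  ring

lemma norm_gaussianEvolution_ofReal_le (t ξ : ℝ) :
    ‖gaussianEvolution t ξ‖ ≤ Real.exp 1 * Real.exp (-|ξ|) := by
  rw [gaussianEvolution, upperClamp_ofReal, norm_mul, norm_airy_ofReal, one_mul,
    norm_cexp_neg_two_mul_sq, ← Real.exp_add, Complex.ofReal_im, Complex.ofReal_re]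
  gcongr
  nlinarith [sq_abs ξ, sq_nonneg (|ξ| - 1)]

lemma weightBounded_gaussianEvolution (t : unitInterval) :
    WeightBounded (Real.exp 1) t (gaussianEvolution t) := fun z => by
  have ht := t.2.1
  have hairy : ‖airy t (upperClamp z)‖ ≤ Real.exp (t * z.im⁺ ^ 3) := by
    simpa using norm_airy_le ht (z := upperClamp z) (by simp)
  have hcauchy : Real.exp (-z.re ^ 2) ≤ (1 + z.re ^ 2)⁻¹ := by
    rw [Real.exp_neg]
    exact inv_anti₀ (by positivity) (by linarith [Real.add_one_le_exp (z.re ^ 2)])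
  rw [gaussianEvolution, norm_mul, norm_cexp_neg_two_mul_sq, upperClamp_re, upperClamp_im]
  calc ‖airy t (upperClamp z)‖ * Real.exp (2 * z.im⁺ ^ 2 - 2 * z.re ^ 2)
      ≤ Real.exp (t * z.im⁺ ^ 3) * Real.exp (2 * z.im⁺ ^ 2 - 2 * z.re ^ 2) := by gcongr
    _ = Real.exp (t * z.im⁺ ^ 3 + 2 * z.im⁺ ^ 2 - z.re ^ 2) * Real.exp (-z.re ^ 2) := by
        rw [← Real.exp_add, ← Real.exp_add]
        ring_nf
    _ ≤ Real.exp (1 + (2 * z.im⁺ ^ 2 - 2 * |z.re| + t * (z.im⁺ ^ 3 + z.im⁺ + |z.re|))) *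
          (1 + z.re ^ 2)⁻¹ := by
        gcongr
        have hslack : 0 ≤ (t : ℝ) * (z.im⁺ + |z.re|) := by positivity
        nlinarith [sq_nonneg (|z.re| - 1), sq_abs z.re]
    _ = Real.exp 1 * weight t z := by rw [weight, Real.exp_add 1, mul_assoc]

lemma admissible_gaussianEvolution : Admissible (Real.exp 1) fun t => gaussianEvolution t where
  continuous_uncurry := continuous_gaussianEvolution.comp₂
    (continuous_subtype_val.comp continuous_fst) continuous_snd
  weightBounded := weightBounded_gaussianEvolution
  differentiableOn t := by
    have hd : Differentiable ℂ fun z => airy t z * Complex.exp (-2 * z ^ 2) :=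
      (differentiable_airy t).mul (by fun_prop)
    exact hd.differentiableOn.congr fun z hz => by
      rw [gaussianEvolution, upperClamp_of_im_nonneg (le_of_lt hz)]
  apply_neg_ofReal t x := by
    rw [gaussianEvolution, gaussianEvolution, ← Complex.ofReal_neg, upperClamp_ofReal,
      upperClamp_ofReal, Complex.ofReal_neg, airy_neg_ofReal, map_mul, ← Complex.exp_conj]
    simp [map_ofNat (starRingEnd ℂ) 2]

/-- The Duhamel map of `∂ₜu + ∂ₓ³u + (k + 1)⁻¹ ∂ₓ(u^(k+1)) = 0` on the Fourier side, with initial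
profile `ε exp (-2 ξ²)`. -/
noncomputable def picard (ε : ℝ) (k : ℕ) (w : unitInterval → ℂ → ℂ) (t : ℝ) (z : ℂ) : ℂ :=
  ε * gaussianEvolution t z - ((k + 1 : ℝ)⁻¹ : ℝ) * duhamel (fun s => convPow (w s) k) t z

variable {ε M : ℝ} {k : ℕ} {w v : unitInterval → ℂ → ℂ}

lemma continuous_picard (hw : Admissible M w) (t : ℝ) : Continuous (picard ε k w t) :=
  ((continuous_gaussianEvolution.comp₂ continuous_const continuous_id).const_mul _).sub
    (((continuous_duhamel (hw.convPow k).continuous_uncurry).comp₂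
      continuous_const continuous_id).const_mul _)

lemma hasDerivAt_picard (hw : Admissible M w) (t : ℝ) (z : ℂ) :
    HasDerivAt (fun t => picard ε k w t z) (I * upperClamp z ^ 3 * picard ε k w t z -
      ((k + 1 : ℝ)⁻¹ : ℝ) * (I * upperClamp z *
        convPow (w (projIcc 0 1 zero_le_one t)) k (upperClamp z))) t := by
  refine (((hasDerivAt_gaussianEvolution t z).const_mul _).sub
    ((hasDerivAt_duhamel (hw.convPow k).continuous_uncurry t z).const_mul _)).congr_deriv ?_
  rw [picard]
  ring

lemma norm_picard_ofReal_le (hw : Admissible M w) (t ξ : ℝ) :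
    ‖picard ε k w t ξ‖ ≤ (|ε| * Real.exp 1 +
      (k + 1 : ℝ)⁻¹ * ((4 * π) ^ k * M ^ (k + 1)) * |t|) * Real.exp (-|ξ|) := by
  refine (norm_sub_le _ _).trans ?_
  rw [norm_mul, norm_mul, Complex.norm_real, Complex.norm_real, Real.norm_eq_abs,
    Real.norm_of_nonneg (by positivity : 0 ≤ (k + 1 : ℝ)⁻¹)]
  calc _ ≤ |ε| * (Real.exp 1 * Real.exp (-|ξ|)) +
        (k + 1 : ℝ)⁻¹ * ((4 * π) ^ k * M ^ (k + 1) * Real.exp (-|ξ|) * |t|) := by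
        gcongr
        · exact norm_gaussianEvolution_ofReal_le t ξ
        · exact norm_duhamel_ofReal_le (hw.convPow k).weightBounded t ξ
    _ = _ := by ring

lemma four_pi_pow_mul_pow_le_half (hk : 1 ≤ k) (hM₀ : 0 ≤ M) (hM : 4 * π * M ≤ 1 / 2) :
    (4 * π) ^ k * M ^ k ≤ 1 / 2 := by
  rw [← mul_pow]
  exact (pow_le_of_le_one (by positivity) (by linarith) (by lia)).trans hM

protected lemma Admissible.picard (hk : 1 ≤ k) (hM : 4 * π * M ≤ 1 / 2)
    (hε : |ε| * Real.exp 1 ≤ M / 2) (hw : Admissible M w) :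
    Admissible M fun t => picard ε k w t := by
  have hM₀ := hw.nonneg
  refine ((admissible_gaussianEvolution.const_mul ε).sub
    ((hw.convPow k).duhamel.const_mul (k + 1 : ℝ)⁻¹)).mono ?_
  have hinv : |(k + 1 : ℝ)⁻¹| ≤ 1 := by
    rw [abs_of_nonneg (by positivity)]
    exact inv_le_one_of_one_le₀ (by simp)
  have hpow : (4 * π) ^ k * M ^ (k + 1) ≤ 1 / 2 * M := by
    rw [pow_succ, ← mul_assoc]
    exact mul_le_mul_of_nonneg_right (four_pi_pow_mul_pow_le_half hk hM₀ hM) hM₀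
  have hduhamel := mul_le_of_le_one_left (by positivity : 0 ≤ (4 * π) ^ k * M ^ (k + 1)) hinv
  linarith

lemma weightBounded_picard_sub (hk : 1 ≤ k) (hM : 4 * π * M ≤ 1 / 2) (hw : Admissible M w)
    (hv : Admissible M v) {D : ℝ}
    (hD : ∀ t : unitInterval, WeightBounded D t fun z => w t z - v t z) (t : unitInterval) :
    WeightBounded (1 / 2 * D) t fun z => picard ε k w t z - picard ε k v t z := by
  have hsub : ∀ z, picard ε k w t z - picard ε k v t z = (-(k + 1 : ℝ)⁻¹ : ℝ) *
      duhamel (fun s z => convPow (w s) k z - convPow (v s) k z) t z := fun z => by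
    rw [duhamel_sub (hw.convPow k).continuous_uncurry (hv.convPow k).continuous_uncurry]
    simp only [picard, Complex.ofReal_neg]
    ring
  simp_rw [hsub]
  have hbound := (WeightBounded.duhamel (fun s => hw.convPow_sub hv (hD s) k) t).const_mul
    (-(k + 1 : ℝ)⁻¹ : ℝ)
  refine hbound.mono ?_
  rw [Complex.norm_real, norm_neg, Real.norm_of_nonneg (by positivity)]
  calc (k + 1 : ℝ)⁻¹ * ((k + 1) * (4 * π) ^ k * M ^ k * D) = (4 * π) ^ k * M ^ k * D := by
        field_simp
    _ ≤ 1 / 2 * D :=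
      mul_le_mul_of_nonneg_right (four_pi_pow_mul_pow_le_half hk hw.nonneg hM) (hD 0).nonneg

theorem exists_admissible_picard_eq (hk : 1 ≤ k) (hM₀ : 0 ≤ M) (hM : 4 * π * M ≤ 1 / 2)
    (hε : |ε| * Real.exp 1 ≤ M / 2) :
    ∃ w, Admissible M w ∧ ∀ (t : unitInterval) z, picard ε k w t z = w t z := by
  let Φ : (unitInterval × ℂ → ℂ) → unitInterval × ℂ → ℂ :=
    fun f p => picard ε k (Function.curry f) p.1 p.2
  obtain ⟨f, hf, hfix⟩ : ∃ f ∈ {f | Admissible M (Function.curry f)}, Φ f = f :=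
    exists_fixedPoint_of_weighted_contraction (ω := fun p : unitInterval × ℂ => weight p.1 p.2)
      (q := 1 / 2) (f₀ := 0) (by norm_num) (by norm_num) (fun f hf => hf.picard hk hM hε)
      (fun f hf g hg D hD p =>
        weightBounded_picard_sub hk hM hf hg (fun t z => hD (t, z)) p.1 p.2)
      (fun F hF f a ha h => Admissible.of_tendsto hF ha fun n t z => h n (t, z))
      (Admissible.zero hM₀)
      fun p => by
        rw [Pi.zero_apply, zero_sub, norm_neg]
        exact ((Admissible.zero hM₀).picard hk hM hε).weightBounded p.1 p.2
  exact ⟨Function.curry f, hf, fun t z => congrFun hfix (t, z)⟩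

end Picard

section FourierSynthesis

/-- The function of `x` with Fourier profile `g`, normalized so that `∂ₓ` corresponds to
multiplication of `g` by `i ξ` and the product of functions to the convolution of profiles. -/
noncomputable def fourierSynthesis (g : ℝ → ℂ) (x : ℝ) : ℂ :=
  ∫ ξ : ℝ, Complex.exp (I * x * ξ) * g ξ

lemma fourierSynthesis_eq_fourier (g : ℝ → ℂ) (x : ℝ) :
    fourierSynthesis g x = 𝓕 g (-(2 * π)⁻¹ * x) := by
  rw [Real.fourier_real_eq_integral_exp_smul, fourierSynthesis]
  congr with ξ
  have hphase : -2 * π * ξ * (-(2 * π)⁻¹ * x) = x * ξ := by field_simp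
  rw [hphase, smul_eq_mul]
  push_cast
  ring_nf

lemma norm_cexp_I_mul_ofReal_mul_ofReal (x ξ : ℝ) : ‖Complex.exp (I * x * ξ)‖ = 1 := by
  simp [Complex.norm_exp]

lemma integrable_cexp_mul {g : ℝ → ℂ} (hg : Integrable g) (x : ℝ) :
    Integrable fun ξ : ℝ => Complex.exp (I * x * ξ) * g ξ :=
  hg.bdd_mul (Continuous.aestronglyMeasurable (by fun_prop))
    (ae_of_all _ fun ξ => (norm_cexp_I_mul_ofReal_mul_ofReal x ξ).le)

lemma fourierSynthesis_sub {f g : ℝ → ℂ} (hf : Integrable f) (hg : Integrable g) (x : ℝ) :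
    fourierSynthesis (fun ξ => f ξ - g ξ) x = fourierSynthesis f x - fourierSynthesis g x := by
  simp_rw [fourierSynthesis, mul_sub]
  exact integral_sub (integrable_cexp_mul hf x) (integrable_cexp_mul hg x)

lemma fourierSynthesis_const_mul (c : ℂ) (g : ℝ → ℂ) (x : ℝ) :
    fourierSynthesis (fun ξ => c * g ξ) x = c * fourierSynthesis g x := by
  simp_rw [fourierSynthesis, mul_left_comm _ c]
  exact integral_const_mul c _

lemma conj_fourierSynthesis {g : ℝ → ℂ} (hg : ∀ ξ, g (-ξ) = conj (g ξ)) (x : ℝ) :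
    conj (fourierSynthesis g x) = fourierSynthesis g x := by
  unfold fourierSynthesis
  rw [← integral_conj, ← integral_neg_eq_self]
  congr with ξ
  rw [map_mul, hg, ← Complex.exp_conj, Complex.conj_conj]
  simp

lemma fourierSynthesis_lineConv {f g : ℂ → ℂ} (hf : Integrable fun ξ : ℝ => f ξ)
    (hg : Integrable fun ξ : ℝ => g ξ) (x : ℝ) :
    fourierSynthesis (fun ξ : ℝ => lineConv f g ξ) x =
      fourierSynthesis (fun ξ : ℝ => f ξ) x * fourierSynthesis (fun ξ : ℝ => g ξ) x := by
  have hconv : (fun ξ : ℝ => lineConv f g ξ) =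
      convolution (fun ξ : ℝ => f ξ) (fun ξ : ℝ => g ξ) (ContinuousLinearMap.mul ℂ ℂ) := by
    ext ξ
    simp [lineConv, convolution_def]
  simp_rw [fourierSynthesis_eq_fourier]
  rw [hconv, Real.fourier_mul_convolution_eq hf hg]

lemma hasDerivAt_fourierSynthesis {g : ℝ → ℂ} (hg : Integrable g)
    (hg' : Integrable fun ξ : ℝ => ξ * g ξ) (x : ℝ) :
    HasDerivAt (fourierSynthesis g) (fourierSynthesis (fun ξ => I * ξ * g ξ) x) x := by
  have hderiv := (Real.hasDerivAt_fourier hg (by simpa using! hg') (-(2 * π)⁻¹ * x)).scomp x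
    ((hasDerivAt_id x).const_mul (-(2 * π)⁻¹))
  rw [funext (fourierSynthesis_eq_fourier g)]
  refine hderiv.congr_deriv ?_
  rw [← fourierSynthesis_eq_fourier, Complex.real_smul, ← fourierSynthesis_const_mul]
  congr with ξ
  push_cast
  simp only [smul_eq_mul]
  field_simp

lemma hasDerivAt_fourierSynthesis_of_dominated {G G' : ℝ → ℝ → ℂ} {t₀ : ℝ} {s : Set ℝ}
    (hs : s ∈ 𝓝 t₀) (hG : ∀ t, Continuous (G t)) (hG₀ : Integrable (G t₀)) {b : ℝ → ℝ}
    (hb_int : Integrable b) (hb : ∀ t ∈ s, ∀ ξ, ‖G' t ξ‖ ≤ b ξ)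
    (hderiv : ∀ t ∈ s, ∀ ξ, HasDerivAt (G · ξ) (G' t ξ) t) (x : ℝ) :
    HasDerivAt (fun t => fourierSynthesis (G t) x) (fourierSynthesis (G' t₀) x) t₀ := by
  have hmeas : ∀ t, AEStronglyMeasurable (fun ξ : ℝ => Complex.exp (I * x * ξ) * G t ξ) :=
    fun t => by have := hG t; exact Continuous.aestronglyMeasurable (by fun_prop)
  have hprod : ∀ t ∈ s, ∀ ξ : ℝ, HasDerivAt (fun t => Complex.exp (I * x * ξ) * G t ξ)
      (Complex.exp (I * x * ξ) * G' t ξ) t := fun t ht ξ => (hderiv t ht ξ).const_mul _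
  have ht₀ := mem_of_mem_nhds hs
  refine (hasDerivAt_integral_of_dominated_loc_of_deriv_le hs (Eventually.of_forall hmeas)
    (integrable_cexp_mul hG₀ x) ?_ (ae_of_all _ fun ξ t ht => ?_) hb_int
    (ae_of_all _ fun ξ t ht => hprod t ht ξ)).2
  · simpa only [(hprod t₀ ht₀ _).deriv] using aestronglyMeasurable_deriv_of_forall hmeas
      (ae_of_all _ fun ξ => (hprod t₀ ht₀ ξ).differentiableAt)
  · rw [norm_mul, norm_cexp_I_mul_ofReal_mul_ofReal, one_mul]
    exact hb t ht ξ

/-- All polynomial moments of `g` are finite, which makes `fourierSynthesis g` smooth. -/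
def HasMoments (g : ℝ → ℂ) : Prop := ∀ n : ℕ, Integrable fun ξ : ℝ => ξ ^ n * g ξ

lemma integrable_abs_pow_mul_exp_neg_abs (n : ℕ) :
    Integrable fun ξ : ℝ => |ξ| ^ n * Real.exp (-|ξ|) := by
  refine (integrable_inv_one_add_sq.const_mul (n.factorial + (n + 2).factorial : ℝ)).mono'
    (Continuous.aestronglyMeasurable (by fun_prop)) (ae_of_all _ fun ξ => ?_)
  have hpow : ∀ m : ℕ, |ξ| ^ m ≤ m.factorial * Real.exp |ξ| := fun m => by
    rw [← div_le_iff₀' (by positivity)]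
    exact Real.pow_div_factorial_le_exp _ (abs_nonneg ξ) m
  rw [Real.norm_of_nonneg (by positivity), Real.exp_neg, ← div_eq_mul_inv, ← div_eq_mul_inv,
    div_le_div_iff₀ (by positivity) (by positivity), ← sq_abs ξ]
  linarith [hpow n, hpow (n + 2), pow_add |ξ| n 2]

lemma hasMoments_of_norm_le {g : ℝ → ℂ} (hg : Continuous g) {K : ℝ}
    (hK : ∀ ξ, ‖g ξ‖ ≤ K * Real.exp (-|ξ|)) : HasMoments g := fun n =>
  ((integrable_abs_pow_mul_exp_neg_abs n).const_mul K).mono'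
    (Continuous.aestronglyMeasurable (by fun_prop)) (ae_of_all _ fun ξ => by
      rw [norm_mul, norm_pow, Complex.norm_real, Real.norm_eq_abs, mul_left_comm]
      exact mul_le_mul_of_nonneg_left (hK ξ) (by positivity))

namespace HasMoments

variable {g : ℝ → ℂ}

protected lemma integrable (hg : HasMoments g) : Integrable g := by simpa using hg 0

lemma I_mul (hg : HasMoments g) : HasMoments fun ξ => I * ξ * g ξ := fun n => by
  refine ((hg (n + 1)).const_mul I).congr (ae_of_all _ fun ξ => ?_)
  ring

protected lemma hasDerivAt_fourierSynthesis (hg : HasMoments g) (x : ℝ) :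
    HasDerivAt (fourierSynthesis g) (fourierSynthesis (fun ξ => I * ξ * g ξ) x) x :=
  hasDerivAt_fourierSynthesis hg.integrable (by simpa using hg 1) x

lemma deriv_re_fourierSynthesis (hg : HasMoments g) :
    deriv (fun x => (fourierSynthesis g x).re) =
      fun x => (fourierSynthesis (fun ξ => I * ξ * g ξ) x).re :=
  funext fun x =>
    (Complex.reCLM.hasFDerivAt.comp_hasDerivAt x (hg.hasDerivAt_fourierSynthesis x)).deriv

lemma contDiff_re_fourierSynthesis (hg : HasMoments g) (n : ℕ) :
    ContDiff ℝ n fun x => (fourierSynthesis g x).re := by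
  have hfourier : ContDiff ℝ n (𝓕 g) := Real.contDiff_fourier (N := n) fun m _ => by
    simpa using (hg m).norm
  simp_rw [fourierSynthesis_eq_fourier]
  exact Complex.reCLM.contDiff.comp (hfourier.comp (by fun_prop))

end HasMoments

end FourierSynthesis

section Solution

namespace Admissible

variable {A : ℝ} {f : unitInterval → ℂ → ℂ}

lemma hasMoments (hf : Admissible A f) (t : unitInterval) : HasMoments fun ξ => f t ξ :=
  hasMoments_of_norm_le ((hf.continuous t).comp Complex.continuous_ofReal)
    ((hf.weightBounded t).norm_ofReal_le t.2.2)

lemma ofReal_re_fourierSynthesis (hf : Admissible A f) (t : unitInterval) (x : ℝ) :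
    ((fourierSynthesis (fun ξ => f t ξ) x).re : ℂ) = fourierSynthesis (fun ξ => f t ξ) x :=
  Complex.conj_eq_iff_re.1 (conj_fourierSynthesis (fun ξ => by
    rw [Complex.ofReal_neg, hf.apply_neg_ofReal]) x)

lemma fourierSynthesis_convPow (hf : Admissible A f) (n : ℕ) (t : unitInterval) (x : ℝ) :
    fourierSynthesis (fun ξ => convPow (f t) n ξ) x =
      fourierSynthesis (fun ξ => f t ξ) x ^ (n + 1) := by
  induction n with
  | zero => simp [convPow]
  | succ n ih =>
    rw [pow_succ', ← ih]
    exact fourierSynthesis_lineConv (hf.hasMoments t).integrable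
      ((hf.convPow n).hasMoments t).integrable x

lemma fourierSynthesis_I_mul_convPow (hf : Admissible A f) (n : ℕ) (t : unitInterval) (x : ℝ) :
    fourierSynthesis (fun ξ => I * ξ * convPow (f t) n ξ) x =
      (n + 1) * (fourierSynthesis (fun ξ => f t ξ) x ^ n *
        fourierSynthesis (fun ξ => I * ξ * f t ξ) x) := by
  have hpow := ((hf.hasMoments t).hasDerivAt_fourierSynthesis x).fun_pow (n + 1)
  have hconv := ((hf.convPow n).hasMoments t).hasDerivAt_fourierSynthesis x
  simp_rw [← hf.fourierSynthesis_convPow n t] at hpow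
  rw [hconv.unique hpow]
  push_cast
  exact mul_assoc _ _ _

lemma norm_cexp_mul_le (hf : Admissible A f) (t : unitInterval) (x ξ : ℝ) {y : ℝ} (hy : 0 ≤ y) :
    ‖Complex.exp (I * x * (ξ + y * I)) * f t (ξ + y * I)‖ ≤
      A * (heightGrowth y * Real.exp (-(y * x))) * (1 + ξ ^ 2)⁻¹ := by
  have hexp : ‖Complex.exp (I * x * (ξ + y * I))‖ = Real.exp (-(y * x)) := by
    rw [Complex.norm_exp]
    simp [mul_comm]
  have hweight : weight t (ξ + y * I) ≤ heightGrowth y * (1 + ξ ^ 2)⁻¹ := by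
    simpa [hy] using weight_le_inv_one_add_sq t.2.2 (ξ + y * I)
  rw [norm_mul, hexp]
  calc Real.exp (-(y * x)) * ‖f t (ξ + y * I)‖
      ≤ Real.exp (-(y * x)) * (A * (heightGrowth y * (1 + ξ ^ 2)⁻¹)) := by
        gcongr
        exact (hf.weightBounded t _).trans (mul_le_mul_of_nonneg_left hweight hf.nonneg)
    _ = _ := by ring

lemma norm_fourierSynthesis_le (hf : Admissible A f) (t : unitInterval) (x : ℝ) {H : ℝ}
    (hH : 0 ≤ H) : ‖fourierSynthesis (fun ξ => f t ξ) x‖ ≤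
      π * A * (heightGrowth H * Real.exp (-(H * x))) := by
  have hA := hf.nonneg
  have hstrip : ∀ ξ : ℝ, ∀ y ∈ Icc 0 H,
      ‖Complex.exp (I * x * (ξ + y * I)) * f t (ξ + y * I)‖ ≤
        A * (heightGrowth H * Real.exp (H * |x|)) * (1 + ξ ^ 2)⁻¹ := fun ξ y hy => by
    refine (hf.norm_cexp_mul_le t x ξ hy.1).trans ?_
    have := heightGrowth_le_heightGrowth hy.1 hy.2
    have := (heightGrowth_pos H).le
    gcongr
    calc -(y * x) ≤ y * |x| := by nlinarith [neg_le_abs x, hy.1]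
      _ ≤ H * |x| := by gcongr; exact hy.2
  have hzero : Tendsto (fun ξ : ℝ => A * (heightGrowth H * Real.exp (H * |x|)) * (1 + ξ ^ 2)⁻¹)
      (cocompact ℝ) (𝓝 0) := by
    have hsq : Tendsto (fun ξ : ℝ => 1 + ξ ^ 2) (cocompact ℝ) atTop := by
      simpa using tendsto_atTop_add_const_left _ 1
        ((tendsto_pow_atTop two_ne_zero).comp (tendsto_norm_cocompact_atTop (E := ℝ)))
    simpa using hsq.inv_tendsto_atTop.const_mul (A * (heightGrowth H * Real.exp (H * |x|)))
  have hshift := integral_add_mul_I_eq (f := fun z => Complex.exp (I * x * z) * f t z) hH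
    (by have := hf.continuous t; fun_prop) (DifferentiableOn.mul (by fun_prop)
      (hf.differentiableOn t)) (integrable_inv_one_add_sq.const_mul _) hzero hstrip
  rw [fourierSynthesis, ← hshift]
  refine (norm_integral_le_of_norm_le (integrable_inv_one_add_sq.const_mul _)
    (ae_of_all _ fun ξ => hf.norm_cexp_mul_le t x ξ hH)).trans_eq ?_
  rw [integral_const_mul, integral_univ_inv_one_add_sq]
  ring

end Admissible

lemma heightGrowth_half_mul_exp_le {y : ℝ} (hy : 0 ≤ y) :
    heightGrowth (y / 2) * Real.exp (-(y / 2 * y ^ 2)) ≤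
      Real.exp 2 * Real.exp (-(1 / 8) * y ^ 3) := by
  rw [heightGrowth, ← Real.exp_add, ← Real.exp_add, Real.exp_le_exp]
  nlinarith [mul_nonneg hy (sq_nonneg (y - 2)), sq_nonneg (y - 2)]

lemma Admissible.norm_fourierSynthesis_le_exp_rpow {A : ℝ} {f : unitInterval → ℂ → ℂ}
    (hf : Admissible A f) (t : unitInterval) (x : ℝ) :
    ‖fourierSynthesis (fun ξ => f t ξ) x‖ ≤
      π * A * Real.exp 2 * Real.exp (-(1 / 8) * max x 0 ^ (3 / 2 : ℝ)) := by
  have hA := hf.nonneg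
  set y := √(max x 0)
  have hy : 0 ≤ y := Real.sqrt_nonneg _
  have hsq : y ^ 2 = max x 0 := Real.sq_sqrt (le_max_right x 0)
  have hrpow : max x 0 ^ (3 / 2 : ℝ) = y ^ 3 := by
    rw [← hsq, ← Real.rpow_natCast_mul hy, ← Real.rpow_natCast]
    norm_num
  have hyx : y / 2 * x = y / 2 * y ^ 2 := by
    rcases le_total x 0 with hx | hx
    · simp [y, hx]
    · rw [hsq, max_eq_left hx]
  rw [hrpow, mul_assoc _ (Real.exp 2)]
  refine (hf.norm_fourierSynthesis_le t x (by positivity : 0 ≤ y / 2)).trans ?_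
  rw [hyx]
  exact mul_le_mul_of_nonneg_left (heightGrowth_half_mul_exp_le hy) (by positivity)

variable {ε M : ℝ} {k : ℕ} {w : unitInterval → ℂ → ℂ}

lemma hasMoments_picard (hw : Admissible M w) (t : ℝ) : HasMoments fun ξ => picard ε k w t ξ :=
  hasMoments_of_norm_le ((continuous_picard hw t).comp Complex.continuous_ofReal)
    (norm_picard_ofReal_le hw t)

lemma norm_deriv_picard_ofReal_le (hw : Admissible M w) {s T : ℝ} (hs : |s| ≤ T) (ξ : ℝ) :
    ‖deriv (fun t => picard ε k w t ξ) s‖ ≤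
      (|ε| * Real.exp 1 + (k + 1 : ℝ)⁻¹ * ((4 * π) ^ k * M ^ (k + 1)) * T) *
          (|ξ| ^ 3 * Real.exp (-|ξ|)) +
        (k + 1 : ℝ)⁻¹ * ((4 * π) ^ k * M ^ (k + 1)) * (|ξ| ^ 0 * Real.exp (-|ξ|)) := by
  set τ := projIcc (0 : ℝ) 1 zero_le_one s with hτ
  set B := (4 * π) ^ k * M ^ (k + 1)
  have hB : 0 ≤ B := (hw.convPow k).nonneg
  have hpicard : ‖picard ε k w s ξ‖ ≤
      (|ε| * Real.exp 1 + (k + 1 : ℝ)⁻¹ * B * T) * Real.exp (-|ξ|) :=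
    (norm_picard_ofReal_le hw s ξ).trans (by gcongr)
  have hforcing : |ξ| * ‖convPow (w τ) k ξ‖ ≤ B * Real.exp (-|ξ|) :=
    ((hw.convPow k).weightBounded τ).abs_mul_norm_ofReal_le τ.2.2 ξ
  rw [(hasDerivAt_picard hw s ξ).deriv, upperClamp_ofReal, ← hτ]
  refine (norm_sub_le _ _).trans ?_
  simp only [norm_mul, norm_pow, Complex.norm_I, Complex.norm_real, Real.norm_eq_abs, one_mul,
    pow_zero, abs_of_nonneg (by positivity : 0 ≤ (k + 1 : ℝ)⁻¹)]
  calc |ξ| ^ 3 * ‖picard ε k w s ξ‖ + (k + 1 : ℝ)⁻¹ * (|ξ| * ‖convPow (w τ) k ξ‖)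
      ≤ |ξ| ^ 3 * ((|ε| * Real.exp 1 + (k + 1 : ℝ)⁻¹ * B * T) * Real.exp (-|ξ|)) +
          (k + 1 : ℝ)⁻¹ * (B * Real.exp (-|ξ|)) := by gcongr
    _ = _ := by ring

lemma hasDerivAt_fourierSynthesis_picard (hw : Admissible M w) (t : unitInterval) (x : ℝ) :
    HasDerivAt (fun t : ℝ => fourierSynthesis (fun ξ => picard ε k w t ξ) x)
      (-fourierSynthesis (fun ξ => I * ξ * (I * ξ * (I * ξ * picard ε k w t ξ))) x -
        (k + 1 : ℂ)⁻¹ * fourierSynthesis (fun ξ => I * ξ * convPow (w t) k ξ) x) t := by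
  have hball : ∀ s ∈ ball (t : ℝ) 1, |s| ≤ |(t : ℝ)| + 1 := fun s hs => by
    linarith [abs_sub_abs_le_abs_sub s t, mem_ball.1 hs, Real.dist_eq s t]
  have hderiv := hasDerivAt_fourierSynthesis_of_dominated (ball_mem_nhds (t : ℝ) one_pos)
    (fun s => (continuous_picard (ε := ε) (k := k) hw s).comp Complex.continuous_ofReal)
    (hasMoments_picard hw t).integrable
    (((integrable_abs_pow_mul_exp_neg_abs 3).const_mul _).add
      ((integrable_abs_pow_mul_exp_neg_abs 0).const_mul _))
    (fun s hs ξ => norm_deriv_picard_ofReal_le hw (hball s hs) ξ)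
    (fun s _ ξ => (hasDerivAt_picard hw s ξ).differentiableAt.hasDerivAt) x
  simp_rw [(hasDerivAt_picard hw _ _).deriv] at hderiv
  refine hderiv.congr_deriv ?_
  rw [← neg_one_mul, ← fourierSynthesis_const_mul, ← fourierSynthesis_const_mul,
    ← fourierSynthesis_sub ((hasMoments_picard hw t).I_mul.I_mul.I_mul.integrable.const_mul _)
      (((hw.convPow k).hasMoments t).I_mul.integrable.const_mul _)]
  refine congrArg (fourierSynthesis · x) (funext fun ξ => ?_)
  simp only [upperClamp_ofReal, projIcc_val]
  push_cast
  linear_combination (I * ξ ^ 3 * picard ε k w t ξ) * Complex.I_sq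

lemma integral_cexp_neg_two_mul_sq :
    ∫ ξ : ℝ, Complex.exp (-2 * ξ ^ 2) = (√(π / 2) : ℝ) := by
  rw [← integral_gaussian 2, ← integral_complex_ofReal]
  push_cast
  rfl

/-- The candidate solution: the inverse Fourier transform of the Duhamel map applied to `w`. Unlike
that of `w` itself it is defined for all real times, so that it can be differentiated in time at the
end points of `[0, 1]`. -/
noncomputable def solution (ε : ℝ) (k : ℕ) (w : unitInterval → ℂ → ℂ) (t x : ℝ) : ℝ :=
  (fourierSynthesis (fun ξ => picard ε k w t ξ) x).re

lemma solution_zero_zero : solution ε k w 0 0 = ε * √(π / 2) := by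
  have hprofile : ∀ ξ : ℝ, picard ε k w 0 ξ = ε * Complex.exp (-2 * ξ ^ 2) := fun ξ => by
    simp [picard, gaussianEvolution, duhamel]
  simp_rw [solution, fourierSynthesis, hprofile, Complex.ofReal_zero, mul_zero, zero_mul,
    Complex.exp_zero, one_mul]
  rw [integral_const_mul, integral_cexp_neg_two_mul_sq, ← Complex.ofReal_mul, Complex.ofReal_re]

lemma contDiff_solution (hw : Admissible M w) (t : ℝ) (n : ℕ) :
    ContDiff ℝ n (solution ε k w t) :=
  (hasMoments_picard hw t).contDiff_re_fourierSynthesis n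

lemma hasDerivAt_solution (hw : Admissible M w)
    (hfix : ∀ (t : unitInterval) z, picard ε k w t z = w t z) (t : unitInterval) (x : ℝ) :
    HasDerivAt (fun t => solution ε k w t x)
      (-deriv (deriv (deriv (solution ε k w t))) x -
        solution ε k w t x ^ k * deriv (solution ε k w t) x) t := by
  have hg := hasMoments_picard (ε := ε) (k := k) hw t
  refine (Complex.reCLM.hasFDerivAt.comp_hasDerivAt (t : ℝ)
    (hasDerivAt_fourierSynthesis_picard hw t x)).congr_deriv ?_
  unfold solution
  rw [hg.deriv_re_fourierSynthesis, hg.I_mul.deriv_re_fourierSynthesis,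
    hg.I_mul.I_mul.deriv_re_fourierSynthesis, hw.fourierSynthesis_I_mul_convPow,
    inv_mul_cancel_left₀ (by norm_cast), ← hw.ofReal_re_fourierSynthesis, ← Complex.ofReal_pow]
  simp only [hfix, map_sub, map_neg, Complex.reCLM_apply, Complex.re_ofReal_mul]

lemma abs_solution_le (hw : Admissible M w)
    (hfix : ∀ (t : unitInterval) z, picard ε k w t z = w t z) (t : unitInterval) (x : ℝ) :
    |solution ε k w t x| ≤
      π * M * Real.exp 2 * Real.exp (-(1 / 8) * max x 0 ^ (3 / 2 : ℝ)) := by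
  simp only [solution, hfix]
  exact (Complex.abs_re_le_norm _).trans (hw.norm_fourierSynthesis_le_exp_rpow t x)

end Solution

end GKdV

open GKdV

/-- **Sharpness of the `x₊^{3/2}` decay rate for the k-generalized KdV equation
(Escauriaza–Kenig–Ponce–Vega).** For each `k ≥ 1` there is a nontrivial solution `u`
of `∂ₜu + ∂ₓ³u + uᵏ∂ₓu = 0` on `ℝ × [0,1]` and a constant `C > 0` with
`|u(x,0)| + |u(x,1)| ≤ C exp(−C x₊^{3/2})` for all `x`. -/
theorem gKdV_sharpness (k : ℕ) (hk : 1 ≤ k) :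
    ∃ u : ℝ → ℝ → ℝ, ∃ C > (0:ℝ),
      -- classical regularity
      (∀ t ∈ Icc (0:ℝ) 1, ContDiff ℝ 3 (u t)) ∧
      (∀ x : ℝ, ∀ t ∈ Icc (0:ℝ) 1, DifferentiableAt ℝ (fun s => u s x) t) ∧
      -- u solves the k-generalized KdV equation on ℝ × [0,1]
      (∀ t ∈ Icc (0:ℝ) 1, ∀ x : ℝ,
        deriv (fun s => u s x) t + deriv (deriv (deriv (u t))) x
          + u t x ^ k * deriv (u t) x = 0) ∧
      -- u is not identically zero
      (∃ t ∈ Icc (0:ℝ) 1, ∃ x : ℝ, u t x ≠ 0) ∧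
      -- decay at the two endpoint times
      (∀ x : ℝ, |u 0 x| + |u 1 x| ≤ C * Real.exp (-C * max x 0 ^ ((3:ℝ)/2))) := by
  set M : ℝ := (16 * Real.pi * Real.exp 2)⁻¹ with hM_def
  set ε : ℝ := M / (2 * Real.exp 1) with hε_def
  have hM_pos : 0 < M := by positivity
  have hM : 4 * Real.pi * M ≤ 1 / 2 := by
    rw [hM_def]
    field_simp
    linarith [Real.one_le_exp zero_le_two]
  have hε : |ε| * Real.exp 1 ≤ M / 2 := by
    rw [abs_of_pos (by positivity), hε_def]
    exact le_of_eq (by field_simp)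
  obtain ⟨w, hw, hfix⟩ := exists_admissible_picard_eq hk hM_pos.le hM hε
  have hdecay : ∀ t : unitInterval, ∀ x, |solution ε k w t x| ≤
      1 / 16 * Real.exp (-(1 / 8) * max x 0 ^ (3 / 2 : ℝ)) := fun t x =>
    (abs_solution_le hw hfix t x).trans_eq (by rw [hM_def]; field_simp)
  refine ⟨solution ε k w, 1 / 8, by norm_num, fun t _ => contDiff_solution hw t 3,
    fun x t ht => (hasDerivAt_solution hw hfix ⟨t, ht⟩ x).differentiableAt, fun t ht x => ?_,
    ⟨0, by simp, 0, ?_⟩, fun x => ?_⟩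
  · rw [(hasDerivAt_solution hw hfix ⟨t, ht⟩ x).deriv]
    ring
  · rw [solution_zero_zero]
    positivity
  · exact (add_le_add (hdecay 0 x) (hdecay 1 x)).trans_eq (by ring)
end
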